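/- Strict separation: let w be a minimizer of J in the open unit ball B₁ with w(x) ≥ U₀(x) for all x ∈ ℝⁿ \ B₁. Then w ≥ U₀ on B₁; moreover, either w = U₀ on B₁ ∩ closure({U₀ > 0}), or w(x) > U₀(x) for every x ∈ B₁ ∩ closure({U₀ > 0}). -/

import Mathlib

open MeasureTheory Metric Set Filter ENNReal NNReal

/-- The Alt–Caffarelli energy `J_D(u) = ∫_D (‖∇u‖² + 𝟙_{u>0})`, valued in `[0,∞]`. -/
noncomputable def JE {n : ℕ} (D : Set (EuclideanSpace ℝ (Fin n)))
    (u : EuclideanSpace ℝ (Fin n) → ℝ) : ℝ≥0∞ :=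
  ∫⁻ x in D, ((‖gradient u x‖₊ : ℝ≥0∞) ^ 2 + if 0 < u x then 1 else 0)

/-- `u` is a (nonnegative, locally Lipschitz) minimizer of `J` in the open set `Ω`:
for every nonnegative locally Lipschitz competitor `v` with `{v ≠ u}` a bounded subset
of `Ω`, one has `J_{Ω ∩ B}(u) ≤ J_{Ω ∩ B}(v)` for every open ball `B ⊇ {v ≠ u}`. -/
def IsMinimizer {n : ℕ} (Ω : Set (EuclideanSpace ℝ (Fin n)))
    (u : EuclideanSpace ℝ (Fin n) → ℝ) : Prop :=
  (∀ x, 0 ≤ u x) ∧ LocallyLipschitz u ∧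
  ∀ v : EuclideanSpace ℝ (Fin n) → ℝ, (∀ x, 0 ≤ v x) → LocallyLipschitz v →
    Bornology.IsBounded {x | v x ≠ u x} → {x | v x ≠ u x} ⊆ Ω →
    ∀ (c : EuclideanSpace ℝ (Fin n)) (r : ℝ), {x | v x ≠ u x} ⊆ Metric.ball c r →
      JE (Ω ∩ Metric.ball c r) u ≤ JE (Ω ∩ Metric.ball c r) v

section Part1
open scoped Topology RealInnerProductSpace

set_option linter.unusedSectionVars false

namespace AC

variable {V : Type*} [NormedAddCommGroup V] [InnerProductSpace ℝ V] [FiniteDimensional ℝ V]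
  [MeasurableSpace V] [BorelSpace V]

/-! ### Lipschitz functions -/

def Lip {X : Type*} [PseudoMetricSpace X] (f : X → ℝ) : Prop := ∃ K : ℝ≥0, LipschitzWith K f

theorem lip_of_bound {X : Type*} [PseudoMetricSpace X] {f : X → ℝ} (K : ℝ)
    (h : ∀ x y, |f x - f y| ≤ K * dist x y) : Lip f := by
  refine ⟨K.toNNReal, LipschitzWith.of_dist_le_mul fun x y => ?_⟩
  rw [Real.dist_eq]
  refine (h x y).trans (mul_le_mul_of_nonneg_right ?_ dist_nonneg)
  exact Real.le_coe_toNNReal K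

theorem lw_abs {X : Type*} [PseudoMetricSpace X] {f : X → ℝ} {K : ℝ≥0}
    (h : LipschitzWith K f) (x y : X) : |f x - f y| ≤ K * dist x y := by
  rw [← Real.dist_eq]; exact h.dist_le_mul x y

section lip
variable {X : Type*} [PseudoMetricSpace X] {f g : X → ℝ}

theorem Lip.cont (hf : Lip f) : Continuous f := by
  obtain ⟨K, h⟩ := hf; exact h.continuous

theorem lip_const (c : ℝ) : Lip (fun _ : X => c) := ⟨0, LipschitzWith.const c⟩

theorem Lip.add (hf : Lip f) (hg : Lip g) : Lip (fun x => f x + g x) := by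
  obtain ⟨K, h⟩ := hf; obtain ⟨K', h'⟩ := hg; exact ⟨_, h.add h'⟩

theorem Lip.sub (hf : Lip f) (hg : Lip g) : Lip (fun x => f x - g x) := by
  obtain ⟨K, h⟩ := hf; obtain ⟨K', h'⟩ := hg; exact ⟨_, h.sub h'⟩

theorem Lip.neg (hf : Lip f) : Lip (fun x => - f x) := by
  obtain ⟨K, h⟩ := hf; exact ⟨_, h.neg⟩

theorem Lip.maxL (hf : Lip f) (hg : Lip g) : Lip (fun x => max (f x) (g x)) := by
  obtain ⟨K, h⟩ := hf; obtain ⟨K', h'⟩ := hg; exact ⟨_, h.max h'⟩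

theorem Lip.minL (hf : Lip f) (hg : Lip g) : Lip (fun x => min (f x) (g x)) := by
  obtain ⟨K, h⟩ := hf; obtain ⟨K', h'⟩ := hg; exact ⟨_, h.min h'⟩

theorem Lip.const_mul (c : ℝ) (hf : Lip f) : Lip (fun x => c * f x) := by
  obtain ⟨K, h⟩ := hf
  refine lip_of_bound (|c| * K) fun x y => ?_
  rw [← mul_sub, abs_mul, mul_assoc]
  exact mul_le_mul_of_nonneg_left (lw_abs h x y) (abs_nonneg c)

/-- Product of two Lipschitz functions, the first one bounded, and the second
bounded where the first one does not vanish. -/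
theorem Lip.mul_of_bdd (hf : Lip f) (hg : Lip g) (M N : ℝ) (hM : ∀ x, |f x| ≤ M)
    (hN : ∀ x, f x ≠ 0 → |g x| ≤ N) : Lip (fun x => f x * g x) := by
  obtain ⟨K, h⟩ := hf
  obtain ⟨K', h'⟩ := hg
  have key : ∀ x y, f y ≠ 0 → |f x * g x - f y * g y| ≤ (M * K' + N * K) * dist x y := by
    intro x y hy
    have e : f x * g x - f y * g y = f x * (g x - g y) + g y * (f x - f y) := by ring
    have h1 : |f x * (g x - g y)| ≤ M * (K' * dist x y) := by
      rw [abs_mul]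
      exact mul_le_mul (hM x) (lw_abs h' x y) (abs_nonneg _)
        ((abs_nonneg _).trans (hM x))
    have h2 : |g y * (f x - f y)| ≤ N * (K * dist x y) := by
      rw [abs_mul]
      exact mul_le_mul (hN y hy) (lw_abs h x y) (abs_nonneg _)
        ((abs_nonneg _).trans (hN y hy))
    rw [e]
    refine (abs_add_le _ _).trans ?_
    nlinarith
  refine lip_of_bound (max (M * K' + N * K) 0) fun x y => ?_
  by_cases hy : f y = 0
  · by_cases hx : f x = 0
    · simp only [hx, hy]; simp; positivity
    · rw [abs_sub_comm, dist_comm]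
      exact (key y x hx).trans (mul_le_mul_of_nonneg_right (le_max_left _ _) dist_nonneg)
  · exact (key x y hy).trans (mul_le_mul_of_nonneg_right (le_max_left _ _) dist_nonneg)

end lip

/-! ### Gradients -/

theorem grad_norm_eq (f : V → ℝ) (x : V) : ‖gradient f x‖ = ‖fderiv ℝ f x‖ := by
  simp [gradient]

theorem grad_le {f : V → ℝ} {K : ℝ≥0} (hf : LipschitzWith K f) (x : V) : ‖gradient f x‖ ≤ K := by
  rw [grad_norm_eq]; exact norm_fderiv_le_of_lipschitz ℝ hf

theorem meas_grad (f : V → ℝ) : Measurable (gradient f) := by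
  have : Measurable (fderiv ℝ f) := measurable_fderiv ℝ f
  exact ((InnerProductSpace.toDual ℝ V).symm.continuous.measurable).comp this

theorem Lip.ae_diff {f : V → ℝ} (hf : Lip f) : ∀ᵐ x : V, DifferentiableAt ℝ f x := by
  obtain ⟨K, h⟩ := hf; exact h.ae_differentiableAt

theorem grad_eq_of_fderiv {f g : V → ℝ} {x : V} (h : fderiv ℝ f x = fderiv ℝ g x) :
    gradient f x = gradient g x := by simp [gradient, h]

theorem grad_zero_of_fderiv {f : V → ℝ} {x : V} (h : fderiv ℝ f x = 0) :
    gradient f x = 0 := by simp [gradient, h]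

theorem grad_add {f g : V → ℝ} {x : V} (hf : DifferentiableAt ℝ f x)
    (hg : DifferentiableAt ℝ g x) :
    gradient (fun y => f y + g y) x = gradient f x + gradient g x := by
  simp only [gradient]
  rw [show (fun y => f y + g y) = f + g from rfl, fderiv_add hf hg, map_add]

theorem grad_sub {f g : V → ℝ} {x : V} (hf : DifferentiableAt ℝ f x)
    (hg : DifferentiableAt ℝ g x) :
    gradient (fun y => f y - g y) x = gradient f x - gradient g x := by
  simp only [gradient]
  rw [show (fun y => f y - g y) = f - g from rfl, fderiv_sub hf hg, map_sub]

theorem grad_const_mul {f : V → ℝ} {x : V} (c : ℝ) (hf : DifferentiableAt ℝ f x) :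
    gradient (fun y => c * f y) x = c • gradient f x := by
  simp only [gradient]
  rw [fderiv_const_mul hf]; simp

theorem grad_neg (f : V → ℝ) (x : V) :
    gradient (fun y => - f y) x = - gradient f x := by
  simp only [gradient]
  rw [fderiv_fun_neg]; simp

theorem grad_mul {f g : V → ℝ} {x : V} (hf : DifferentiableAt ℝ f x)
    (hg : DifferentiableAt ℝ g x) :
    gradient (fun y => f y * g y) x = f x • gradient g x + g x • gradient f x := by
  simp only [gradient]
  rw [fderiv_fun_mul hf hg, map_add]; simp

theorem grad_const (c : ℝ) (x : V) : gradient (fun _ : V => c) x = 0 := by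
  simp [gradient]

theorem grad_eq_of_le {a b : V → ℝ} {x : V} (h : ∀ y, a y ≤ b y) (hx : a x = b x)
    (ha : DifferentiableAt ℝ a x) (hb : DifferentiableAt ℝ b x) :
    gradient a x = gradient b x := by
  have hm : IsLocalMin (fun y => b y - a y) x := by
    refine Filter.Eventually.of_forall fun y => ?_
    simp only [hx, sub_self]; linarith [h y]
  have := grad_zero_of_fderiv hm.fderiv_eq_zero
  rw [grad_sub hb ha] at this
  exact (sub_eq_zero.1 this).symm

theorem grad_zero_of_min {a : V → ℝ} {x : V} (h : ∀ y, a x ≤ a y) : gradient a x = 0 := by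
  have hm : IsLocalMin a x := Filter.Eventually.of_forall h
  exact grad_zero_of_fderiv hm.fderiv_eq_zero

theorem grad_zero_of_max {a : V → ℝ} {x : V} (h : ∀ y, a y ≤ a x) : gradient a x = 0 := by
  have hm : IsLocalMax a x := Filter.Eventually.of_forall h
  exact grad_zero_of_fderiv hm.fderiv_eq_zero

theorem grad_eq_of_eventuallyEq {a b : V → ℝ} {x : V} (h : a =ᶠ[𝓝 x] b) :
    gradient a x = gradient b x := h.gradient_eq

theorem grad_max_min {a b : V → ℝ} {x : V} (ca : Continuous a) (cb : Continuous b)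
    (ha : DifferentiableAt ℝ a x) (hb : DifferentiableAt ℝ b x)
    (hM : DifferentiableAt ℝ (fun y => max (a y) (b y)) x)
    (hm : DifferentiableAt ℝ (fun y => min (a y) (b y)) x) :
    (a x ≤ b x ∧ gradient (fun y => max (a y) (b y)) x = gradient b x ∧
      gradient (fun y => min (a y) (b y)) x = gradient a x) ∨
    (b x ≤ a x ∧ gradient (fun y => max (a y) (b y)) x = gradient a x ∧
      gradient (fun y => min (a y) (b y)) x = gradient b x) := by
  rcases lt_trichotomy (a x) (b x) with h | h | h
  · left
    have hev : ∀ᶠ y in 𝓝 x, a y < b y := (isOpen_lt ca cb).mem_nhds h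
    refine ⟨h.le, grad_eq_of_eventuallyEq ?_, grad_eq_of_eventuallyEq ?_⟩
    · filter_upwards [hev] with y hy using max_eq_right hy.le
    · filter_upwards [hev] with y hy using min_eq_left hy.le
  · left
    refine ⟨h.le, ?_, ?_⟩
    · exact (grad_eq_of_le (fun y => le_max_right _ _) (by simp [h]) hb hM).symm
    · exact (grad_eq_of_le (fun y => min_le_left _ _) (by simp [h]) hm ha)
  · right
    have hev : ∀ᶠ y in 𝓝 x, b y < a y := (isOpen_lt cb ca).mem_nhds h
    refine ⟨h.le, grad_eq_of_eventuallyEq ?_, grad_eq_of_eventuallyEq ?_⟩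
    · filter_upwards [hev] with y hy using max_eq_left hy.le
    · filter_upwards [hev] with y hy using min_eq_right hy.le

theorem ae_grad_max_min {a b : V → ℝ} (ha : Lip a) (hb : Lip b) :
    ∀ᵐ x : V, (a x ≤ b x ∧ gradient (fun y => max (a y) (b y)) x = gradient b x ∧
      gradient (fun y => min (a y) (b y)) x = gradient a x) ∨
    (b x ≤ a x ∧ gradient (fun y => max (a y) (b y)) x = gradient a x ∧
      gradient (fun y => min (a y) (b y)) x = gradient b x) := by
  filter_upwards [ha.ae_diff, hb.ae_diff, (ha.maxL hb).ae_diff, (ha.minL hb).ae_diff]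
    with x h1 h2 h3 h4 using grad_max_min ha.cont hb.cont h1 h2 h3 h4

/-- gradient of the positive part -/
theorem ae_grad_posPart {a : V → ℝ} (ha : Lip a) :
    ∀ᵐ x : V, gradient (fun y => max (a y) 0) x = if 0 < a x then gradient a x else 0 := by
  filter_upwards with x
  split_ifs with h
  · refine grad_eq_of_eventuallyEq ?_
    have hev : ∀ᶠ y in 𝓝 x, 0 < a y := (isOpen_lt continuous_const ha.cont).mem_nhds h
    filter_upwards [hev] with y hy using max_eq_left hy.le
  · refine grad_zero_of_min fun y => ?_
    rw [max_eq_right (not_lt.1 h)]; exact le_max_right _ _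

/-! ### Energy density -/

noncomputable def pos1 (t : ℝ) : ℝ := if 0 < t then 1 else 0

theorem pos1_nonneg (t : ℝ) : 0 ≤ pos1 t := by unfold pos1; split_ifs <;> norm_num
theorem pos1_le_one (t : ℝ) : pos1 t ≤ 1 := by unfold pos1; split_ifs <;> norm_num
theorem pos1_of_pos {t : ℝ} (h : 0 < t) : pos1 t = 1 := by simp [pos1, h]
theorem pos1_of_nonpos {t : ℝ} (h : t ≤ 0) : pos1 t = 0 := by simp [pos1, not_lt.2 h]
theorem pos1_mono {s t : ℝ} (h : s ≤ t) : pos1 s ≤ pos1 t := by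
  rcases lt_or_ge 0 s with hs | hs
  · rw [pos1_of_pos hs, pos1_of_pos (hs.trans_le h)]
  · rw [pos1_of_nonpos hs]; exact pos1_nonneg _
theorem pos1_congr {s t : ℝ} (h : 0 < s ↔ 0 < t) : pos1 s = pos1 t := by
  unfold pos1; simp [h]
theorem meas_pos1 : Measurable pos1 :=
  Measurable.ite measurableSet_Ioi measurable_const measurable_const

noncomputable def dens (u : V → ℝ) (x : V) : ℝ := ‖gradient u x‖ ^ 2 + pos1 (u x)

theorem dens_nonneg (u : V → ℝ) (x : V) : 0 ≤ dens u x :=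
  add_nonneg (sq_nonneg _) (pos1_nonneg _)

theorem meas_dens {u : V → ℝ} (hu : Continuous u) : Measurable (dens u) :=
  ((meas_grad u).norm.pow_const 2).add (meas_pos1.comp hu.measurable)

theorem dens_le {u : V → ℝ} {K : ℝ≥0} (hu : LipschitzWith K u) (x : V) :
    dens u x ≤ (K : ℝ) ^ 2 + 1 :=
  add_le_add (pow_le_pow_left₀ (norm_nonneg _) (grad_le hu x) 2) (pos1_le_one _)

theorem dens_congr {u v : V → ℝ} {x : V} (h : u =ᶠ[𝓝 x] v) : dens u x = dens v x := by
  unfold dens; rw [grad_eq_of_eventuallyEq h, h.eq_of_nhds]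

theorem dens_congr_of_compl {u v : V → ℝ} {K : Set V} (hK : IsClosed K)
    (h : ∀ x ∉ K, v x = u x) {x : V} (hx : x ∉ K) : dens v x = dens u x := by
  apply dens_congr
  filter_upwards [hK.isOpen_compl.mem_nhds hx] with y hy using h y hy

theorem grad_zero_of_compl {ζ : V → ℝ} {K : Set V} (hK : IsClosed K)
    (h : ∀ x ∉ K, ζ x = 0) {x : V} (hx : x ∉ K) : gradient ζ x = 0 := by
  have : ζ =ᶠ[𝓝 x] fun _ => 0 := by
    filter_upwards [hK.isOpen_compl.mem_nhds hx] with y hy using h y hy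
  rw [grad_eq_of_eventuallyEq this, grad_const]

theorem ae_dens_max_min {a b : V → ℝ} (ha : Lip a) (hb : Lip b) :
    ∀ᵐ x : V, dens (fun y => max (a y) (b y)) x + dens (fun y => min (a y) (b y)) x
      = dens a x + dens b x := by
  filter_upwards [ae_grad_max_min ha hb] with x hx
  unfold dens
  beta_reduce
  rcases hx with ⟨h, h1, h2⟩ | ⟨h, h1, h2⟩
  · rw [h1, h2, max_eq_right h, min_eq_left h]; ring
  · rw [h1, h2, max_eq_left h, min_eq_right h]

/-! ### Integrability -/

theorem integrableOn_of_bdd {F : Type*} [NormedAddCommGroup F] {g : V → F} {s : Set V}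
    (hs : Bornology.IsBounded s)
    (hg : AEStronglyMeasurable g) (C : ℝ) (hC : ∀ x, ‖g x‖ ≤ C) : IntegrableOn g s := by
  refine Measure.integrableOn_of_bounded (M := C) hs.measure_lt_top.ne hg ?_
  exact Filter.Eventually.of_forall hC

theorem integrable_of_bdd {g : V → ℝ} {K : Set V} (hK : IsCompact K) (hg : AEStronglyMeasurable g)
    (C : ℝ) (hC : ∀ x, ‖g x‖ ≤ C) (h0 : ∀ x ∉ K, g x = 0) : Integrable g :=
  (integrableOn_iff_integrable_of_support_subset
    (fun x hx => by by_contra h; exact hx (h0 x h))).1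
    (integrableOn_of_bdd hK.isBounded hg C hC)

theorem Lip.integrableOn {g : V → ℝ} (hg : Continuous g) (c : V) (r : ℝ) :
    IntegrableOn g (ball c r) :=
  ((hg.continuousOn).integrableOn_compact (isCompact_closedBall c r)).mono_set ball_subset_closedBall

theorem inner_meas {F G : V → V} (hF : Measurable F) (hG : Measurable G) :
    Measurable (fun x => ⟪F x, G x⟫) := hF.inner hG

theorem inner_grad_le {f g : V → ℝ} {K K' : ℝ≥0} (hf : LipschitzWith K f)
    (hg : LipschitzWith K' g) (x : V) : ‖⟪gradient f x, gradient g x⟫‖ ≤ K * K' :=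
  (norm_inner_le_norm _ _).trans
    (mul_le_mul (grad_le hf x) (grad_le hg x) (norm_nonneg _) K.2)

theorem integrable_inner_grad {f ζ : V → ℝ} {K : Set V} (hf : Lip f) (hζ : Lip ζ)
    (hK : IsCompact K) (h0 : ∀ x ∉ K, ζ x = 0) :
    Integrable (fun x => ⟪gradient f x, gradient ζ x⟫) := by
  obtain ⟨A, hA⟩ := hf
  obtain ⟨B, hB⟩ := hζ
  refine integrable_of_bdd hK (inner_meas (meas_grad f) (meas_grad ζ)).aestronglyMeasurable
    (A * B) (inner_grad_le hA hB) fun x hx => ?_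
  rw [grad_zero_of_compl hK.isClosed h0 hx, inner_zero_right]

theorem integrable_dens_sub {u v : V → ℝ} {K : Set V} (hu : Lip u) (hv : Lip v)
    (hK : IsCompact K) (h0 : ∀ x ∉ K, v x = u x) :
    Integrable (fun x => dens v x - dens u x) := by
  obtain ⟨A, hA⟩ := hu
  obtain ⟨B, hB⟩ := hv
  refine integrable_of_bdd hK
    ((meas_dens hB.continuous).sub (meas_dens hA.continuous)).aestronglyMeasurable
    (((B : ℝ) ^ 2 + 1) + ((A : ℝ) ^ 2 + 1)) (fun x => ?_) fun x hx => ?_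
  · refine (norm_sub_le _ _).trans (add_le_add ?_ ?_)
    · rw [Real.norm_of_nonneg (dens_nonneg _ _)]; exact dens_le hB x
    · rw [Real.norm_of_nonneg (dens_nonneg _ _)]; exact dens_le hA x
  · rw [dens_congr_of_compl hK.isClosed h0 hx, sub_self]

/-! ### Minimizers and weakly harmonic functions -/

structure Mn (L : ℝ≥0) (Ω : Set V) (u : V → ℝ) : Prop where
  nn : ∀ x, 0 ≤ u x
  lip : LipschitzWith L u
  mini : ∀ v : V → ℝ, (∀ x, 0 ≤ v x) → Lip v → ∀ K : Set V, IsCompact K → K ⊆ Ω →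
    (∀ x ∉ K, v x = u x) → 0 ≤ ∫ x, (dens v x - dens u x)

theorem Mn.Lip {L : ℝ≥0} {Ω : Set V} {u : V → ℝ} (h : Mn L Ω u) : Lip u := ⟨L, h.lip⟩

theorem Mn.mono {L : ℝ≥0} {Ω Ω' : Set V} {u : V → ℝ} (h : Mn L Ω u) (hΩ : Ω' ⊆ Ω) : Mn L Ω' u :=
  ⟨h.nn, h.lip, fun v h1 h2 K h3 h4 h5 => h.mini v h1 h2 K h3 (h4.trans hΩ) h5⟩

theorem Mn.mono_lip {L L' : ℝ≥0} {Ω : Set V} {u : V → ℝ} (h : Mn L Ω u) (hL : L ≤ L') : Mn L' Ω u :=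
  ⟨h.nn, h.lip.weaken hL, h.mini⟩

def WH (P : Set V) (f : V → ℝ) : Prop :=
  ∀ ζ : V → ℝ, Lip ζ → ∀ K : Set V, IsCompact K → K ⊆ P → (∀ x ∉ K, ζ x = 0) →
    ∫ x, ⟪gradient f x, gradient ζ x⟫ = 0

theorem WH.mono {P Q : Set V} {f : V → ℝ} (h : WH P f) (hQ : Q ⊆ P) : WH Q f :=
  fun ζ h1 K h2 h3 h4 => h ζ h1 K h2 (h3.trans hQ) h4

theorem WH.sub_mul {P : Set V} {f g : V → ℝ} (hf : WH P f) (hg : WH P g) (lf : Lip f) (lg : Lip g)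
    (c : ℝ) : WH P (fun x => f x - c * g x) := by
  intro ζ h1 K h2 h3 h4
  have e : ∀ᵐ x : V, ⟪gradient (fun x => f x - c * g x) x, gradient ζ x⟫
      = ⟪gradient f x, gradient ζ x⟫ - c * ⟪gradient g x, gradient ζ x⟫ := by
    filter_upwards [lf.ae_diff, lg.ae_diff] with x hx hx'
    rw [grad_sub hx (hx'.const_mul c), grad_const_mul c hx', inner_sub_left, inner_smul_left]
    simp
  rw [integral_congr_ae e, integral_sub (integrable_inner_grad lf h1 h2 h4)
    ((integrable_inner_grad lg h1 h2 h4).const_mul c), integral_const_mul,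
    hf ζ h1 K h2 h3 h4, hg ζ h1 K h2 h3 h4]
  simp

theorem wh_const (P : Set V) (c : ℝ) : WH P (fun _ : V => c) := by
  intro ζ h1 K h2 h3 h4
  simp [grad_const]

theorem dens_add_smul {u ζ : V → ℝ} {x : V} (hu : DifferentiableAt ℝ u x)
    (hζ : DifferentiableAt ℝ ζ x) (t : ℝ) :
    ‖gradient (fun y => u y + t * ζ y) x‖ ^ 2 = ‖gradient u x‖ ^ 2
      + t * (2 * ⟪gradient u x, gradient ζ x⟫) + t ^ 2 * ‖gradient ζ x‖ ^ 2 := by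
  rw [grad_add hu (hζ.const_mul t), grad_const_mul t hζ, norm_add_sq_real, inner_smul_right,
    norm_smul, mul_pow, Real.norm_eq_abs, sq_abs]
  ring

theorem integrable_grad_sq {ζ : V → ℝ} {K : Set V} (hζ : Lip ζ)
    (hK : IsCompact K) (h0 : ∀ x ∉ K, ζ x = 0) :
    Integrable (fun x => ‖gradient ζ x‖ ^ 2) := by
  have := integrable_inner_grad hζ hζ hK h0
  simpa [real_inner_self_eq_norm_sq] using this

theorem lin_quad {I Q t0 : ℝ} (ht0 : 0 < t0)
    (h : ∀ t, 0 < t → t < t0 → 0 ≤ t * I + t ^ 2 * Q) : 0 ≤ I := by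
  by_contra hI
  push Not at hI
  have hq : 0 < |Q| + 1 := by positivity
  set t := min (t0 / 2) (-I / (2 * (|Q| + 1))) with ht
  have h1 : 0 < t := lt_min (by linarith) (div_pos (by linarith) (by positivity))
  have h2 : t < t0 := (min_le_left _ _).trans_lt (by linarith)
  have h3 : t * (2 * (|Q| + 1)) ≤ -I := (le_div_iff₀ (by positivity)).1 (min_le_right _ _)
  have h4 := h t h1 h2
  have h5 : 0 ≤ I + t * Q := by
    have : 0 ≤ t * (I + t * Q) := by nlinarith
    exact nonneg_of_mul_nonneg_right this h1
  have h6 := le_abs_self Q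
  nlinarith

theorem cpt_bdd {f : V → ℝ} (hf : Continuous f) {K : Set V} (hK : IsCompact K) :
    ∃ M : ℝ, 0 < M ∧ ∀ x ∈ K, |f x| ≤ M := by
  obtain ⟨M, hM⟩ := hK.exists_bound_of_continuousOn hf.continuousOn
  exact ⟨max M 1, by positivity, fun x hx => (hM x hx).trans (le_max_left _ _)⟩

theorem cpt_pos {f : V → ℝ} (hf : Continuous f) {K : Set V} (hK : IsCompact K)
    (hp : ∀ x ∈ K, 0 < f x) : ∃ m : ℝ, 0 < m ∧ ∀ x ∈ K, m ≤ f x := by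
  rcases K.eq_empty_or_nonempty with rfl | hne
  · exact ⟨1, one_pos, by simp⟩
  · obtain ⟨x, hx, hx'⟩ := hK.exists_isMinOn hne hf.continuousOn
    exact ⟨f x, hp x hx, fun y hy => hx' hy⟩

theorem Mn.one_sided {L : ℝ≥0} {Ω : Set V} {u : V → ℝ} (h : Mn L Ω u) {ζ : V → ℝ} (hζ : AC.Lip ζ)
    {K : Set V} (hK : IsCompact K) (hKΩ : K ⊆ Ω) (hKu : ∀ x ∈ K, 0 < u x) (h0 : ∀ x ∉ K, ζ x = 0) :
    0 ≤ ∫ x, ⟪gradient u x, gradient ζ x⟫ := by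
  obtain ⟨m, hm, hm'⟩ := cpt_pos h.Lip.cont hK hKu
  obtain ⟨M, hM, hM'⟩ := cpt_bdd hζ.cont hK
  have h2 : 0 ≤ 2 * ∫ x, ⟪gradient u x, gradient ζ x⟫ := by
    refine lin_quad (Q := ∫ x, ‖gradient ζ x‖ ^ 2) (t0 := m / M) (by positivity) fun t ht ht' => ?_
    have htM : t * M < m := (lt_div_iff₀ hM).1 ht'
    have hpos : ∀ x ∈ K, 0 < u x + t * ζ x := by
      intro x hx
      have h1 := hm' x hx
      have h2 := neg_le_of_abs_le (hM' x hx)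
      nlinarith
    have hnn : ∀ x, 0 ≤ u x + t * ζ x := by
      intro x
      by_cases hx : x ∈ K
      · exact (hpos x hx).le
      · rw [h0 x hx]; simpa using h.nn x
    have := h.mini (fun x => u x + t * ζ x) hnn (h.Lip.add (hζ.const_mul t)) K hK hKΩ
      (fun x hx => by simp [h0 x hx])
    have e : ∀ᵐ x : V, dens (fun x => u x + t * ζ x) x - dens u x
        = t * (2 * ⟪gradient u x, gradient ζ x⟫) + t ^ 2 * ‖gradient ζ x‖ ^ 2 := by
      filter_upwards [h.Lip.ae_diff, hζ.ae_diff] with x hx hx'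
      unfold dens
      rw [dens_add_smul hx hx']
      have : pos1 (u x + t * ζ x) = pos1 (u x) := by
        by_cases hx : x ∈ K
        · rw [pos1_of_pos (hpos x hx), pos1_of_pos (hKu x hx)]
        · simp [h0 x hx]
      rw [this]; ring
    rw [integral_congr_ae e, integral_add
      (((integrable_inner_grad h.Lip hζ hK h0).const_mul 2).const_mul t)
      ((integrable_grad_sq hζ hK h0).const_mul _), integral_const_mul, integral_const_mul,
      integral_const_mul] at this
    exact this
  linarith

theorem Mn.wh {L : ℝ≥0} {Ω : Set V} {u : V → ℝ} (h : Mn L Ω u) : WH ({x | 0 < u x} ∩ Ω) u := by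
  intro ζ hζ K hK hKP h0
  have h1 := h.one_sided hζ hK (fun x hx => (hKP hx).2) (fun x hx => (hKP hx).1) h0
  have h2 := h.one_sided hζ.neg hK (fun x hx => (hKP hx).2) (fun x hx => (hKP hx).1)
    (fun x hx => by simp [h0 x hx])
  simp only [grad_neg, inner_neg_right, integral_neg] at h2
  linarith

end AC

end Part1

section Part2
open scoped Topology RealInnerProductSpace
set_option linter.unusedSectionVars false

namespace AC

variable {V : Type*} [NormedAddCommGroup V] [InnerProductSpace ℝ V] [FiniteDimensional ℝ V]
  [MeasurableSpace V] [BorelSpace V]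

/-! ### Mean value inequalities -/

theorem setIntegral_ball_scale (F : V → ℝ) (x₀ : V) {s : ℝ} (hs : 0 < s) :
    ∫ y in ball (0 : V) 1, F (x₀ + s • y) =
      (s ^ Module.finrank ℝ V)⁻¹ * ∫ y in ball x₀ s, F y := by
  have h1 := Measure.setIntegral_comp_smul_of_pos (volume : Measure V) (fun z => F (x₀ + z))
    (ball (0 : V) 1) hs
  rw [h1, _root_.smul_ball hs.ne', smul_zero, Real.norm_of_nonneg hs.le, mul_one, smul_eq_mul]
  congr 1
  have h2 := (measurePreserving_add_left (volume : Measure V) x₀).setIntegral_preimage_emb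
    (measurableEmbedding_addLeft x₀) F (ball x₀ s)
  rw [← h2]
  congr 2
  ext z; simp

theorem vol_ball (x₀ : V) {s : ℝ} (hs : 0 < s) :
    (volume : Measure V).real (ball x₀ s) =
      s ^ Module.finrank ℝ V * (volume : Measure V).real (ball (0 : V) 1) := by
  rw [Measure.real, Measure.real, Measure.addHaar_ball_of_pos _ _ hs, ENNReal.toReal_mul,
    ENNReal.toReal_ofReal (by positivity)]

theorem vol_ball_pos (x₀ : V) {s : ℝ} (hs : 0 < s) : 0 < (volume : Measure V).real (ball x₀ s) := by
  rw [Measure.real]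
  exact ENNReal.toReal_pos (measure_ball_pos _ _ hs).ne' measure_ball_lt_top.ne

theorem phi_deriv {F : V → ℝ} {K : ℝ≥0} (hF : LipschitzWith K F) (x₀ : V) {s : ℝ} (hs : 0 < s) :
    HasDerivAt (fun s => ∫ y in ball (0 : V) 1, F (x₀ + s • y))
      (∫ y in ball (0 : V) 1, ⟪gradient F (x₀ + s • y), y⟫) s := by
  have hcont : ∀ t : ℝ, Continuous fun y : V => F (x₀ + t • y) := fun t =>
    hF.continuous.comp (by fun_prop)
  have hae : ∀ᵐ y : V, DifferentiableAt ℝ F (x₀ + s • y) := by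
    have h1 : ∀ᵐ z : V, DifferentiableAt ℝ F z := hF.ae_differentiableAt
    have h2 : ∀ᵐ z : V, DifferentiableAt ℝ F (x₀ + z) :=
      (measurePreserving_add_left (volume : Measure V) x₀).quasiMeasurePreserving.ae h1
    have h3 : Measure.QuasiMeasurePreserving (fun y : V => s • y) volume volume := by
      refine ⟨measurable_const_smul s, ?_⟩
      rw [Measure.map_addHaar_smul _ hs.ne']
      exact Measure.smul_absolutelyContinuous
    exact h3.ae h2
  refine (hasDerivAt_integral_of_dominated_loc_of_lip (bound := fun _ => (K : ℝ))
    (s := univ) univ_mem (Filter.Eventually.of_forall fun t => (hcont t).aestronglyMeasurable)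
    (Lip.integrableOn (hcont s) 0 1) ?_ ?_ ?_ ?_).2
  · refine Measurable.aestronglyMeasurable ?_
    exact ((meas_grad F).comp (by fun_prop)).inner measurable_id
  · filter_upwards [ae_restrict_mem measurableSet_ball] with y hy
    have hy1 : ‖y‖ ≤ 1 := by simpa using (mem_ball.1 hy).le
    refine LipschitzOnWith.of_dist_le_mul fun a _ b _ => ?_
    simp only [Real.coe_nnabs, NNReal.abs_eq]
    refine (hF.dist_le_mul _ _).trans (mul_le_mul_of_nonneg_left ?_ K.2)
    rw [dist_add_left, dist_eq_norm, ← sub_smul, norm_smul, Real.dist_eq]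
    exact mul_le_of_le_one_right (abs_nonneg _) hy1
  · exact Lip.integrableOn continuous_const 0 1
  · filter_upwards [ae_restrict_of_ae hae] with y hy
    have h1 : HasDerivAt (fun t : ℝ => x₀ + t • y) y s := by
      simpa using ((hasDerivAt_id s).smul_const y).const_add x₀
    have h2 := hy.hasFDerivAt.comp_hasDerivAt s h1
    have h3 : fderiv ℝ F (x₀ + s • y) y = ⟪gradient F (x₀ + s • y), y⟫ := by
      simp [gradient, InnerProductSpace.toDual_symm_apply]
    rw [← h3]; exact h2

theorem mv_le {F : V → ℝ} (hF : Lip F) (x₀ : V) {r : ℝ} (hr : 0 < r)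
    (h : ∀ s, 0 < s → s < r → 0 ≤ ∫ y in ball x₀ s, ⟪gradient F y, y - x₀⟫) :
    F x₀ * (volume : Measure V).real (ball x₀ r) ≤ ∫ y in ball x₀ r, F y := by
  obtain ⟨K, hK⟩ := hF
  have hc : Continuous (fun s : ℝ => ∫ y in ball (0 : V) 1, F (x₀ + s • y)) := by
    refine continuous_iff_continuousAt.2 fun s₀ => ?_
    obtain ⟨M, hM, hM'⟩ := cpt_bdd hK.continuous (isCompact_closedBall x₀ (|s₀| + 1))
    refine continuousAt_of_dominated (bound := fun _ => M) ?_ ?_ ?_ ?_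
    · exact Filter.Eventually.of_forall fun t =>
        (hK.continuous.comp (by fun_prop)).aestronglyMeasurable
    · filter_upwards [ball_mem_nhds s₀ one_pos] with s hs
      filter_upwards [ae_restrict_mem measurableSet_ball] with y hy
      refine hM' _ ?_
      have hy1 : ‖y‖ ≤ 1 := by simpa using (mem_ball.1 hy).le
      have hs1 : |s| ≤ |s₀| + 1 := by
        have := abs_sub_abs_le_abs_sub s s₀
        have h2 : |s - s₀| < 1 := by simpa [Real.dist_eq] using hs
        linarith
      rw [mem_closedBall, dist_eq_norm, add_sub_cancel_left, norm_smul, Real.norm_eq_abs]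
      exact (mul_le_of_le_one_right (abs_nonneg _) hy1).trans hs1
    · exact Lip.integrableOn continuous_const 0 1
    · exact Filter.Eventually.of_forall fun y =>
        (hK.continuous.comp (by fun_prop)).continuousAt
  have hmono : MonotoneOn (fun s : ℝ => ∫ y in ball (0 : V) 1, F (x₀ + s • y)) (Icc 0 r) := by
    refine monotoneOn_of_deriv_nonneg (convex_Icc 0 r) hc.continuousOn ?_ ?_
    · rw [interior_Icc]
      exact fun s hs => (phi_deriv hK x₀ hs.1).differentiableAt.differentiableWithinAt
    · rw [interior_Icc]
      intro s hs
      rw [(phi_deriv hK x₀ hs.1).deriv]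
      have e := setIntegral_ball_scale (fun z => s⁻¹ * ⟪gradient F z, z - x₀⟫) x₀ hs.1
      have e2 : ∀ y : V, s⁻¹ * ⟪gradient F (x₀ + s • y), x₀ + s • y - x₀⟫
          = ⟪gradient F (x₀ + s • y), y⟫ := by
        intro y
        rw [add_sub_cancel_left, inner_smul_right, ← mul_assoc, inv_mul_cancel₀ hs.1.ne', one_mul]
      simp only [e2] at e
      rw [e, integral_const_mul]
      have := h s hs.1 hs.2
      have := hs.1
      positivity
  have := hmono (left_mem_Icc.2 hr.le) (right_mem_Icc.2 hr.le) hr.le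
  simp only [zero_smul, add_zero] at this
  rw [setIntegral_ball_scale F x₀ hr, setIntegral_const, smul_eq_mul] at this
  rw [vol_ball x₀ hr]
  have hp : 0 < r ^ Module.finrank ℝ V := by positivity
  calc F x₀ * (r ^ Module.finrank ℝ V * (volume : Measure V).real (ball (0 : V) 1))
      = r ^ Module.finrank ℝ V * ((volume : Measure V).real (ball (0 : V) 1) * F x₀) := by ring
    _ ≤ r ^ Module.finrank ℝ V * ((r ^ Module.finrank ℝ V)⁻¹ * ∫ y in ball x₀ r, F y) :=
        mul_le_mul_of_nonneg_left this hp.le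
    _ = _ := by rw [← mul_assoc, mul_inv_cancel₀ hp.ne', one_mul]

/-- the quadratic test function -/
noncomputable def eta (x₀ : V) (s : ℝ) (x : V) : ℝ := max ((s ^ 2 - ‖x - x₀‖ ^ 2) / 2) 0

theorem eta_nonneg (x₀ : V) (s : ℝ) (x : V) : 0 ≤ eta x₀ s x := le_max_right _ _

theorem eta_zero {x₀ : V} {s : ℝ} (hs : 0 ≤ s) {x : V} (hx : x ∉ ball x₀ s) : eta x₀ s x = 0 := by
  have : s ≤ ‖x - x₀‖ := by simpa [dist_eq_norm] using hx
  exact max_eq_right (by nlinarith [norm_nonneg (x - x₀)])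

theorem eta_le (x₀ : V) (s : ℝ) (x : V) : eta x₀ s x ≤ s ^ 2 / 2 :=
  max_le (by nlinarith [sq_nonneg ‖x - x₀‖]) (by positivity)

theorem eta_eq {x₀ : V} {s : ℝ} (hs : 0 ≤ s) (x : V) :
    eta x₀ s x = (s ^ 2 - (min ‖x - x₀‖ s) ^ 2) / 2 := by
  unfold eta
  rcases le_total ‖x - x₀‖ s with h | h
  · rw [min_eq_left h, max_eq_left]
    nlinarith [norm_nonneg (x - x₀)]
  · rw [min_eq_right h, max_eq_right]
    · ring
    · nlinarith [norm_nonneg (x - x₀)]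

theorem eta_lip (x₀ : V) {s : ℝ} (hs : 0 ≤ s) : Lip (eta x₀ s) := by
  refine lip_of_bound s fun x y => ?_
  rw [eta_eq hs, eta_eq hs]
  have h1 : |min ‖x - x₀‖ s - min ‖y - x₀‖ s| ≤ dist x y := by
    refine (abs_inf_sub_inf_le_abs _ _ _).trans ?_
    refine (abs_norm_sub_norm_le _ _).trans ?_
    rw [sub_sub_sub_cancel_right, dist_eq_norm]
  have h2 : |min ‖x - x₀‖ s + min ‖y - x₀‖ s| ≤ 2 * s := by
    rw [abs_of_nonneg]
    · linarith [min_le_right ‖x - x₀‖ s, min_le_right ‖y - x₀‖ s]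
    · positivity
  have e : (s ^ 2 - min ‖x - x₀‖ s ^ 2) / 2 - (s ^ 2 - min ‖y - x₀‖ s ^ 2) / 2
    = - ((min ‖x - x₀‖ s - min ‖y - x₀‖ s) * (min ‖x - x₀‖ s + min ‖y - x₀‖ s) / 2) := by ring
  rw [e, abs_neg, abs_div, abs_mul, abs_of_pos (two_pos : (0 : ℝ) < 2)]
  have := mul_le_mul h1 h2 (abs_nonneg _) dist_nonneg
  linarith

theorem eta_grad {x₀ : V} {s : ℝ} (hs : 0 < s) :
    ∀ᵐ x : V, gradient (eta x₀ s) x = (ball x₀ s).indicator (fun x => - (x - x₀)) x := by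
  have h0 : ∀ᵐ x : V, x ∉ sphere x₀ s :=
    measure_eq_zero_iff_ae_notMem.1 (Measure.addHaar_sphere_of_ne_zero volume x₀ hs.ne')
  filter_upwards [h0] with x hx
  by_cases h : x ∈ ball x₀ s
  · rw [indicator_of_mem h]
    have e : eta x₀ s =ᶠ[𝓝 x] fun x => (s ^ 2 - ‖x - x₀‖ ^ 2) / 2 := by
      filter_upwards [isOpen_ball.mem_nhds h] with y hy
      refine max_eq_left ?_
      have : ‖y - x₀‖ < s := by simpa [dist_eq_norm] using hy
      nlinarith [norm_nonneg (y - x₀)]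
    rw [grad_eq_of_eventuallyEq e]
    refine HasGradientAt.gradient ?_
    rw [hasGradientAt_iff_hasFDerivAt]
    have h1 : HasFDerivAt (fun x : V => x - x₀) (ContinuousLinearMap.id ℝ V) x :=
      (hasFDerivAt_id x).sub_const x₀
    have h2 := ((h1.norm_sq).const_sub (s ^ 2)).mul_const (1 / 2 : ℝ)
    refine (h2.congr_fderiv ?_).congr_of_eventuallyEq
      (Filter.Eventually.of_forall fun y => by ring)
    ext v
    simp
  · rw [indicator_of_notMem h]
    have h' : x ∉ closedBall x₀ s := by
      intro hc
      rw [← ball_union_sphere] at hc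
      exact hc.elim h hx
    exact grad_zero_of_compl isClosed_closedBall
      (fun y hy => eta_zero hs.le fun hb => hy (ball_subset_closedBall hb)) h'

theorem integral_inner_eta (G : V → V) {x₀ : V} {s : ℝ} (hs : 0 < s) :
    ∫ x, ⟪G x, gradient (eta x₀ s) x⟫ = - ∫ x in ball x₀ s, ⟪G x, x - x₀⟫ := by
  rw [← integral_neg, ← integral_indicator measurableSet_ball]
  refine integral_congr_ae ?_
  filter_upwards [eta_grad (x₀ := x₀) hs] with x hx
  rw [hx]
  by_cases h : x ∈ ball x₀ s
  · rw [indicator_of_mem h, indicator_of_mem h, inner_neg_right]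
  · simp [indicator_of_notMem h]

theorem WH.mv_le {P : Set V} {f : V → ℝ} (hf : WH P f) (lf : Lip f) {x₀ : V} {r : ℝ} (hr : 0 < r)
    (hP : ball x₀ r ⊆ P) : f x₀ * (volume : Measure V).real (ball x₀ r) ≤ ∫ y in ball x₀ r, f y := by
  refine AC.mv_le lf x₀ hr fun s hs hsr => ?_
  have := hf (eta x₀ s) (eta_lip x₀ hs.le) (closedBall x₀ s) (isCompact_closedBall _ _)
    ((closedBall_subset_ball hsr).trans hP)
    (fun x hx => eta_zero hs.le fun hb => hx (ball_subset_closedBall hb))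
  rw [integral_inner_eta _ hs] at this
  linarith

theorem WH.neg {P : Set V} {f : V → ℝ} (hf : WH P f) : WH P (fun x => - f x) := by
  intro ζ h1 K h2 h3 h4
  simp only [grad_neg, inner_neg_left, integral_neg, hf ζ h1 K h2 h3 h4, neg_zero]

theorem WH.mv_eq {P : Set V} {f : V → ℝ} (hf : WH P f) (lf : Lip f) {x₀ : V} {r : ℝ} (hr : 0 < r)
    (hP : ball x₀ r ⊆ P) : f x₀ * (volume : Measure V).real (ball x₀ r) = ∫ y in ball x₀ r, f y := by
  refine le_antisymm (hf.mv_le lf hr hP) ?_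
  have := hf.neg.mv_le lf.neg hr hP
  rw [integral_neg] at this
  linarith

/-- nonnegative continuous function with nonpositive integral on a ball vanishes -/
theorem zero_of_integral_le {f : V → ℝ} (cf : Continuous f) {x₀ : V} {r : ℝ}
    (h0 : ∀ x ∈ ball x₀ r, 0 ≤ f x) (hi : ∫ y in ball x₀ r, f y ≤ 0) :
    ∀ x ∈ ball x₀ r, f x = 0 := by
  by_contra hcon
  push Not at hcon
  obtain ⟨x, hx, hne⟩ := hcon
  have hpos : 0 < f x := lt_of_le_of_ne (h0 x hx) hne.symm
  have hae : 0 ≤ᵐ[volume.restrict (ball x₀ r)] f := by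
    filter_upwards [ae_restrict_mem measurableSet_ball] with y hy using h0 y hy
  have hI := (setIntegral_eq_zero_iff_of_nonneg_ae hae (Lip.integrableOn cf x₀ r)).1
    (le_antisymm hi (integral_nonneg_of_ae hae))
  have hU : IsOpen ({y | 0 < f y} ∩ ball x₀ r) :=
    (isOpen_lt continuous_const cf).inter isOpen_ball
  have hpos' : 0 < volume ({y | 0 < f y} ∩ ball x₀ r) := hU.measure_pos _ ⟨x, hpos, hx⟩
  have h3 := ae_iff.1 hI
  rw [Measure.restrict_apply' measurableSet_ball] at h3
  refine hpos'.ne' (measure_mono_null ?_ h3)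
  rintro y ⟨hy, hy'⟩
  exact ⟨(ne_of_gt hy : f y ≠ 0), hy'⟩

theorem WH.strong_mp {P : Set V} {f : V → ℝ} (hf : WH P f) (lf : Lip f) {x₀ : V} {r : ℝ}
    (hr : 0 < r) (hP : ball x₀ r ⊆ P) (h0 : ∀ x ∈ ball x₀ r, 0 ≤ f x) (hx : f x₀ = 0) :
    ∀ x ∈ ball x₀ r, f x = 0 := by
  refine zero_of_integral_le lf.cont h0 ?_
  rw [← hf.mv_eq lf hr hP, hx, zero_mul]

/-! ### Positive parts of harmonic functions are subharmonic -/

theorem grad_chi {f : V → ℝ} (cf : Continuous f) {k ε : ℝ} (hk : 0 < k) {x : V}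
    (hd : DifferentiableAt ℝ f x) :
    0 ≤ ⟪gradient f x, gradient (fun y => min (max (k * (f y - ε)) 0) 1) x⟫ := by
  rcases le_or_gt (k * (f x - ε)) 0 with h | h
  · rw [grad_zero_of_min (a := fun y => min (max (k * (f y - ε)) 0) 1) (fun y => ?_), inner_zero_right]
    simp only [max_eq_right h]
    rw [min_eq_left zero_le_one]; positivity
  · rcases le_or_gt 1 (k * (f x - ε)) with h1 | h1
    · rw [grad_zero_of_max (a := fun y => min (max (k * (f y - ε)) 0) 1) (fun y => ?_), inner_zero_right]
      rw [max_eq_left h.le, min_eq_right h1]; exact min_le_right _ _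
    · have hc : Continuous fun y => k * (f y - ε) := by fun_prop
      have e : (fun y => min (max (k * (f y - ε)) 0) 1) =ᶠ[𝓝 x] fun y => k * (f y - ε) := by
        filter_upwards [(isOpen_lt continuous_const hc).mem_nhds h,
          (isOpen_lt hc continuous_const).mem_nhds h1] with y hy hy'
        rw [max_eq_left (le_of_lt hy), min_eq_left (le_of_lt hy')]
      rw [grad_eq_of_eventuallyEq e, grad_const_mul k (hd.sub_const ε),
        grad_sub hd (differentiableAt_const ε), grad_const, sub_zero, inner_smul_right,
        real_inner_self_eq_norm_sq]
      positivity

theorem WH.sub_weak {P : Set V} {f : V → ℝ} (hf : WH P f) (lf : Lip f) {η : V → ℝ} (lη : Lip η)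
    (hη : ∀ x, 0 ≤ η x) {M : ℝ} (hM : ∀ x, η x ≤ M) {K : Set V} (hK : IsCompact K)
    (h0 : ∀ x ∉ K, η x = 0) {ε : ℝ} (hP : ∀ x ∈ K, ε ≤ f x → x ∈ P) :
    ∫ x, ⟪gradient (fun y => max (f y - ε) 0) x, gradient η x⟫ ≤ 0 := by
  have lfε : Lip (fun y => f y - ε) := lf.sub (lip_const ε)
  let χ : ℕ → V → ℝ := fun k y => min (max (((k : ℝ) + 1) * (f y - ε)) 0) 1
  have lχ : ∀ k, Lip (χ k) := fun k =>
    ((lfε.const_mul _).maxL (lip_const 0)).minL (lip_const 1)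
  have χ0 : ∀ k x, 0 ≤ χ k x := fun k x => le_min (le_max_right _ _) zero_le_one
  have χ1 : ∀ k x, χ k x ≤ 1 := fun k x => min_le_right _ _
  have hk : ∀ k : ℕ, ∫ x, χ k x * ⟪gradient f x, gradient η x⟫ ≤ 0 := by
    intro k
    have hkp : (0 : ℝ) < (k : ℝ) + 1 := by positivity
    have lζ : Lip (fun x => χ k x * η x) :=
      (lχ k).mul_of_bdd lη 1 M (fun x => by rw [abs_of_nonneg (χ0 k x)]; exact χ1 k x)
        (fun x _ => by rw [abs_of_nonneg (hη x)]; exact hM x)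
    have h1 := hf (fun x => χ k x * η x) lζ (K ∩ {x | ε ≤ f x})
      (hK.inter_right (isClosed_le continuous_const lf.cont)) (fun x hx => hP x hx.1 hx.2) ?_
    · have e : ∀ᵐ x : V, ⟪gradient f x, gradient (fun x => χ k x * η x) x⟫
          = χ k x * ⟪gradient f x, gradient η x⟫ + η x * ⟪gradient f x, gradient (χ k) x⟫ := by
        filter_upwards [(lχ k).ae_diff, lη.ae_diff] with x hx hx'
        rw [grad_mul hx hx', inner_add_right, inner_smul_right, inner_smul_right]
      have i1 : Integrable (fun x => χ k x * ⟪gradient f x, gradient η x⟫) := by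
        refine (integrable_inner_grad lf lη hK h0).bdd_mul (lχ k).cont.aestronglyMeasurable
          (c := 1) (Filter.Eventually.of_forall fun x => ?_)
        rw [Real.norm_of_nonneg (χ0 k x)]; exact χ1 k x
      have i2 : Integrable (fun x => η x * ⟪gradient f x, gradient (χ k) x⟫) := by
        obtain ⟨A, hA⟩ := lf
        obtain ⟨B, hB⟩ := lχ k
        refine integrable_of_bdd hK ((lη.cont.measurable.mul
          (inner_meas (meas_grad f) (meas_grad (χ k)))).aestronglyMeasurable)
          (M * (A * B)) (fun x => ?_) (fun x hx => by simp [h0 x hx])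
        rw [norm_mul]
        refine mul_le_mul ?_ (inner_grad_le hA hB x) (norm_nonneg _) ((hη x).trans (hM x))
        rw [Real.norm_of_nonneg (hη x)]; exact hM x
      have h2 : 0 ≤ ∫ x, η x * ⟪gradient f x, gradient (χ k) x⟫ := by
        refine integral_nonneg_of_ae ?_
        filter_upwards [lf.ae_diff] with x hx
        exact mul_nonneg (hη x) (grad_chi lf.cont hkp hx)
      rw [integral_congr_ae e, integral_add i1 i2] at h1
      linarith
    · intro x hx
      by_cases hxK : x ∈ K
      · have : f x < ε := by
          by_contra hc
          exact hx ⟨hxK, not_lt.1 hc⟩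
        have h3 : ((k : ℝ) + 1) * (f x - ε) ≤ 0 := by nlinarith
        simp only [χ, max_eq_right h3]; simp
      · simp [h0 x hxK]
  have hlim : Tendsto (fun k : ℕ => ∫ x, χ k x * ⟪gradient f x, gradient η x⟫) atTop
      (𝓝 (∫ x, ⟪gradient (fun y => max (f y - ε) 0) x, gradient η x⟫)) := by
    refine tendsto_integral_of_dominated_convergence
      (fun x => ‖⟪gradient f x, gradient η x⟫‖) ?_ (integrable_inner_grad lf lη hK h0).norm ?_ ?_
    · exact fun k => ((lχ k).cont.measurable.mul
        (inner_meas (meas_grad f) (meas_grad η))).aestronglyMeasurable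
    · intro k
      refine Filter.Eventually.of_forall fun x => ?_
      rw [norm_mul, Real.norm_of_nonneg (χ0 k x)]
      exact mul_le_of_le_one_left (norm_nonneg _) (χ1 k x)
    · filter_upwards [ae_grad_posPart lfε, lf.ae_diff] with x hx hd
      rw [hx]
      split_ifs with h
      · rw [grad_sub hd (differentiableAt_const ε), grad_const, sub_zero]
        refine tendsto_const_nhds.congr' ?_
        obtain ⟨k0, hk0⟩ := exists_nat_gt (1 / (f x - ε))
        filter_upwards [eventually_ge_atTop k0] with k hk
        have h4 : 1 ≤ ((k : ℝ) + 1) * (f x - ε) := by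
          have : (k0 : ℝ) ≤ k := by exact_mod_cast hk
          have h5 := (div_lt_iff₀ h).1 hk0
          nlinarith
        have : χ k x = 1 := by
          simp only [χ]; rw [max_eq_left (by linarith), min_eq_right h4]
        rw [this, one_mul]
      · have : ∀ k, χ k x = 0 := by
          intro k
          have h3 : ((k : ℝ) + 1) * (f x - ε) ≤ 0 :=
            mul_nonpos_of_nonneg_of_nonpos (by positivity) (not_lt.1 h)
          simp only [χ, max_eq_right h3]; simp
        simp [this]
  exact le_of_tendsto hlim (Filter.Eventually.of_forall hk)

theorem WH.sub_mean {P : Set V} {f : V → ℝ} (hf : WH P f) (lf : Lip f) {x₀ : V} {r : ℝ}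
    (hr : 0 < r) (hP : ∀ x ∈ ball x₀ r, 0 < f x → x ∈ P) :
    max (f x₀) 0 * (volume : Measure V).real (ball x₀ r) ≤ ∫ y in ball x₀ r, max (f y) 0 := by
  have hv := vol_ball_pos x₀ hr
  have key : ∀ ε > 0, max (f x₀ - ε) 0 * (volume : Measure V).real (ball x₀ r)
      ≤ ∫ y in ball x₀ r, max (f y) 0 := by
    intro ε hε
    have l1 : Lip (fun y => max (f y - ε) 0) := (lf.sub (lip_const ε)).maxL (lip_const 0)
    have h1 := AC.mv_le l1 x₀ hr fun s hs hsr => ?_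
    · refine h1.trans (setIntegral_mono (Lip.integrableOn l1.cont _ _)
        (Lip.integrableOn (lf.maxL (lip_const 0)).cont _ _) fun y => ?_)
      exact max_le_max (by linarith) le_rfl
    · have := hf.sub_weak lf (eta_lip x₀ hs.le) (eta_nonneg x₀ s) (eta_le x₀ s)
        (isCompact_closedBall x₀ s)
        (fun x hx => eta_zero hs.le fun hb => hx (ball_subset_closedBall hb)) (ε := ε)
        (fun x hx hx' => hP x (closedBall_subset_ball hsr hx) (hε.trans_le hx'))
      rw [integral_inner_eta _ hs] at this
      linarith
  have hc : Tendsto (fun ε : ℝ => max (f x₀ - ε) 0 * (volume : Measure V).real (ball x₀ r))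
      (𝓝[>] 0) (𝓝 (max (f x₀ - 0) 0 * (volume : Measure V).real (ball x₀ r))) := by
    have : Continuous (fun ε : ℝ => max (f x₀ - ε) 0 * (volume : Measure V).real (ball x₀ r)) := by
      fun_prop
    exact this.continuousAt.tendsto.mono_left nhdsWithin_le_nhds
  rw [sub_zero] at hc
  exact le_of_tendsto hc (by filter_upwards [self_mem_nhdsWithin] with ε hε using key ε hε)

end AC

end Part2

section Part3
open scoped Topology RealInnerProductSpace
set_option linter.unusedSectionVars false

namespace AC

variable {V : Type*} [NormedAddCommGroup V] [InnerProductSpace ℝ V] [FiniteDimensional ℝ V]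
  [MeasurableSpace V] [BorelSpace V]

/-! ### Nondegeneracy -/

noncomputable def psi (x : V) (ρ ε : ℝ) (y : V) : ℝ := ε * max (min ρ (2 * (ρ - ‖y - x‖))) 0

theorem psi_lip (x : V) (ρ : ℝ) {ε : ℝ} (hε : 0 ≤ ε) :
    LipschitzWith (2 * ε).toNNReal (psi x ρ ε) := by
  refine LipschitzWith.of_dist_le_mul fun y z => ?_
  rw [Real.coe_toNNReal _ (by positivity), Real.dist_eq]
  unfold psi
  rw [← mul_sub, abs_mul, abs_of_nonneg hε]
  have h1 : |max (min ρ (2 * (ρ - ‖y - x‖))) 0 - max (min ρ (2 * (ρ - ‖z - x‖))) 0|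
      ≤ 2 * dist y z := by
    refine (abs_sup_sub_sup_le_abs _ _ _).trans ?_
    rw [min_comm ρ, min_comm ρ]
    refine (abs_inf_sub_inf_le_abs _ _ _).trans ?_
    have e : 2 * (ρ - ‖y - x‖) - 2 * (ρ - ‖z - x‖) = -(2 * (‖y - x‖ - ‖z - x‖)) := by ring
    rw [e, abs_neg, abs_mul, abs_two]
    have := abs_norm_sub_norm_le (y - x) (z - x)
    rw [sub_sub_sub_cancel_right] at this
    rw [dist_eq_norm]
    linarith
  calc _ ≤ ε * (2 * dist y z) := mul_le_mul_of_nonneg_left h1 hε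
    _ = _ := by ring

theorem psi_nonneg (x : V) (ρ : ℝ) {ε : ℝ} (hε : 0 ≤ ε) (y : V) : 0 ≤ psi x ρ ε y :=
  mul_nonneg hε (le_max_right _ _)

theorem psi_zero {x : V} {ρ : ℝ} (ε : ℝ) {y : V} (hy : y ∉ ball x ρ) : psi x ρ ε y = 0 := by
  have : ρ ≤ ‖y - x‖ := by simpa [dist_eq_norm] using hy
  unfold psi
  rw [max_eq_right ((min_le_right _ _).trans (by linarith)), mul_zero]

theorem psi_eq {x : V} {ρ : ℝ} (hρ : 0 < ρ) (ε : ℝ) {y : V} (hy : y ∈ ball x (ρ / 2)) :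
    psi x ρ ε y = ε * ρ := by
  have : ‖y - x‖ < ρ / 2 := by simpa [dist_eq_norm] using hy
  unfold psi
  rw [min_eq_left (by linarith), max_eq_left hρ.le]

theorem meas_pos_set {u : V → ℝ} (cu : Continuous u) (s : Set V) (hs : MeasurableSet s) :
    MeasurableSet ({y | 0 < u y} ∩ s) :=
  (isOpen_lt continuous_const cu).measurableSet.inter hs

theorem Mn.nd_step {L : ℝ≥0} {Ω : Set V} {u : V → ℝ} (h : Mn L Ω u) {x : V} {ρ ε : ℝ} (hρ : 0 < ρ)
    (hε : 0 ≤ ε) (hΩ : closedBall x ρ ⊆ Ω) (hu : ∀ y ∈ ball x (ρ / 2), u y ≤ ε * ρ) :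
    (volume : Measure V).real ({y | 0 < u y} ∩ ball x (ρ / 2)) ≤
      (4 * L * ε + 4 * ε ^ 2) * (volume : Measure V).real ({y | 0 < u y} ∩ ball x ρ) := by
  have lψ : AC.Lip (psi x ρ ε) := ⟨_, psi_lip x ρ hε⟩
  have lv : AC.Lip (fun y => max (u y - psi x ρ ε y) 0) := (h.Lip.sub lψ).maxL (lip_const 0)
  have hK : ∀ y ∉ closedBall x ρ, max (u y - psi x ρ ε y) 0 = u y := by
    intro y hy
    rw [psi_zero ε (fun hb => hy (ball_subset_closedBall hb)), sub_zero, max_eq_left (h.nn y)]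
  have h1 := h.mini _ (fun y => le_max_right _ _) lv (closedBall x ρ) (isCompact_closedBall _ _) hΩ hK
  have m1 := meas_pos_set h.Lip.cont _ (measurableSet_ball (x := x) (ε := ρ))
  have m2 := meas_pos_set h.Lip.cont _ (measurableSet_ball (x := x) (ε := ρ / 2))
  have f1 : volume ({y | 0 < u y} ∩ ball x ρ) ≠ ⊤ :=
    ((measure_mono inter_subset_right).trans_lt measure_ball_lt_top).ne
  have f2 : volume ({y | 0 < u y} ∩ ball x (ρ / 2)) ≠ ⊤ :=
    ((measure_mono inter_subset_right).trans_lt measure_ball_lt_top).ne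
  have hC : 0 ≤ 4 * L * ε + 4 * ε ^ 2 := by positivity
  have hle : ∀ᵐ y : V, dens (fun y => max (u y - psi x ρ ε y) 0) y - dens u y ≤
      ({y | 0 < u y} ∩ ball x ρ).indicator (fun _ => 4 * L * ε + 4 * ε ^ 2) y -
      ({y | 0 < u y} ∩ ball x (ρ / 2)).indicator (fun _ => (1 : ℝ)) y := by
    filter_upwards [ae_grad_posPart (h.Lip.sub lψ), h.Lip.ae_diff, lψ.ae_diff] with y hy hd hd'
    unfold dens
    beta_reduce
    rw [hy]
    split_ifs with hpos
    · have hup : 0 < u y := by linarith [psi_nonneg x ρ hε y]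
      have hnb : y ∉ ({y | 0 < u y} ∩ ball x (ρ / 2)) := by
        rintro ⟨_, hb⟩
        rw [psi_eq hρ ε hb] at hpos
        linarith [hu y hb]
      rw [indicator_of_notMem hnb, pos1_of_pos hup, pos1_of_pos (lt_max_of_lt_left hpos),
        grad_sub hd hd']
      by_cases hb : y ∈ ball x ρ
      · have hmem : y ∈ ({y | 0 < u y} ∩ ball x ρ) := ⟨hup, hb⟩
        rw [indicator_of_mem hmem]
        have g1 := grad_le h.lip y
        have g2 := grad_le (psi_lip x ρ hε) y
        rw [Real.coe_toNNReal _ (by positivity)] at g2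
        have g3 := neg_le_of_abs_le (abs_real_inner_le_norm (gradient u y) (gradient (psi x ρ ε) y))
        have g4 : ‖gradient u y‖ * ‖gradient (psi x ρ ε) y‖ ≤ L * (2 * ε) :=
          mul_le_mul g1 g2 (norm_nonneg _) L.2
        have g5 : ‖gradient (psi x ρ ε) y‖ ^ 2 ≤ (2 * ε) ^ 2 := pow_le_pow_left₀ (norm_nonneg _) g2 2
        rw [norm_sub_sq_real]
        nlinarith
      · have hg : gradient (psi x ρ ε) y = 0 := grad_zero_of_min fun z => by
          rw [psi_zero ε hb]; exact psi_nonneg x ρ hε z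
        rw [hg, indicator_of_notMem (fun hc => hb hc.2)]
        simp
    · have i1 : 0 ≤ ({y | 0 < u y} ∩ ball x ρ).indicator (fun _ => 4 * L * ε + 4 * ε ^ 2) y :=
        indicator_nonneg (fun _ _ => hC) y
      have i2 : ({y | 0 < u y} ∩ ball x (ρ / 2)).indicator (fun _ => (1 : ℝ)) y ≤ pos1 (u y) := by
        by_cases hm : y ∈ ({y | 0 < u y} ∩ ball x (ρ / 2))
        · rw [indicator_of_mem hm, pos1_of_pos hm.1]
        · rw [indicator_of_notMem hm]; exact pos1_nonneg _
      rw [max_eq_right (not_lt.1 hpos), pos1_of_nonpos le_rfl, norm_zero]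
      nlinarith [sq_nonneg ‖gradient u y‖]
  have i1 : Integrable (({y | 0 < u y} ∩ ball x ρ).indicator
      (fun _ => 4 * (L : ℝ) * ε + 4 * ε ^ 2)) := (integrable_indicator_iff m1).2 (integrableOn_const f1)
  have i2 : Integrable (({y | 0 < u y} ∩ ball x (ρ / 2)).indicator (fun _ => (1 : ℝ))) :=
    (integrable_indicator_iff m2).2 (integrableOn_const f2)
  have h2 := integral_mono_ae (integrable_dens_sub h.Lip lv (isCompact_closedBall _ _) hK)
    (i1.sub i2) hle
  have h3 := h1.trans h2
  simp only [Pi.sub_apply] at h3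
  rw [integral_sub i1 i2, integral_indicator m1, integral_indicator m2, setIntegral_const,
    setIntegral_const, smul_eq_mul, smul_eq_mul] at h3
  linarith

theorem real_vol_mono {s t : Set V} (h : s ⊆ t) (ht : Bornology.IsBounded t) :
    (volume : Measure V).real s ≤ (volume : Measure V).real t :=
  measureReal_mono h ht.measure_lt_top.ne

/-- if the positivity set has small density then `u` is small. -/
theorem Mn.small {L : ℝ≥0} (hL : 0 < L) {Ω : Set V} {u : V → ℝ} (h : Mn L Ω u) {x : V} {ρ ε m : ℝ}
    (hρ : 0 < ρ) (hε : 0 < ε) (hεL : ε ≤ L) (hm : m < (ε / (2 * L)) ^ Module.finrank ℝ V)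
    (hs : (volume : Measure V).real ({y | 0 < u y} ∩ ball x ρ) ≤
      m * (volume : Measure V).real (ball x ρ)) :
    ∀ y ∈ closedBall x (ρ / 2), u y ≤ ε * (ρ / 2) := by
  intro y hy
  by_contra hc
  push Not at hc
  have hL' : (0 : ℝ) < L := hL
  set t := ε * (ρ / 2) / L with ht
  have htp : 0 < t := by positivity
  have ht2 : t ≤ ρ / 2 := by
    rw [ht, div_le_iff₀ hL']; nlinarith
  have hsub : ball y t ⊆ {y | 0 < u y} ∩ ball x ρ := by
    intro z hz
    constructor
    · have h1 := lw_abs h.lip y z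
      have h2 : dist y z < t := by rw [dist_comm]; exact hz
      have h3 : (L : ℝ) * dist y z < ε * (ρ / 2) := by
        rw [ht, lt_div_iff₀ hL'] at h2; linarith
      have h4 := (abs_le.1 h1).2
      show 0 < u z
      linarith
    · rw [mem_ball]
      have h5 := dist_triangle z y x
      have h6 : dist z y < t := hz
      have h7 : dist y x ≤ ρ / 2 := hy
      linarith
  have h1 := real_vol_mono hsub (isBounded_ball.subset inter_subset_right)
  rw [vol_ball y htp] at h1
  rw [vol_ball x hρ] at hs
  have hv := vol_ball_pos (0 : V) one_pos
  have e : t = ε / (2 * L) * ρ := by rw [ht]; field_simp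
  have h2 := h1.trans hs
  rw [e, mul_pow] at h2
  have hρp : 0 < ρ ^ Module.finrank ℝ V := by positivity
  have := mul_lt_mul_of_pos_right hm (mul_pos hρp hv)
  linarith

theorem exists_small_eps (L : ℝ) (δ : ℝ) (hδ : 0 < δ) (hL : 0 < L) :
    ∃ ε, 0 < ε ∧ ε ≤ L ∧ 4 * L * ε + 4 * ε ^ 2 ≤ δ := by
  refine ⟨min L (δ / (8 * L)), lt_min hL (by positivity), min_le_left _ _, ?_⟩
  set ε := min L (δ / (8 * L))
  have h1 : ε ≤ L := min_le_left _ _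
  have h2 : ε * (8 * L) ≤ δ := (le_div_iff₀ (by positivity)).1 (min_le_right _ _)
  have h3 : 0 < ε := lt_min hL (by positivity)
  nlinarith

theorem nd1 (V : Type*) [NormedAddCommGroup V] [InnerProductSpace ℝ V] [FiniteDimensional ℝ V]
    [MeasurableSpace V] [BorelSpace V] {L : ℝ≥0} (hL : 0 < L) :
    ∃ m : ℝ, 0 < m ∧ ∀ (Ω : Set V) (u : V → ℝ), Mn L Ω u → ∀ (x : V) (ρ : ℝ), 0 < ρ →
      closedBall x ρ ⊆ Ω → 0 < u x →
      m * (volume : Measure V).real (ball x ρ) <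
        (volume : Measure V).real ({y | 0 < u y} ∩ ball x ρ) := by
  have hL' : (0 : ℝ) < L := hL
  obtain ⟨ε, hε, hεL, hε2⟩ := exists_small_eps L ((1 / 4) ^ Module.finrank ℝ V) (by positivity) hL'
  refine ⟨(ε / (2 * L)) ^ Module.finrank ℝ V / 2, by positivity, ?_⟩
  set m := (ε / (2 * L)) ^ Module.finrank ℝ V / 2 with hm
  have hmlt : m < (ε / (2 * L)) ^ Module.finrank ℝ V := by
    rw [hm]; exact half_lt_self (by positivity)
  intro Ω u h x ρ hρ hΩ hux
  by_contra hc
  push Not at hc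
  have key : ∀ k : ℕ, (volume : Measure V).real ({y | 0 < u y} ∩ ball x (ρ / 4 ^ k)) ≤
      m * (volume : Measure V).real (ball x (ρ / 4 ^ k)) := by
    intro k
    induction k with
    | zero => simpa using hc
    | succ k ih =>
      set r := ρ / 4 ^ k with hr
      have hrp : 0 < r := by positivity
      have hrρ : r ≤ ρ := div_le_self hρ.le (one_le_pow₀ (by norm_num))
      have h1 := h.small hL hrp hε hεL hmlt ih
      have h2 := h.nd_step (x := x) (ρ := r / 2) (half_pos hrp) hε.le
        ((closedBall_subset_closedBall (by linarith)).trans hΩ)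
        (fun y hy => h1 y (ball_subset_closedBall (ball_subset_ball (by linarith) hy)))
      have e : ρ / 4 ^ (k + 1) = r / 2 / 2 := by rw [hr, pow_succ]; field_simp; norm_num
      rw [e]
      have h3 := real_vol_mono (V := V) (s := {y | 0 < u y} ∩ ball x (r / 2))
        (t := {y | 0 < u y} ∩ ball x r)
        (inter_subset_inter_right _ (ball_subset_ball (by linarith)))
        (isBounded_ball.subset inter_subset_right)
      have e2 : r / 2 / 2 = (1 / 4) * r := by ring
      have e3 : (volume : Measure V).real (ball x (r / 2 / 2)) =
          (1 / 4) ^ Module.finrank ℝ V * (volume : Measure V).real (ball x r) := by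
        rw [vol_ball x hrp, vol_ball x (by positivity), e2, mul_pow, mul_assoc]
      rw [e3]
      calc _ ≤ _ := h2
        _ ≤ (1 / 4) ^ Module.finrank ℝ V * (m * (volume : Measure V).real (ball x r)) :=
          mul_le_mul hε2 (h3.trans ih) measureReal_nonneg (by positivity)
        _ = _ := by ring
  have hsmall : ∀ k : ℕ, u x ≤ ε * (ρ / 4 ^ k / 2) := fun k =>
    h.small hL (by positivity) hε hεL hmlt (key k) x (mem_closedBall_self (by positivity))
  have hlim : Tendsto (fun k : ℕ => ε * (ρ / 4 ^ k / 2)) atTop (𝓝 0) := by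
    have h0 : Tendsto (fun k : ℕ => (1 / 4 : ℝ) ^ k) atTop (𝓝 0) :=
      tendsto_pow_atTop_nhds_zero_of_lt_one (by norm_num) (by norm_num)
    have := h0.const_mul (ε * ρ / 2)
    rw [mul_zero] at this
    refine this.congr fun k => ?_
    rw [one_div, inv_pow]; field_simp
  exact absurd (ge_of_tendsto' hlim hsmall) (not_le.2 hux)

theorem nd2 (V : Type*) [NormedAddCommGroup V] [InnerProductSpace ℝ V] [FiniteDimensional ℝ V]
    [MeasurableSpace V] [BorelSpace V] {L : ℝ≥0} (hL : 0 < L) :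
    ∃ c : ℝ, 0 < c ∧ ∀ (Ω : Set V) (u : V → ℝ), Mn L Ω u → ∀ (x : V) (ρ : ℝ), 0 < ρ →
      ball x ρ ⊆ Ω → 0 < u x → ∃ y ∈ ball x ρ, c * ρ < u y := by
  obtain ⟨m, hm, hnd⟩ := nd1 V hL
  obtain ⟨ε, hε, -, hε2⟩ := exists_small_eps L (m * (1 / 2) ^ Module.finrank ℝ V) (by positivity) hL
  refine ⟨ε / 2, by positivity, fun Ω u h x ρ hρ hΩ hux => ?_⟩
  by_contra hc
  push Not at hc
  set r := ρ / 2 with hr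
  have hrp : 0 < r := by positivity
  have h2 := h.nd_step (x := x) hrp hε.le ((closedBall_subset_ball (by linarith)).trans hΩ)
    (fun y hy => (hc y (ball_subset_ball (by linarith) hy)).trans (by rw [hr]; linarith))
  have h3 := hnd Ω u h x (r / 2) (by positivity)
    ((closedBall_subset_ball (by linarith)).trans hΩ) hux
  have h4 := real_vol_mono (V := V) (s := {y | 0 < u y} ∩ ball x r) (t := ball x r)
        inter_subset_right isBounded_ball
  have e2 : r / 2 = (1 / 2) * r := by ring
  have e3 : (volume : Measure V).real (ball x (r / 2)) =
      (1 / 2) ^ Module.finrank ℝ V * (volume : Measure V).real (ball x r) := by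
    rw [vol_ball x hrp, vol_ball x (by positivity), e2, mul_pow, mul_assoc]
  rw [e3] at h3
  have h5 := h2.trans (mul_le_mul hε2 h4 measureReal_nonneg (by positivity))
  linarith

end AC

end Part3

section Part4
open scoped Topology RealInnerProductSpace
set_option linter.unusedSectionVars false

namespace AC

variable {V : Type*} [NormedAddCommGroup V] [InnerProductSpace ℝ V] [FiniteDimensional ℝ V]
  [MeasurableSpace V] [BorelSpace V]

/-! ### Growth away from the free boundary -/

theorem growth (V : Type*) [NormedAddCommGroup V] [InnerProductSpace ℝ V] [FiniteDimensional ℝ V]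
    [MeasurableSpace V] [BorelSpace V] {L : ℝ≥0} (hL : 0 < L) :
    ∃ c₀ c₂ C₁ : ℝ, 0 < c₀ ∧ 0 < c₂ ∧ c₂ ≤ 1 ∧ 0 < C₁ ∧ ∀ (R : ℝ) (u : V → ℝ),
      Mn L (ball (0 : V) R) u → u 0 = 0 → ∀ y : V, ‖y‖ < R / 2 → 0 < u y →
      ∃ d, 0 < d ∧ d ≤ C₁ * u y ∧ ball y d ⊆ {z | 0 < u z} ∩ ball (0 : V) R ∧
        c₂ * (volume : Measure V).real (ball y d) ≤
          (volume : Measure V).real ({z | (1 + c₀) * u y ≤ u z} ∩ ball y d) := by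
  have hL' : (0 : ℝ) < L := hL
  obtain ⟨c, hc, hnd⟩ := nd2 V hL
  set D := Module.finrank ℝ V with hD
  set C₁ := 2 ^ (D + 1) / c with hC₁
  have hC₁p : 0 < C₁ := by positivity
  set q := 1 / (4 * L * C₁) with hq
  have hqp : 0 < q := by positivity
  refine ⟨q ^ D / 4, min (q ^ D / (4 * L * C₁)) 1, C₁, by positivity, by positivity,
    min_le_right _ _, hC₁p, ?_⟩
  intro R u h hu0 y hy hs
  have hcu : Continuous u := h.Lip.cont
  have hZ : IsClosed {z | u z = 0} := isClosed_eq hcu continuous_const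
  have hZne : ({z | u z = 0} : Set V).Nonempty := ⟨0, hu0⟩
  obtain ⟨y', hy', hdist⟩ := hZ.exists_infDist_eq_dist hZne y
  set d := infDist y {z | u z = 0} with hd
  have hdp : 0 < d := by
    rw [hdist]
    refine dist_pos.2 fun he => ?_
    rw [he] at hs
    exact hs.ne' hy'
  have hdy : d ≤ ‖y‖ := by
    have := infDist_le_dist_of_mem (x := y) (s := {z | u z = 0}) (show (0 : V) ∈ _ from hu0)
    simpa using this
  have hsub : ball y d ⊆ {z | 0 < u z} ∩ ball (0 : V) R := by
    intro z hz
    constructor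
    · refine lt_of_le_of_ne (h.nn z) fun he => ?_
      have := infDist_le_dist_of_mem (x := y) (s := {z | u z = 0}) (show z ∈ _ from he.symm)
      rw [mem_ball, dist_comm] at hz
      exact absurd hz (not_lt.2 this)
    · rw [mem_ball_zero_iff]
      have h1 : ‖z‖ ≤ ‖z - y‖ + ‖y‖ := by simpa using norm_add_le (z - y) y
      have h2 : ‖z - y‖ < d := by simpa [dist_eq_norm] using hz
      linarith
  set s := u y with hsdef
  have hvd := vol_ball_pos y hdp
  have hv1 := vol_ball_pos (0 : V) one_pos
  have mv := h.wh.mv_eq h.Lip hdp hsub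
  have hdC : d ≤ C₁ * s := by
    obtain ⟨z, hz, hcz⟩ := hnd _ u h y (d / 2) (by positivity)
      ((ball_subset_ball (by linarith)).trans (hsub.trans inter_subset_right)) hs
    have hzb : ball z (d / 2) ⊆ ball y d := by
      apply ball_subset_ball'
      have : dist z y < d / 2 := hz
      linarith
    have mvz := h.wh.mv_eq h.Lip (half_pos hdp) (hzb.trans hsub)
    have hle : ∫ w in ball z (d / 2), u w ≤ ∫ w in ball y d, u w :=
      setIntegral_mono_set (Lip.integrableOn hcu _ _) (Filter.Eventually.of_forall h.nn)
        hzb.eventuallyLE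
    rw [← mvz, ← mv, vol_ball z (half_pos hdp), vol_ball y hdp, div_pow] at hle
    have hdD : 0 < d ^ D := by positivity
    have h2 : u z ≤ 2 ^ D * s := by
      have e1 : u z * (d ^ D / 2 ^ D * (volume : Measure V).real (ball (0 : V) 1)) =
        (u z / 2 ^ D) * (d ^ D * (volume : Measure V).real (ball (0 : V) 1)) := by ring
      rw [e1] at hle
      have := le_of_mul_le_mul_right hle (by positivity)
      rw [div_le_iff₀ (by positivity)] at this
      linarith
    rw [hC₁, div_mul_eq_mul_div, le_div_iff₀ hc, pow_succ]
    linarith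
  have hsd : s ≤ L * d := by
    have := lw_abs h.lip y y'
    rw [show u y' = 0 from hy', sub_zero, abs_of_pos hs, ← hdist] at this
    exact this
  refine ⟨d, hdp, hdC, hsub, ?_⟩
  set σ := s / (4 * L) with hσ
  have hσp : 0 < σ := by positivity
  have hσd : σ ≤ d := by
    rw [hσ, div_le_iff₀ (by positivity)]; nlinarith
  set p := y' + (σ / d) • (y - y') with hp
  have hpy' : dist p y' = σ := by
    rw [hp, dist_eq_norm, add_sub_cancel_left, norm_smul, ← dist_eq_norm, ← hdist,
      Real.norm_of_nonneg (by positivity)]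
    field_simp
  have hpy : dist p y = d - σ := by
    have e : p - y = -((1 - σ / d) • (y - y')) := by rw [hp]; module
    have hn : ‖y - y'‖ = d := by rw [hdist, dist_eq_norm]
    rw [dist_eq_norm, e, norm_neg, norm_smul, hn, Real.norm_of_nonneg]
    · field_simp
    · rw [sub_nonneg, div_le_one hdp]; exact hσd
  have hpb : ball p σ ⊆ ball y d := ball_subset_ball' (by linarith)
  have hpu : ∀ z ∈ ball p σ, u z ≤ s / 2 := by
    intro z hz
    have h1 := lw_abs h.lip z y'
    rw [show u y' = 0 from hy', sub_zero] at h1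
    have h2 : dist z y' ≤ 2 * σ := by
      have := dist_triangle z p y'
      have h3 : dist z p < σ := hz
      linarith
    have h4 : (L : ℝ) * (2 * σ) = s / 2 := by rw [hσ]; field_simp; norm_num
    have h5 := mul_le_mul_of_nonneg_left h2 L.2
    have h6 := (le_abs_self _).trans h1
    change (L : ℝ) * dist z y' ≤ L * (2 * σ) at h5
    linarith
  set A := {z | (1 + q ^ D / 4) * s ≤ u z} ∩ ball y d with hA
  have mA : MeasurableSet A := (isClosed_le continuous_const hcu).measurableSet.inter measurableSet_ball
  have fA : volume A ≠ ⊤ := ((measure_mono inter_subset_right).trans_lt measure_ball_lt_top).ne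
  have hqD : 0 < q ^ D := by positivity
  have hpt : ∀ z ∈ ball y d, u z - s ≤ q ^ D / 4 * s + A.indicator (fun _ => L * C₁ * s) z
      - (ball p σ).indicator (fun _ => s / 2) z := by
    intro z hz
    have n1 : 0 ≤ A.indicator (fun _ => L * C₁ * s) z := indicator_nonneg (fun _ _ => by positivity) z
    by_cases h1 : z ∈ ball p σ
    · rw [indicator_of_mem h1]
      have := hpu z h1
      have : 0 < q ^ D / 4 * s := by positivity
      linarith
    · rw [indicator_of_notMem h1]
      by_cases h2 : z ∈ A
      · rw [indicator_of_mem h2]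
        have h3 := (le_abs_self _).trans (lw_abs h.lip z y)
        have h4 : dist z y ≤ C₁ * s := (le_of_lt hz).trans hdC
        have h5 := mul_le_mul_of_nonneg_left h4 L.2
        change (L : ℝ) * dist z y ≤ L * (C₁ * s) at h5
        have : 0 < q ^ D / 4 * s := by positivity
        linarith
      · rw [indicator_of_notMem h2]
        have : ¬ (1 + q ^ D / 4) * s ≤ u z := fun hc => h2 ⟨hc, hz⟩
        linarith
  have i0 : IntegrableOn (fun _ : V => q ^ D / 4 * s) (ball y d) := Lip.integrableOn continuous_const _ _
  have i1 : IntegrableOn (A.indicator (fun _ => L * C₁ * s)) (ball y d) :=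
    ((integrable_indicator_iff mA).2 (integrableOn_const fA)).integrableOn
  have i2 : IntegrableOn ((ball p σ).indicator (fun _ => s / 2)) (ball y d) :=
    ((integrable_indicator_iff measurableSet_ball).2
      (integrableOn_const measure_ball_lt_top.ne)).integrableOn
  have i3 : IntegrableOn (fun _ : V => s) (ball y d) := Lip.integrableOn continuous_const _ _
  have i01 : IntegrableOn (fun x => q ^ D / 4 * s + A.indicator (fun _ => L * C₁ * s) x) (ball y d) :=
    i0.add i1
  have hint := setIntegral_mono_on ((Lip.integrableOn hcu y d).sub i3) ((i0.add i1).sub i2)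
    measurableSet_ball hpt
  simp only [Pi.add_apply, Pi.sub_apply] at hint
  rw [integral_sub (Lip.integrableOn hcu y d) i3, ← mv,
    integral_sub i01 i2] at hint
  rw [integral_add i0 i1, setIntegral_const, setIntegral_const,
    setIntegral_indicator mA, setIntegral_indicator measurableSet_ball, setIntegral_const,
    setIntegral_const, inter_eq_self_of_subset_right inter_subset_right,
    inter_eq_self_of_subset_right hpb] at hint
  simp only [smul_eq_mul] at hint
  have hσvol : q ^ D * (volume : Measure V).real (ball y d) ≤ (volume : Measure V).real (ball p σ) := by
    rw [vol_ball p hσp, vol_ball y hdp, ← mul_assoc, ← mul_pow]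
    refine mul_le_mul_of_nonneg_right (pow_le_pow_left₀ (by positivity) ?_ D) hv1.le
    rw [hq, hσ, div_mul_eq_mul_div, one_mul, div_le_div_iff₀ (by positivity) (by positivity)]
    nlinarith
  have hfin : q ^ D / (4 * L * C₁) * (volume : Measure V).real (ball y d)
      ≤ (volume : Measure V).real A := by
    rw [div_mul_eq_mul_div, div_le_iff₀ (by positivity)]
    set vA := (volume : Measure V).real A
    set vB := (volume : Measure V).real (ball y d)
    set vp := (volume : Measure V).real (ball p σ)
    have h3 : s * (q ^ D * vB) ≤ s * (vA * (4 * L * C₁)) := by nlinarith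
    exact le_of_mul_le_mul_left h3 hs
  exact (mul_le_mul_of_nonneg_right (min_le_left _ _) hvd.le).trans hfin

/-! ### Boundary Harnack -/

/-- decay step for the positive part -/
theorem bh_decay {L : ℝ≥0} (hL : 0 < L) {c : ℝ} (hc : 0 < c) (hcL : c ≤ L) {R : ℝ} {u f : V → ℝ}
    (h : Mn L (ball (0 : V) R) u)
    (hnd : ∀ (x : V) (ρ : ℝ), 0 < ρ → ball x ρ ⊆ ball (0 : V) R → 0 < u x → ∃ y ∈ ball x ρ, c * ρ < u y)
    (lf : AC.Lip f) (wf : WH ({x | 0 < u x} ∩ ball (0 : V) R) f)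
    (hfu : ∀ x ∈ ball (0 : V) R, u x = 0 → f x ≤ 0)
    {t ρ a : ℝ} (ht : 0 < t) (hρ : ρ = 4 * t / c) (ha : 0 ≤ a) {y : V} (hyR : ball y ρ ⊆ ball (0 : V) R)
    (h1 : ∀ z ∈ ball y ρ, f z ≤ a) (h2 : ∀ z ∈ ball y ρ, t ≤ u z → f z ≤ 0) :
    f y ≤ (1 - (c / (4 * L)) ^ Module.finrank ℝ V) * a := by
  have hL' : (0 : ℝ) < L := hL
  have hρp : 0 < ρ := by rw [hρ]; positivity
  set D := Module.finrank ℝ V with hD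
  have hq1 : (c / (4 * L)) ^ D ≤ 1 := by
    refine pow_le_one₀ (by positivity) ?_
    rw [div_le_one (by positivity)]; linarith
  have hrhs : 0 ≤ (1 - (c / (4 * L)) ^ D) * a := mul_nonneg (by linarith) ha
  have hfp : ∀ z ∈ ball y ρ, 0 < f z → z ∈ {x | 0 < u x} ∩ ball (0 : V) R := by
    intro z hz hfz
    refine ⟨lt_of_le_of_ne (h.nn z) fun he => ?_, hyR hz⟩
    exact absurd (hfu z (hyR hz) he.symm) (not_le.2 hfz)
  by_cases hfy : f y ≤ 0
  · exact hfy.trans hrhs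
  push Not at hfy
  have huy : 0 < u y := (hfp y (mem_ball_self hρp) hfy).1
  obtain ⟨z, hz, hcz⟩ := hnd y (ρ / 2) (half_pos hρp) ((ball_subset_ball (by linarith)).trans hyR) huy
  have e1 : c * (ρ / 2) = 2 * t := by rw [hρ]; field_simp; norm_num
  rw [e1] at hcz
  have htL : t / L ≤ ρ / 2 := by
    rw [hρ, div_le_div_iff₀ hL' two_pos, div_mul_eq_mul_div, le_div_iff₀ hc]
    nlinarith
  have hzb : ball z (t / L) ⊆ ball y ρ := by
    apply ball_subset_ball'
    have : dist z y < ρ / 2 := hz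
    linarith
  have hzf : ∀ w ∈ ball z (t / L), f w ≤ 0 := by
    intro w hw
    refine h2 w (hzb hw) ?_
    have h3 := (le_abs_self _).trans (lw_abs h.lip z w)
    have h4 : dist z w < t / L := by rw [dist_comm]; exact hw
    rw [lt_div_iff₀ hL'] at h4
    nlinarith
  have hsm := wf.sub_mean lf hρp hfp
  have hlf := (lf.maxL (lip_const 0)).cont
  have hpt : ∀ w ∈ ball y ρ, max (f w) 0 ≤ a - (ball z (t / L)).indicator (fun _ => a) w := by
    intro w hw
    by_cases hwz : w ∈ ball z (t / L)
    · rw [indicator_of_mem hwz, max_eq_right (hzf w hwz), sub_self]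
    · rw [indicator_of_notMem hwz, sub_zero]; exact max_le (h1 w hw) ha
  have i0 : IntegrableOn (fun _ : V => a) (ball y ρ) := Lip.integrableOn continuous_const _ _
  have i2 : IntegrableOn ((ball z (t / L)).indicator (fun _ => a)) (ball y ρ) :=
    ((integrable_indicator_iff measurableSet_ball).2
      (integrableOn_const measure_ball_lt_top.ne)).integrableOn
  have hint := hsm.trans (setIntegral_mono_on (Lip.integrableOn hlf _ _) (i0.sub i2)
    measurableSet_ball hpt)
  simp only [Pi.sub_apply] at hint
  rw [integral_sub i0 i2, setIntegral_indicator measurableSet_ball, setIntegral_const,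
    setIntegral_const, inter_eq_self_of_subset_right hzb, max_eq_left hfy.le, smul_eq_mul,
    smul_eq_mul, vol_ball y hρp, vol_ball z (by positivity)] at hint
  have hv1 := vol_ball_pos (0 : V) one_pos
  have e2 : t / L = c / (4 * L) * ρ := by rw [hρ]; field_simp
  rw [e2, mul_pow] at hint
  have hρD : 0 < ρ ^ D := by positivity
  refine le_of_mul_le_mul_right (a := ρ ^ D * (volume : Measure V).real (ball (0 : V) 1)) ?_
    (by positivity)
  refine hint.trans (le_of_eq ?_)
  ring

theorem bh {L : ℝ≥0} (hL : 0 < L) {R : ℝ} (hR : 0 < R) {u h : V → ℝ}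
    (hu : Mn L (ball (0 : V) R) u) (hu0 : u 0 = 0) (lh : AC.Lip h)
    (h0 : ∀ x ∈ ball (0 : V) R, 0 ≤ h x) (wh : WH ({x | 0 < u x} ∩ ball (0 : V) R) h)
    (hpos : ∀ x ∈ ball (0 : V) R, 0 < u x → 0 < h x) :
    ∃ r₀ c : ℝ, 0 < r₀ ∧ r₀ ≤ R ∧ 0 < c ∧ ∀ x ∈ ball (0 : V) r₀, c * u x ≤ h x := by
  have hL' : (0 : ℝ) < L := hL
  set D := Module.finrank ℝ V with hD
  obtain ⟨c₀, c₂, C₁, hc₀, hc₂, hc₂1, hC₁, hgr⟩ := growth V hL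
  obtain ⟨c, hc, hcL, hnd⟩ : ∃ c : ℝ, 0 < c ∧ c ≤ L ∧ ∀ (x : V) (ρ : ℝ), 0 < ρ →
      ball x ρ ⊆ ball (0 : V) R → 0 < u x → ∃ y ∈ ball x ρ, c * ρ < u y := by
    obtain ⟨c, hc, hnd⟩ := nd2 V hL
    refine ⟨min c L, lt_min hc hL', min_le_right _ _, fun x ρ hρ hb hx => ?_⟩
    obtain ⟨y, hy, hy'⟩ := hnd _ u hu x ρ hρ hb hx
    exact ⟨y, hy, (mul_le_mul_of_nonneg_right (min_le_left _ _) hρ.le).trans_lt hy'⟩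
  set θ := 1 - (c / (4 * L)) ^ D with hθ
  have hq0 : 0 < (c / (4 * L)) ^ D := by positivity
  have hq1 : (c / (4 * L)) ^ D ≤ 1 := by
    refine pow_le_one₀ (by positivity) ?_
    rw [div_le_one (by positivity)]; linarith
  have hθ0 : 0 ≤ θ := by linarith
  have hθ1 : θ < 1 := by linarith
  obtain ⟨N, hN⟩ := exists_pow_lt_of_lt_one (half_pos hc₂) hθ1
  have hN0 : 0 < N := by
    rcases Nat.eq_zero_or_pos N with h | h
    · rw [h, pow_zero] at hN; linarith
    · exact h
  set lam := 1 / (1 + c₀) with hlam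
  have hlam0 : 0 < lam := by positivity
  have hlam1 : lam < 1 := by rw [hlam, div_lt_one (by positivity)]; linarith
  obtain ⟨δ, hδ, hδ1, hδ2⟩ : ∃ δ : ℝ, 0 < δ ∧ N * (4 * δ / c) ≤ 1 - lam ∧ C₁ * δ ≤ 1 - lam := by
    have hN' : (0 : ℝ) < N := by exact_mod_cast hN0
    refine ⟨min ((1 - lam) * c / (4 * N)) ((1 - lam) / C₁),
      lt_min (div_pos (mul_pos (by linarith) hc) (by positivity)) (div_pos (by linarith) hC₁), ?_, ?_⟩
    · have := min_le_left ((1 - lam) * c / (4 * N)) ((1 - lam) / C₁)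
      rw [le_div_iff₀ (by positivity)] at this
      rw [← mul_div_assoc, div_le_iff₀ hc]
      linarith
    · have := min_le_right ((1 - lam) * c / (4 * N)) ((1 - lam) / C₁)
      rw [le_div_iff₀ hC₁] at this
      linarith
  -- the induction step
  have step : ∀ (C : ℝ), 0 ≤ C → ∀ (x : V) (r a b : ℝ), 0 < r → ball x r ⊆ ball (0 : V) (R / 2) → 0 ≤ a →
      0 < b → a ≤ c₂ / 2 * b → (∀ y ∈ ball x r, u y - C * h y ≤ a) →
      (∀ y ∈ ball x r, δ * r ≤ u y → u y - C * h y ≤ -b) →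
      (∀ y ∈ ball x (lam * r), u y - C * h y ≤ θ ^ N * a) ∧
      (∀ y ∈ ball x (lam * r), δ * (lam * r) ≤ u y → u y - C * h y ≤ -(c₂ / 2 * b)) := by
    intro C hC x r a b hr hxR ha hb hab hS1 hS2
    have lf : AC.Lip (fun y => u y - C * h y) := hu.Lip.sub (lh.const_mul C)
    have wf : WH ({x | 0 < u x} ∩ ball (0 : V) R) (fun y => u y - C * h y) :=
      hu.wh.sub_mul wh hu.Lip lh C
    have hxR' : ball x r ⊆ ball (0 : V) R := hxR.trans (ball_subset_ball (by linarith))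
    have hfu : ∀ x ∈ ball (0 : V) R, u x = 0 → u x - C * h x ≤ 0 := by
      intro x hx hux
      rw [hux]
      have := mul_nonneg hC (h0 x hx)
      linarith
    constructor
    · set ρ := 4 * (δ * r) / c with hρ
      have hρp : 0 < ρ := by positivity
      have dec : ∀ j : ℕ, ∀ y ∈ ball x (r - j * ρ), u y - C * h y ≤ θ ^ j * a := by
        intro j
        induction j with
        | zero => intro y hy; simpa using hS1 y (by simpa using hy)
        | succ j ih =>
          intro y hy
          have hyb : ball y ρ ⊆ ball x (r - j * ρ) := by
            apply ball_subset_ball'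
            have : dist y x < r - ((j + 1 : ℕ) : ℝ) * ρ := hy
            push_cast at this
            linarith
          have hjr : ball x (r - j * ρ) ⊆ ball x r :=
            ball_subset_ball (by have : (0 : ℝ) ≤ j * ρ := by positivity
                                 linarith)
          have := bh_decay hL hc hcL hu hnd lf wf hfu (t := δ * r) (by positivity) hρ
            (a := θ ^ j * a) (by positivity) (y := y) (hyb.trans (hjr.trans hxR'))
            (fun z hz => ih z (hyb hz))
            (fun z hz hz' => (hS2 z (hjr (hyb hz)) hz').trans (by linarith))
          rw [pow_succ']
          linarith
      intro y hy
      refine dec N y (ball_subset_ball ?_ hy)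
      have e : (N : ℝ) * ρ = N * (4 * δ / c) * r := by rw [hρ]; ring
      rw [e]
      nlinarith
    · intro y hy hy2
      have hlr : lam * r ≤ r := by nlinarith
      have hyr : y ∈ ball x r := ball_subset_ball hlr hy
      by_cases hbig : δ * r ≤ u y
      · refine (hS2 y hyr hbig).trans ?_
        nlinarith
      push Not at hbig
      have huy : 0 < u y := lt_of_lt_of_le (by positivity) hy2
      obtain ⟨d, hd, hdC, hdsub, hdvol⟩ := hgr R u hu hu0 y (mem_ball_zero_iff.1 (hxR hyr)) huy
      have hdb : ball y d ⊆ ball x r := by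
        apply ball_subset_ball'
        have h1 : dist y x < lam * r := hy
        have h2 : d ≤ C₁ * δ * r := hdC.trans (by nlinarith)
        nlinarith
      have mv := wf.mv_eq lf hd hdsub
      set A := {z | (1 + c₀) * u y ≤ u z} ∩ ball y d with hA
      have mA : MeasurableSet A :=
        (isClosed_le continuous_const hu.Lip.cont).measurableSet.inter measurableSet_ball
      have fA : volume A ≠ ⊤ := ((measure_mono inter_subset_right).trans_lt measure_ball_lt_top).ne
      have hpt : ∀ z ∈ ball y d, u z - C * h z ≤ a - A.indicator (fun _ => b) z := by
        intro z hz
        by_cases hzA : z ∈ A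
        · rw [indicator_of_mem hzA]
          have h3 : δ * r ≤ u z := by
            refine le_trans ?_ hzA.1
            have h4 := mul_le_mul_of_nonneg_left hy2 (show 0 ≤ 1 + c₀ by linarith)
            have e : (1 + c₀) * (δ * (lam * r)) = δ * r := by rw [hlam]; field_simp
            linarith
          linarith [hS2 z (hdb hz) h3]
        · rw [indicator_of_notMem hzA, sub_zero]; exact hS1 z (hdb hz)
      have i0 : IntegrableOn (fun _ : V => a) (ball y d) := Lip.integrableOn continuous_const _ _
      have i2 : IntegrableOn (A.indicator (fun _ => b)) (ball y d) :=
        ((integrable_indicator_iff mA).2 (integrableOn_const fA)).integrableOn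
      have hint := setIntegral_mono_on (Lip.integrableOn lf.cont y d) (i0.sub i2) measurableSet_ball hpt
      simp only [Pi.sub_apply] at hint
      rw [← mv, integral_sub i0 i2, setIntegral_indicator mA, setIntegral_const, setIntegral_const,
        inter_eq_self_of_subset_right inter_subset_right, smul_eq_mul, smul_eq_mul] at hint
      have hvd := vol_ball_pos y hd
      have h5 : (u y - C * h y) * (volume : Measure V).real (ball y d)
          ≤ (a - c₂ * b) * (volume : Measure V).real (ball y d) := by
        have := mul_le_mul_of_nonneg_right hdvol hb.le
        linarith
      have h6 := le_of_mul_le_mul_right h5 hvd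
      linarith
  -- the initial step
  set r₀ := R / 8 with hr₀
  have hr₀p : 0 < r₀ := by positivity
  obtain ⟨κ₀, hκ₀, hκ₀'⟩ := cpt_pos lh.cont (K := closedBall (0 : V) (2 * r₀) ∩ {y | δ * r₀ ≤ u y})
    ((isCompact_closedBall _ _).inter_right (isClosed_le continuous_const hu.Lip.cont))
    (fun y hy => hpos y (closedBall_subset_ball (by linarith) hy.1)
      (lt_of_lt_of_le (by positivity) hy.2))
  set a₀ := L * (2 * r₀) with ha₀
  have ha₀p : 0 < a₀ := by positivity
  set b₀ := a₀ / (c₂ / 2) with hb₀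
  have hb₀p : 0 < b₀ := by positivity
  set C := (a₀ + b₀) / κ₀ with hC
  have hCp : 0 < C := by positivity
  refine ⟨r₀, 1 / C, hr₀p, by linarith, by positivity, fun x hx => ?_⟩
  have hxn : ‖x‖ < r₀ := by simpa using hx
  have hall : ∀ k : ℕ, ∃ b, 0 < b ∧ (θ ^ N) ^ k * a₀ ≤ c₂ / 2 * b ∧
      (∀ y ∈ ball x (lam ^ k * r₀), u y - C * h y ≤ (θ ^ N) ^ k * a₀) ∧
      (∀ y ∈ ball x (lam ^ k * r₀), δ * (lam ^ k * r₀) ≤ u y → u y - C * h y ≤ -b) := by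
    intro k
    induction k with
    | zero =>
      refine ⟨b₀, hb₀p, by rw [hb₀, mul_div_cancel₀ _ (by positivity)]; simp, ?_, ?_⟩
      · intro y hy
        rw [pow_zero, one_mul] at hy ⊢
        have hyn : ‖y‖ < 2 * r₀ := by
          have h1 : ‖y‖ ≤ ‖y - x‖ + ‖x‖ := by simpa using norm_add_le (y - x) x
          have h2 : ‖y - x‖ < r₀ := by simpa [dist_eq_norm] using hy
          linarith
        have h3 := (le_abs_self _).trans (lw_abs hu.lip y 0)
        rw [hu0, dist_zero_right] at h3
        have h4 := mul_nonneg hCp.le (h0 y (by rw [mem_ball_zero_iff]; linarith))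
        have h5 := mul_le_mul_of_nonneg_left hyn.le hL'.le
        linarith
      · intro y hy hy2
        rw [pow_zero, one_mul] at hy hy2
        have hyn : ‖y‖ < 2 * r₀ := by
          have h1 : ‖y‖ ≤ ‖y - x‖ + ‖x‖ := by simpa using norm_add_le (y - x) x
          have h2 : ‖y - x‖ < r₀ := by simpa [dist_eq_norm] using hy
          linarith
        have h3 := (le_abs_self _).trans (lw_abs hu.lip y 0)
        rw [hu0, dist_zero_right] at h3
        have h5 := mul_le_mul_of_nonneg_left hyn.le hL'.le
        have h6 := hκ₀' y ⟨by rw [mem_closedBall_zero_iff]; exact hyn.le, hy2⟩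
        have h7 := mul_le_mul_of_nonneg_left h6 hCp.le
        have h8 : C * κ₀ = a₀ + b₀ := by rw [hC]; field_simp
        linarith
    | succ k ih =>
      obtain ⟨b, hb, hab, hS1, hS2⟩ := ih
      have hlk : lam ^ k * r₀ ≤ r₀ := mul_le_of_le_one_left hr₀p.le (pow_le_one₀ hlam0.le hlam1.le)
      have hsub : ball x (lam ^ k * r₀) ⊆ ball (0 : V) (R / 2) := by
        apply ball_subset_ball'
        rw [dist_zero_right]
        linarith
      obtain ⟨h1, h2⟩ := step C hCp.le x (lam ^ k * r₀) ((θ ^ N) ^ k * a₀) b (by positivity) hsub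
        (by positivity) hb hab hS1 hS2
      have e : lam ^ (k + 1) * r₀ = lam * (lam ^ k * r₀) := by ring
      have e2 : (θ ^ N) ^ (k + 1) * a₀ = θ ^ N * ((θ ^ N) ^ k * a₀) := by ring
      rw [e, e2]
      refine ⟨c₂ / 2 * b, by positivity, ?_, h1, h2⟩
      exact mul_le_mul hN.le hab (by positivity) (by positivity)
  have hθN : θ ^ N < 1 := pow_lt_one₀ hθ0 hθ1 hN0.ne'
  have hlim : Tendsto (fun k : ℕ => (θ ^ N) ^ k * a₀) atTop (𝓝 0) := by
    have := (tendsto_pow_atTop_nhds_zero_of_lt_one (pow_nonneg hθ0 N) hθN).mul_const a₀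
    rwa [zero_mul] at this
  have hfx : u x - C * h x ≤ 0 := ge_of_tendsto' hlim fun k => by
    obtain ⟨b, -, -, h1, -⟩ := hall k
    exact h1 x (mem_ball_self (by positivity))
  rw [one_div, inv_mul_le_iff₀ hCp]
  linarith

end AC

end Part4

section Part5
open scoped Topology RealInnerProductSpace
set_option linter.unusedSectionVars false
namespace AC
variable {V : Type*} [NormedAddCommGroup V] [InnerProductSpace ℝ V] [FiniteDimensional ℝ V]
  [MeasurableSpace V] [BorelSpace V]

/-! ### Rescaling -/

noncomputable def resc (z : V) (t : ℝ) (u : V → ℝ) : V → ℝ := fun x => t⁻¹ * u (z + t • x)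

theorem grad_resc (z : V) {t : ℝ} (ht : 0 < t) (u : V → ℝ) (x : V) :
    gradient (resc z t u) x = gradient u (z + t • x) := by
  apply (InnerProductSpace.toDual ℝ V).injective
  simp only [gradient, LinearIsometryEquiv.apply_symm_apply]
  unfold resc
  have e : (fun x => t⁻¹ * u (z + t • x)) = t⁻¹ • (fun x => (fun y => u (z + y)) (t • x)) := by
    ext; simp
  rw [e, fderiv_const_smul_field, Pi.smul_apply, fderiv_comp_smul (f := fun y => u (z + y)), fderiv_comp_add_left, smul_smul, inv_mul_cancel₀ ht.ne', one_smul]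

theorem dens_resc (z : V) {t : ℝ} (ht : 0 < t) (u : V → ℝ) (x : V) :
    dens (resc z t u) x = dens u (z + t • x) := by
  unfold dens
  rw [grad_resc z ht]
  congr 1
  apply pos1_congr
  unfold resc
  exact mul_pos_iff_of_pos_left (inv_pos.2 ht)

theorem resc_lip {K : ℝ≥0} (z : V) {t : ℝ} (ht : 0 < t) {u : V → ℝ} (h : LipschitzWith K u) :
    LipschitzWith K (resc z t u) := by
  refine LipschitzWith.of_dist_le_mul fun x y => ?_
  rw [Real.dist_eq]
  unfold resc
  rw [← mul_sub, abs_mul, abs_of_pos (inv_pos.2 ht)]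
  have := lw_abs h (z + t • x) (z + t • y)
  rw [dist_add_left, dist_smul₀, Real.norm_of_nonneg ht.le] at this
  calc t⁻¹ * |u (z + t • x) - u (z + t • y)| ≤ t⁻¹ * (K * (t * dist x y)) :=
        mul_le_mul_of_nonneg_left this (inv_pos.2 ht).le
    _ = K * dist x y := by field_simp

theorem resc_inv (z : V) {t : ℝ} (ht : 0 < t) (v : V → ℝ) :
    resc z t (resc (-(t⁻¹ • z)) t⁻¹ v) = v := by
  ext x
  unfold resc
  rw [inv_inv, ← mul_assoc, inv_mul_cancel₀ ht.ne', one_mul, smul_add, smul_smul,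
    inv_mul_cancel₀ ht.ne', one_smul, neg_add_cancel_left]

theorem Mn.resc {L : ℝ≥0} {Ω : Set V} {u : V → ℝ} (h : Mn L Ω u) (z : V) {t : ℝ} (ht : 0 < t) :
    Mn L {x | z + t • x ∈ Ω} (resc z t u) := by
  refine ⟨fun x => mul_nonneg (inv_pos.2 ht).le (h.nn _), resc_lip z ht h.lip, ?_⟩
  intro v hv lv K hK hKΩ hvu
  set v' := AC.resc (-(t⁻¹ • z)) t⁻¹ v with hv'
  have hvv : AC.resc z t v' = v := resc_inv z ht v
  have hc : Continuous (fun x : V => z + t • x) := by fun_prop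
  have hm := h.mini v' (fun x => mul_nonneg (by positivity) (hv _))
    (by obtain ⟨A, hA⟩ := lv; exact ⟨A, resc_lip _ (inv_pos.2 ht) hA⟩)
    ((fun x => z + t • x) '' K) (hK.image hc) (by rintro _ ⟨x, hx, rfl⟩; exact hKΩ hx)
    (fun x hx => by
      have h1 : -(t⁻¹ • z) + t⁻¹ • x ∉ K := fun hh => hx ⟨_, hh, by
        simp only [smul_add, smul_neg, smul_smul, mul_inv_cancel₀ ht.ne', one_smul]; abel⟩
      rw [hv']
      unfold AC.resc
      rw [hvu _ h1]
      unfold AC.resc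
      simp only [smul_add, smul_neg, smul_smul, mul_inv_cancel₀ ht.ne', one_smul, inv_inv, ← mul_assoc]
      rw [one_mul]; congr 1; abel)
  rw [← hvv]
  simp only [dens_resc z ht]
  have e := Measure.integral_comp_smul (volume : Measure V) (fun y => dens v' (z + y) - dens u (z + y)) t
  rw [e, integral_add_left_eq_self (μ := (volume : Measure V)) (fun y => dens v' y - dens u y) z]
  exact smul_nonneg (abs_nonneg _) hm

/-! ### Components -/

theorem lip_indicator {L : ℝ≥0} {u : V → ℝ} (hu : LipschitzWith L u) {S : Set V}
    (hS : ∀ x ∈ frontier S, u x = 0) : LipschitzWith L (S.indicator u) := by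
  have key : ∀ x ∈ S, ∀ y ∉ S, |u x| ≤ L * dist x y := by
    intro x hx y hy
    obtain ⟨z, hz, hzf⟩ : ∃ z ∈ segment ℝ x y, z ∈ frontier S := by
      have hpc : IsPreconnected (segment ℝ x y) := (convex_segment x y).isPreconnected
      by_contra hcon
      push Not at hcon
      have hcov : segment ℝ x y ⊆ interior S ∪ (closure S)ᶜ := by
        intro z hz
        have := hcon z hz
        rw [frontier, Set.mem_sdiff] at this
        by_cases h1 : z ∈ closure S
        · left; by_contra h2; exact this ⟨h1, h2⟩
        · exact Or.inr h1
      obtain ⟨z, -, hz1, hz2⟩ := hpc _ _ isOpen_interior isClosed_closure.isOpen_compl hcov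
        ⟨x, left_mem_segment _ _ _, by
          rcases hcov (left_mem_segment ℝ x y) with h | h
          · exact h
          · exact absurd (subset_closure hx) h⟩
        ⟨y, right_mem_segment _ _ _, by
          rcases hcov (right_mem_segment ℝ x y) with h | h
          · exact absurd (interior_subset h) hy
          · exact h⟩
      exact hz2 (subset_closure (interior_subset hz1))
    have h1 := lw_abs hu x z
    rw [hS z hzf, sub_zero] at h1
    have h2 : dist x z ≤ dist x y := by
      have := dist_add_dist_of_mem_segment hz
      linarith [dist_nonneg (x := z) (y := y)]
    exact h1.trans (mul_le_mul_of_nonneg_left h2 L.2)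
  refine LipschitzWith.of_dist_le_mul fun x y => ?_
  rw [Real.dist_eq]
  by_cases hx : x ∈ S <;> by_cases hy : y ∈ S
  · rw [indicator_of_mem hx, indicator_of_mem hy]; exact lw_abs hu x y
  · rw [indicator_of_mem hx, indicator_of_notMem hy, sub_zero]; exact key x hx y hy
  · rw [indicator_of_notMem hx, indicator_of_mem hy, zero_sub, abs_neg, dist_comm]; exact key y hy x hx
  · rw [indicator_of_notMem hx, indicator_of_notMem hy, sub_zero, abs_zero]; positivity

theorem Mn.component {L : ℝ≥0} {Ω : Set V} {u : V → ℝ} (h : Mn L Ω u) {S : Set V}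
    (hS : ∀ x ∈ frontier S, u x = 0) : Mn L Ω (S.indicator u) := by
  have l1 : LipschitzWith L (S.indicator u) := lip_indicator h.lip hS
  have l2 : LipschitzWith L (Sᶜ.indicator u) := lip_indicator h.lip (by rwa [frontier_compl])
  refine ⟨indicator_nonneg fun x _ => h.nn x, l1, ?_⟩
  intro v hv lv K hK hKΩ hvu
  set u1 := S.indicator u with hu1
  set u2 := Sᶜ.indicator u with hu2
  have n1 : ∀ x, 0 ≤ u1 x := indicator_nonneg fun x _ => h.nn x
  have n2 : ∀ x, 0 ≤ u2 x := indicator_nonneg fun x _ => h.nn x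
  have hmax : (fun y => max (u1 y) (u2 y)) = u := by
    ext x
    by_cases hx : x ∈ S
    · simp [hu1, hu2, hx, h.nn x]
    · simp [hu1, hu2, hx, h.nn x]
  have hmin : ∀ y, min (u1 y) (u2 y) = 0 := by
    intro x
    by_cases hx : x ∈ S
    · simp [hu1, hu2, hx, h.nn x]
    · simp [hu1, hu2, hx, h.nn x]
  have hm := h.mini (fun y => max (v y) (u2 y)) (fun x => (hv x).trans (le_max_left _ _))
    (lv.maxL ⟨L, l2⟩) K hK hKΩ (fun x hx => by
      rw [← hmax]; simp only; rw [hvu x hx])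
  refine hm.trans (integral_mono_ae (integrable_dens_sub h.Lip (lv.maxL ⟨L, l2⟩) hK (fun x hx => by
      rw [← hmax]; simp only; rw [hvu x hx])) (integrable_dens_sub ⟨L, l1⟩ lv hK hvu) ?_)
  have z0 : ∀ x, dens (fun y => min (u1 y) (u2 y)) x = 0 := by
    intro x
    have : (fun y => min (u1 y) (u2 y)) = fun _ => 0 := funext hmin
    rw [this]; unfold dens; rw [grad_const, pos1_of_nonpos le_rfl]; simp
  filter_upwards [ae_dens_max_min (⟨L, l1⟩ : AC.Lip u1) (⟨L, l2⟩ : AC.Lip u2),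
    ae_dens_max_min lv (⟨L, l2⟩ : AC.Lip u2)] with x h1 h2
  rw [z0, hmax] at h1
  have := dens_nonneg (fun y => min (v y) (u2 y)) x
  linarith

end AC

end Part5

section Part6
open scoped Topology RealInnerProductSpace
set_option linter.unusedSectionVars false
namespace AC
variable {V : Type*} [NormedAddCommGroup V] [InnerProductSpace ℝ V] [FiniteDimensional ℝ V]
  [MeasurableSpace V] [BorelSpace V]

/-! ### Compactness -/

/-- locally uniform convergence to zero -/
def UC (g : ℕ → V → ℝ) : Prop := ∀ ρ ε : ℝ, 0 < ε → ∀ᶠ k in atTop, ∀ x, ‖x‖ ≤ ρ → |g k x| ≤ ε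

theorem integrable_mul_dir {f G : V → ℝ} (hf : Integrable f) {M : ℝ≥0} (hG : LipschitzWith M G) (e : V) :
    Integrable (fun x => f x * ⟪gradient G x, e⟫) := by
  refine hf.mul_bdd (c := M * ‖e‖) ((meas_grad G).inner measurable_const).aestronglyMeasurable ?_
  refine Eventually.of_forall fun x => (norm_inner_le_norm _ _).trans ?_
  exact mul_le_mul_of_nonneg_right (grad_le hG x) (norm_nonneg _)

theorem weak_conv {g : ℕ → V → ℝ} {M : ℝ≥0} (hg : ∀ k, LipschitzWith M (g k)) (hc : UC g)
    {f : V → ℝ} (hf : Integrable f) (e : V) :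
    Tendsto (fun k => ∫ x, f x * ⟪gradient (g k) x, e⟫) atTop (𝓝 0) := by
  rw [Metric.tendsto_atTop']
  have key : ∀ ε > 0, ∀ᶠ k in atTop, |∫ x, f x * ⟪gradient (g k) x, e⟫| < ε := by
    intro ε hε
    set δ := ε / (2 * (M * ‖e‖ + 1)) with hδ
    have hδp : 0 < δ := by positivity
    obtain ⟨φ, hφ1, hφ2, hφ3⟩ := MeasureTheory.MemLp.exist_eLpNorm_sub_le (p := 1) (by simp) le_rfl
      (memLp_one_iff_integrable.2 hf) hδp
    have iφ : Integrable φ := hφ2.continuous.integrable_of_hasCompactSupport hφ1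
    have ifφ : Integrable (fun x => f x - φ x) := hf.sub iφ
    have h1 : ∫ x, ‖f x - φ x‖ ≤ δ := by
      rw [eLpNorm_one_eq_lintegral_enorm] at hφ3
      rw [integral_norm_eq_lintegral_enorm ifφ.aestronglyMeasurable]
      exact ENNReal.toReal_le_of_le_ofReal hδp.le hφ3
    obtain ⟨D, hD⟩ : ∃ D, LipschitzWith D φ :=
      ContDiff.lipschitzWith_of_hasCompactSupport hφ1 hφ2 (by simp)
    obtain ⟨ρ, hρ⟩ := hφ1.isCompact.isBounded.subset_closedBall (0 : V)
    have hsupp : ∀ x, ρ < ‖x‖ → lineDeriv ℝ φ x (-e) = 0 := by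
      intro x hx
      have hx' : x ∉ tsupport φ := fun h => by
        have := hρ h
        rw [mem_closedBall_zero_iff] at this; linarith
      rw [(hφ2.differentiable (by simp)).differentiableAt.lineDeriv_eq_fderiv,
        fderiv_of_notMem_tsupport (𝕜 := ℝ) hx']
      simp
    set I := D * ‖e‖ * (volume : Measure V).real (closedBall 0 ρ) with hI
    have hI0 : 0 ≤ I := by positivity
    filter_upwards [hc ρ (ε / (4 * (I + 1))) (by positivity)] with k hk
    have e1 : ∫ x, f x * ⟪gradient (g k) x, e⟫ = (∫ x, (f x - φ x) * ⟪gradient (g k) x, e⟫)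
        + ∫ x, φ x * ⟪gradient (g k) x, e⟫ := by
      rw [← integral_add (integrable_mul_dir ifφ (hg k) e) (integrable_mul_dir iφ (hg k) e)]
      congr 1; ext x; ring
    have b1 : |∫ x, (f x - φ x) * ⟪gradient (g k) x, e⟫| ≤ δ * (M * ‖e‖) := by
      rw [← Real.norm_eq_abs]
      refine (norm_integral_le_integral_norm _).trans ?_
      refine le_trans ?_ (mul_le_mul_of_nonneg_right h1 (by positivity))
      rw [← integral_mul_const]
      refine integral_mono (integrable_mul_dir ifφ (hg k) e).norm
        (ifφ.norm.mul_const _) fun x => ?_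
      simp only [norm_mul]
      refine mul_le_mul_of_nonneg_left ((norm_inner_le_norm _ _).trans ?_) (norm_nonneg _)
      exact mul_le_mul_of_nonneg_right (grad_le (hg k) x) (norm_nonneg _)
    have e2 : ∫ x, φ x * ⟪gradient (g k) x, e⟫ = ∫ x, lineDeriv ℝ φ x (-e) * g k x := by
      rw [← LipschitzWith.integral_lineDeriv_mul_eq (hg k) hD hφ1 e]
      refine integral_congr_ae ?_
      filter_upwards [(hg k).ae_differentiableAt] with x hx
      rw [hx.lineDeriv_eq_fderiv, ← inner_gradient_left, mul_comm]
    have b2 : |∫ x, φ x * ⟪gradient (g k) x, e⟫| ≤ ε / 4 := by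
      rw [e2, ← Real.norm_eq_abs, ← setIntegral_eq_integral_of_forall_compl_eq_zero
        (s := closedBall 0 ρ) (fun x hx => by
          rw [hsupp x (by simpa using hx), zero_mul])]
      refine (norm_setIntegral_le_of_norm_le_const (C := D * ‖e‖ * (ε / (4 * (I + 1))))
        measure_closedBall_lt_top fun x hx => ?_).trans ?_
      · rw [norm_mul]
        refine mul_le_mul ?_ (hk x (by simpa using hx)) (norm_nonneg _) (by positivity)
        refine (norm_lineDeriv_le_of_lipschitz ℝ hD).trans ?_
        simp
      · calc D * ‖e‖ * (ε / (4 * (I + 1))) * (volume : Measure V).real (closedBall 0 ρ)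
            = I * (ε / (4 * (I + 1))) := by rw [hI]; ring
          _ ≤ (I + 1) * (ε / (4 * (I + 1))) := mul_le_mul_of_nonneg_right (by linarith) (by positivity)
          _ = ε / 4 := by field_simp
    have b3 : δ * (M * ‖e‖) ≤ ε / 2 := by
      calc δ * (M * ‖e‖) ≤ δ * (M * ‖e‖ + 1) := mul_le_mul_of_nonneg_left (by linarith) hδp.le
        _ = ε / 2 := by rw [hδ]; field_simp
    rw [e1]
    have := abs_add_le (∫ x, (f x - φ x) * ⟪gradient (g k) x, e⟫) (∫ x, φ x * ⟪gradient (g k) x, e⟫)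
    linarith
  intro ε hε
  obtain ⟨N, hN⟩ := eventually_atTop.1 (key ε hε)
  exact ⟨N, fun n hn => by rw [Real.dist_eq, sub_zero]; exact hN n hn.le⟩

theorem weak_conv_ball {g : ℕ → V → ℝ} {M : ℝ≥0} (hg : ∀ k, LipschitzWith M (g k)) (hc : UC g)
    {u : V → ℝ} {L : ℝ≥0} (hu : LipschitzWith L u) (R : ℝ) :
    Tendsto (fun k => ∫ x in ball (0 : V) R, ⟪gradient u x, gradient (g k) x⟫) atTop (𝓝 0) := by
  set b := stdOrthonormalBasis ℝ V
  have hf : ∀ i, Integrable ((ball (0 : V) R).indicator fun x => ⟪gradient u x, b i⟫) := by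
    intro i
    rw [integrable_indicator_iff measurableSet_ball]
    refine integrableOn_of_bdd isBounded_ball
      ((meas_grad u).inner measurable_const).aestronglyMeasurable (L * ‖b i‖) fun x => ?_
    exact (norm_inner_le_norm _ _).trans
      (mul_le_mul_of_nonneg_right (grad_le hu x) (norm_nonneg _))
  have h := tendsto_finsetSum Finset.univ fun i _ => weak_conv hg hc (hf i) (b i)
  simp only [Finset.sum_const_zero] at h
  refine h.congr fun k => ?_
  rw [← integral_finsetSum _ fun i _ => integrable_mul_dir (hf i) (hg k) (b i),
    ← integral_indicator measurableSet_ball]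
  congr 1; ext x
  by_cases hx : x ∈ ball (0 : V) R
  · simp only [indicator_of_mem hx]
    rw [← b.sum_inner_mul_inner]
    refine Finset.sum_congr rfl fun i _ => ?_
    rw [real_inner_comm (b i) (gradient (g k) x)]
  · simp [indicator_of_notMem hx]

theorem integrableOn_dens {u : V → ℝ} {L : ℝ≥0} (hu : LipschitzWith L u) {s : Set V}
    (hs : Bornology.IsBounded s) : IntegrableOn (dens u) s := by
  refine integrableOn_of_bdd hs (meas_dens hu.continuous).aestronglyMeasurable (L ^ 2 + 1) fun x => ?_
  rw [Real.norm_of_nonneg (dens_nonneg u x)]; exact dens_le hu x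

theorem lsc {u : ℕ → V → ℝ} {u₀ : V → ℝ} {L : ℝ≥0} (hu : ∀ k, LipschitzWith L (u k))
    (hu₀ : LipschitzWith L u₀) (hc : UC fun k x => u k x - u₀ x) (R : ℝ) {ε : ℝ} (hε : 0 < ε) :
    ∀ᶠ k in atTop, ∫ x in ball (0 : V) R, dens u₀ x ≤ (∫ x in ball (0 : V) R, dens (u k) x) + ε := by
  have hg : ∀ k, LipschitzWith (L + L) (fun x => u k x - u₀ x) := fun k => (hu k).sub hu₀
  have h1 := weak_conv_ball hg hc hu₀ R
  have hpt : ∀ x, Tendsto (fun k => u k x) atTop (𝓝 (u₀ x)) := by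
    intro x
    rw [Metric.tendsto_nhds]
    intro ε hε
    filter_upwards [hc ‖x‖ (ε / 2) (by positivity)] with k hk
    rw [Real.dist_eq]; have := hk x le_rfl; linarith
  have mp : ∀ k, Measurable (fun x => min (pos1 (u k x)) (pos1 (u₀ x))) := fun k =>
    (meas_pos1.comp (hu k).continuous.measurable).min (meas_pos1.comp hu₀.continuous.measurable)
  have bp : ∀ k x, ‖min (pos1 (u k x)) (pos1 (u₀ x))‖ ≤ 1 := by
    intro k x
    rw [Real.norm_of_nonneg (le_min (pos1_nonneg _) (pos1_nonneg _))]
    exact (min_le_left _ _).trans (pos1_le_one _)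
  have h2 : Tendsto (fun k => ∫ x in ball (0 : V) R, min (pos1 (u k x)) (pos1 (u₀ x))) atTop
      (𝓝 (∫ x in ball (0 : V) R, pos1 (u₀ x))) := by
    refine tendsto_integral_of_dominated_convergence (fun _ => 1)
      (fun k => (mp k).aestronglyMeasurable) (integrableOn_const measure_ball_lt_top.ne)
      (fun k => Eventually.of_forall (bp k)) (Eventually.of_forall fun x => ?_)
    rcases lt_or_ge 0 (u₀ x) with h | h
    · refine tendsto_const_nhds.congr' ?_
      filter_upwards [(hpt x).eventually (lt_mem_nhds h)] with k hk
      rw [pos1_of_pos h, pos1_of_pos hk, min_self]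
    · refine tendsto_const_nhds.congr fun k => ?_
      rw [pos1_of_nonpos h, min_eq_right (pos1_nonneg _)]
  have e1 := (tendsto_order.1 h1).1 (-(ε / 4)) (by linarith)
  have e2 := (tendsto_order.1 h2).1 _ (show (∫ x in ball (0 : V) R, pos1 (u₀ x)) - ε / 2 < _ by linarith)
  filter_upwards [e1, e2] with k hk1 hk2
  have mi : AEStronglyMeasurable (fun x => ⟪gradient u₀ x, gradient (fun y => u k y - u₀ y) x⟫)
      (volume : Measure V) := (inner_meas (meas_grad _) (meas_grad _)).aestronglyMeasurable
  have i1 : IntegrableOn (fun x => ⟪gradient u₀ x, gradient (fun y => u k y - u₀ y) x⟫) (ball (0 : V) R) :=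
    integrableOn_of_bdd isBounded_ball mi _ (inner_grad_le hu₀ (hg k))
  have i2 : IntegrableOn (fun x => min (pos1 (u k x)) (pos1 (u₀ x))) (ball (0 : V) R) :=
    integrableOn_of_bdd isBounded_ball (mp k).aestronglyMeasurable 1 (bp k)
  have i3 : IntegrableOn (fun x => pos1 (u₀ x)) (ball (0 : V) R) :=
    integrableOn_of_bdd isBounded_ball (meas_pos1.comp hu₀.continuous.measurable).aestronglyMeasurable 1
      fun x => by rw [Real.norm_of_nonneg (pos1_nonneg _)]; exact pos1_le_one _
  have hae : ∀ᵐ x ∂(volume.restrict (ball (0 : V) R)), dens u₀ x ≤ dens (u k) x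
      - 2 * ⟪gradient u₀ x, gradient (fun y => u k y - u₀ y) x⟫
      - min (pos1 (u k x)) (pos1 (u₀ x)) + pos1 (u₀ x) := by
    refine ae_restrict_of_ae ?_
    filter_upwards [(hu k).ae_differentiableAt, hu₀.ae_differentiableAt] with x hx hx0
    rw [grad_sub hx hx0]
    unfold dens
    have h3 := norm_sub_sq_real (gradient (u k) x) (gradient u₀ x)
    have h4 := sq_nonneg ‖gradient (u k) x - gradient u₀ x‖
    rw [inner_sub_right, real_inner_self_eq_norm_sq, real_inner_comm]
    have := min_le_left (pos1 (u k x)) (pos1 (u₀ x))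
    linarith
  have ik := integrableOn_dens (hu k) (isBounded_ball (x := (0 : V)) (r := R))
  have ik2 : IntegrableOn (fun x => dens (u k) x
      - 2 * ⟪gradient u₀ x, gradient (fun y => u k y - u₀ y) x⟫) (ball (0 : V) R) := ik.sub (i1.const_mul 2)
  have ik3 : IntegrableOn (fun x => dens (u k) x
      - 2 * ⟪gradient u₀ x, gradient (fun y => u k y - u₀ y) x⟫
      - min (pos1 (u k x)) (pos1 (u₀ x))) (ball (0 : V) R) := ik2.sub i2
  have hI := integral_mono_ae (integrableOn_dens hu₀ isBounded_ball) (ik3.add i3) hae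
  simp only [Pi.add_apply] at hI
  rw [integral_add ik3 i3, integral_sub ik2 i2, integral_sub ik (i1.const_mul 2), integral_const_mul] at hI
  linarith

end AC

end Part6

section Part7
open scoped Topology RealInnerProductSpace
set_option linter.unusedSectionVars false
namespace AC
variable {V : Type*} [NormedAddCommGroup V] [InnerProductSpace ℝ V] [FiniteDimensional ℝ V]
  [MeasurableSpace V] [BorelSpace V]

noncomputable def cut (R δ : ℝ) (x : V) : ℝ := max (min ((R + δ - ‖x‖) * δ⁻¹) 1) 0

theorem cut_nonneg (R δ : ℝ) (x : V) : 0 ≤ cut R δ x := le_max_right _ _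
theorem cut_le_one (R δ : ℝ) (x : V) : cut R δ x ≤ 1 := max_le (min_le_right _ _) zero_le_one
theorem cut_one {R δ : ℝ} (hδ : 0 < δ) {x : V} (hx : ‖x‖ ≤ R) : cut R δ x = 1 := by
  unfold cut
  rw [min_eq_right, max_eq_left zero_le_one]
  rw [← div_eq_mul_inv, le_div_iff₀ hδ]; linarith
theorem cut_zero {R δ : ℝ} (hδ : 0 < δ) {x : V} (hx : R + δ ≤ ‖x‖) : cut R δ x = 0 := by
  unfold cut
  refine max_eq_right ((min_le_left _ _).trans ?_)
  exact mul_nonpos_of_nonpos_of_nonneg (by linarith) (inv_pos.2 hδ).le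
theorem cut_lip (R : ℝ) {δ : ℝ} (hδ : 0 < δ) :
    LipschitzWith (δ⁻¹).toNNReal (cut R δ : V → ℝ) := by
  refine LipschitzWith.of_dist_le_mul fun x y => ?_
  rw [Real.dist_eq, Real.coe_toNNReal _ (inv_pos.2 hδ).le]
  unfold cut
  refine (abs_sup_sub_sup_le_abs _ _ _).trans ((abs_inf_sub_inf_le_abs _ _ _).trans ?_)
  rw [← sub_mul, abs_mul, abs_of_pos (inv_pos.2 hδ), mul_comm]
  refine mul_le_mul_of_nonneg_left ?_ (inv_pos.2 hδ).le
  rw [show R + δ - ‖x‖ - (R + δ - ‖y‖) = ‖y‖ - ‖x‖ by ring, dist_comm, dist_eq_norm]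
  exact abs_norm_sub_norm_le _ _

theorem annulus_small (R : ℝ) (hR : 0 < R) {ε C : ℝ} (hε : 0 < ε) :
    ∃ δ, 0 < δ ∧ δ ≤ 1 ∧
      C * (volume : Measure V).real (closedBall (0 : V) (R + δ) \ ball (0 : V) R) ≤ ε := by
  set D := Module.finrank ℝ V
  set ω := (volume : Measure V).real (ball (0 : V) 1)
  have ht : Tendsto (fun δ : ℝ => C * ((R + δ) ^ D * ω - R ^ D * ω)) (𝓝[>] 0) (𝓝 0) := by
    have : Tendsto (fun δ : ℝ => C * ((R + δ) ^ D * ω - R ^ D * ω)) (𝓝 0)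
        (𝓝 (C * ((R + 0) ^ D * ω - R ^ D * ω))) := by
      apply Continuous.tendsto; fun_prop
    simp only [add_zero, sub_self, mul_zero] at this
    exact this.mono_left nhdsWithin_le_nhds
  have h1 := ht.eventually (gt_mem_nhds hε)
  have h2 : ∀ᶠ δ : ℝ in 𝓝[>] 0, δ < 1 := nhdsWithin_le_nhds (gt_mem_nhds one_pos)
  obtain ⟨δ, h1, h2, h3⟩ := (h1.and (h2.and self_mem_nhdsWithin)).exists
  have h3 : 0 < δ := h3
  refine ⟨δ, h3, h2.le, ?_⟩
  rw [measureReal_sdiff ((ball_subset_ball (by linarith)).trans ball_subset_closedBall)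
    measurableSet_ball measure_closedBall_lt_top.ne]
  have e : (volume : Measure V).real (closedBall (0 : V) (R + δ)) = (R + δ) ^ D * ω := by
    rw [Measure.real, Measure.addHaar_closedBall _ _ (by linarith), ENNReal.toReal_mul,
      ENNReal.toReal_ofReal (by positivity)]
    rfl
  rw [e, vol_ball _ hR]
  exact h1.le

theorem Mn.limit {L : ℝ≥0} {u : ℕ → V → ℝ} {u₀ : V → ℝ} {R : ℕ → ℝ}
    (hR : Tendsto R atTop atTop) (hu : ∀ k, Mn L (ball (0 : V) (R k)) (u k))
    (hu₀ : LipschitzWith L u₀) (hnn : ∀ x, 0 ≤ u₀ x)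
    (hc : UC fun k x => u k x - u₀ x) : Mn L univ u₀ := by
  refine ⟨hnn, hu₀, ?_⟩
  intro v hv lv K hK _ hvu
  obtain ⟨r, hr⟩ := hK.isBounded.subset_closedBall (0 : V)
  set ρ := max r 0 + 1 with hρ
  have hρp : 0 < ρ := by positivity
  have hKρ : K ⊆ ball (0 : V) ρ := hr.trans (closedBall_subset_ball (by
    have := le_max_left r 0; linarith))
  obtain ⟨A, hA⟩ := id lv
  have iv := integrableOn_dens hA (isBounded_ball (x := (0 : V)) (r := ρ))
  have iu := integrableOn_dens hu₀ (isBounded_ball (x := (0 : V)) (r := ρ))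
  rw [← setIntegral_eq_integral_of_forall_compl_eq_zero (s := ball (0 : V) ρ) (fun x hx => by
    rw [dens_congr_of_compl hK.isClosed hvu (fun h => hx (hKρ h)), sub_self]), integral_sub iv iu,
    sub_nonneg]
  refine le_of_forall_pos_le_add fun ε hε => ?_
  set C : ℝ := (3 * L + 1) ^ 2 + 1 with hC
  obtain ⟨δ, hδ, hδ1, hann⟩ := annulus_small (V := V) ρ hρp (ε := ε / 2) (C := C) (by positivity)
  obtain ⟨k, hk1, hk2, hk3⟩ := ((hR.eventually_gt_atTop (ρ + δ)).and
    ((hc (ρ + δ) δ hδ).and (lsc (fun k => (hu k).lip) hu₀ hc ρ (ε := ε / 2) (by positivity)))).exists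
  have lg : LipschitzWith (L + L) (fun x => u k x - u₀ x) := (hu k).lip.sub hu₀
  have lζ : LipschitzWith _ (cut ρ δ : V → ℝ) := cut_lip ρ hδ
  have lζg : AC.Lip (fun x => cut ρ δ x * (u k x - u₀ x)) := by
    refine AC.Lip.mul_of_bdd ⟨_, lζ⟩ ⟨_, lg⟩ 1 δ (fun x => ?_) fun x hx => ?_
    · rw [abs_of_nonneg (cut_nonneg _ _ _)]; exact cut_le_one _ _ _
    · refine hk2 x ?_
      by_contra hcon
      exact hx (cut_zero hδ (le_of_not_ge hcon))
  set vk : V → ℝ := fun x => (u k x + (v x - u₀ x)) - cut ρ δ x * (u k x - u₀ x) with hvk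
  have lvk : AC.Lip vk := (AC.Lip.add (hu k).Lip (lv.sub ⟨L, hu₀⟩)).sub lζg
  have evk : ∀ x ∈ ball (0 : V) ρ, vk x = v x := by
    intro x hx
    rw [hvk]; simp only
    rw [cut_one hδ (le_of_lt (by simpa using hx))]; ring
  have evk2 : ∀ x ∉ K, vk x = u k x - cut ρ δ x * (u k x - u₀ x) := by
    intro x hx
    rw [hvk]; simp only
    rw [hvu x hx]; ring
  set S := closedBall (0 : V) (ρ + δ) with hS
  have hBS : ball (0 : V) ρ ⊆ S := ball_subset_closedBall.trans (closedBall_subset_closedBall (by linarith))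
  have hvkS : ∀ x ∉ S, vk x = u k x := by
    intro x hx
    rw [evk2 x (fun h => hx (hBS (hKρ h))), cut_zero hδ, zero_mul, sub_zero]
    exact le_of_lt (by simpa [hS] using hx)
  have hm := (hu k).mini vk (fun x => by
    by_cases hx : x ∈ K
    · rw [evk x (hKρ hx)]; exact hv x
    · rw [evk2 x hx]
      have h1 := mul_nonneg (cut_nonneg ρ δ x) (hnn x)
      have h2 := mul_nonneg (sub_nonneg.2 (cut_le_one ρ δ x)) ((hu k).nn x)
      linarith) lvk S (isCompact_closedBall _ _) (closedBall_subset_ball hk1) hvkS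
  obtain ⟨B, hB⟩ := id lvk
  have ivk := integrableOn_dens hB (s := S) isBounded_closedBall
  have iuk := integrableOn_dens (hu k).lip (s := S) isBounded_closedBall
  rw [← setIntegral_eq_integral_of_forall_compl_eq_zero (s := S) (fun x hx => by
    rw [dens_congr_of_compl isClosed_closedBall hvkS hx, sub_self]), integral_sub ivk iuk,
    sub_nonneg] at hm
  have h1 : ∫ x in ball (0 : V) ρ, dens (u k) x ≤ ∫ x in S, dens (u k) x :=
    setIntegral_mono_set iuk (Eventually.of_forall (dens_nonneg _)) hBS.eventuallyLE
  have h2 : ∫ x in S, dens vk x = (∫ x in ball (0 : V) ρ, dens vk x)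
      + ∫ x in S \ ball (0 : V) ρ, dens vk x := by
    have := setIntegral_sdiff (μ := (volume : Measure V)) measurableSet_ball ivk hBS
    linarith
  have h3 : ∫ x in ball (0 : V) ρ, dens vk x = ∫ x in ball (0 : V) ρ, dens v x := by
    refine setIntegral_congr_fun measurableSet_ball fun x hx => ?_
    exact dens_congr (by filter_upwards [isOpen_ball.mem_nhds hx] with y hy using evk y hy)
  have h4 : ∫ x in S \ ball (0 : V) ρ, dens vk x ≤ C * (volume : Measure V).real (S \ ball (0 : V) ρ) := by
    have mS : MeasurableSet (S \ ball (0 : V) ρ) := measurableSet_closedBall.diff measurableSet_ball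
    have hfin : volume (S \ ball (0 : V) ρ) ≠ ⊤ :=
      ((measure_mono sdiff_subset).trans_lt measure_closedBall_lt_top).ne
    have h5 := setIntegral_mono_on_ae (ivk.mono_set sdiff_subset)
      (integrableOn_const hfin (C := C)) mS (g := fun _ => C) ?_
    · rw [setIntegral_const, smul_eq_mul, mul_comm] at h5; exact h5
    filter_upwards [(hu k).Lip.ae_diff, lg.ae_differentiableAt, lζ.ae_differentiableAt] with x d1 d2 d3 hx
    have hxK : x ∉ K := fun h => hx.2 (hKρ h)
    have hev : vk =ᶠ[𝓝 x] fun x => u k x - cut ρ δ x * (u k x - u₀ x) := by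
      filter_upwards [hK.isClosed.isOpen_compl.mem_nhds hxK] with y hy using evk2 y hy
    have hgr : ‖gradient vk x‖ ≤ 3 * L + 1 := by
      rw [grad_eq_of_eventuallyEq hev, grad_sub d1 (d3.fun_mul d2), grad_mul d3 d2]
      have g1 := grad_le (hu k).lip x
      have g2 := grad_le lg x
      have g3 := grad_le lζ x
      rw [Real.coe_toNNReal _ (inv_pos.2 hδ).le] at g3
      rw [NNReal.coe_add] at g2
      have n1 : ‖cut ρ δ x • gradient (fun y => u k y - u₀ y) x‖ ≤ 2 * L := by
        rw [norm_smul, Real.norm_of_nonneg (cut_nonneg _ _ _)]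
        have := mul_le_mul (cut_le_one ρ δ x) g2 (norm_nonneg _) zero_le_one
        linarith
      have n2 : ‖(u k x - u₀ x) • gradient (cut ρ δ) x‖ ≤ 1 := by
        rw [norm_smul, Real.norm_eq_abs]
        have := mul_le_mul (hk2 x (by simpa [hS] using hx.1)) g3 (norm_nonneg _) hδ.le
        rwa [mul_inv_cancel₀ hδ.ne'] at this
      have n3 := norm_sub_le (gradient (u k) x) (cut ρ δ x • gradient (fun y => u k y - u₀ y) x
        + (u k x - u₀ x) • gradient (cut ρ δ) x)
      have n4 := norm_add_le (cut ρ δ x • gradient (fun y => u k y - u₀ y) x)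
        ((u k x - u₀ x) • gradient (cut ρ δ) x)
      linarith
    unfold dens
    exact add_le_add (pow_le_pow_left₀ (norm_nonneg _) hgr 2) (pos1_le_one _)
  linarith

/-- Arzela–Ascoli for a pair of sequences of uniformly Lipschitz functions. -/
theorem ascoli1 {L : ℝ≥0} {u : ℕ → V → ℝ} (hu : ∀ k, LipschitzWith L (u k)) (h0 : ∀ k, u k 0 = 0) :
    ∃ u₀ : V → ℝ, LipschitzWith L u₀ ∧ ∀ ρ ε : ℝ, 0 < ε →
      ∀ᶠ k in (hyperfilter ℕ : Filter ℕ), ∀ x, ‖x‖ ≤ ρ → |u k x - u₀ x| ≤ ε := by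
  have hpt : ∀ x, ∃ a, Tendsto (fun k => u k x) (hyperfilter ℕ : Filter ℕ) (𝓝 a) := by
    intro x
    have hb : ∀ k, u k x ∈ Icc (-(L * ‖x‖)) (L * ‖x‖) := by
      intro k
      have := lw_abs (hu k) x 0
      rw [h0, sub_zero, dist_zero_right] at this
      exact abs_le.1 this
    obtain ⟨a, -, ha⟩ := (isCompact_Icc (a := -(L * ‖x‖)) (b := L * ‖x‖)).ultrafilter_le_nhds
      ((hyperfilter ℕ).map fun k => u k x) (by
        rw [Filter.le_principal_iff]
        exact Ultrafilter.mem_map.2 (Filter.univ_mem' hb))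
    exact ⟨a, ha⟩
  choose u₀ hu₀ using hpt
  have lu₀ : LipschitzWith L u₀ := by
    refine LipschitzWith.of_dist_le_mul fun x y => ?_
    refine le_of_tendsto ((hu₀ x).dist (hu₀ y)) (Eventually.of_forall fun k => ?_)
    exact (hu k).dist_le_mul x y
  refine ⟨u₀, lu₀, fun ρ ε hε => ?_⟩
  set s := ε / (4 * (L + 1)) with hs
  have hsp : 0 < s := by positivity
  obtain ⟨t, -, htf, hcov⟩ := (isCompact_closedBall (0 : V) ρ).finite_cover_balls hsp
  have hfin : ∀ᶠ k in (hyperfilter ℕ : Filter ℕ), ∀ y ∈ t, |u k y - u₀ y| < ε / 2 := by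
    rw [htf.eventually_all]
    intro y _
    have := (Metric.tendsto_nhds.1 (hu₀ y)) (ε / 2) (by positivity)
    simpa [Real.dist_eq] using this
  filter_upwards [hfin] with k hk x hx
  obtain ⟨y, hy, hxy⟩ := mem_iUnion₂.1 (hcov (show x ∈ closedBall (0 : V) ρ by simpa using hx))
  have h1 := lw_abs (hu k) x y
  have h2 := lw_abs lu₀ y x
  have h3 := hk y hy
  have h4 : L * dist x y ≤ ε / 4 := by
    have h5 : dist x y ≤ s := le_of_lt hxy
    calc L * dist x y ≤ (L + 1) * s := mul_le_mul (by linarith) h5 dist_nonneg (by positivity)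
      _ = ε / 4 := by rw [hs]; field_simp
  rw [dist_comm] at h2
  have e : u k x - u₀ x = (u k x - u k y) + (u k y - u₀ y) + (u₀ y - u₀ x) := by ring
  rw [e]
  have h6 := abs_add_three (u k x - u k y) (u k y - u₀ y) (u₀ y - u₀ x)
  linarith

theorem ascoli {L : ℝ≥0} {u w : ℕ → V → ℝ} (hu : ∀ k, LipschitzWith L (u k)) (hu0 : ∀ k, u k 0 = 0)
    (hw : ∀ k, LipschitzWith L (w k)) (hw0 : ∀ k, w k 0 = 0) :
    ∃ (u₀ w₀ : V → ℝ) (φ : ℕ → ℕ), LipschitzWith L u₀ ∧ LipschitzWith L w₀ ∧ (∀ j, j ≤ φ j) ∧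
      UC (fun j x => u (φ j) x - u₀ x) ∧ UC (fun j x => w (φ j) x - w₀ x) := by
  obtain ⟨u₀, l1, c1⟩ := ascoli1 hu hu0
  obtain ⟨w₀, l2, c2⟩ := ascoli1 hw hw0
  have hex : ∀ j : ℕ, ∃ k, j ≤ k ∧ (∀ x, ‖x‖ ≤ (j : ℝ) → |u k x - u₀ x| ≤ 1 / ((j : ℝ) + 1)) ∧
      ∀ x, ‖x‖ ≤ (j : ℝ) → |w k x - w₀ x| ≤ 1 / ((j : ℝ) + 1) := by
    intro j
    have hge : ∀ᶠ k in (hyperfilter ℕ : Filter ℕ), j ≤ k :=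
      Nat.hyperfilter_le_atTop (eventually_ge_atTop j)
    exact (hge.and ((c1 j (1 / ((j : ℝ) + 1)) (by positivity)).and
      (c2 j (1 / ((j : ℝ) + 1)) (by positivity)))).exists
  choose φ h1 h2 h3 using hex
  have huc : ∀ g : ℕ → V → ℝ, (∀ (j : ℕ) x, ‖x‖ ≤ (j : ℝ) → |g j x| ≤ 1 / ((j : ℝ) + 1)) → UC g := by
    intro g hg ρ ε hε
    have e1 := (tendsto_order.1 (tendsto_one_div_add_atTop_nhds_zero_nat (𝕜 := ℝ))).2 ε hε
    have e2 := (tendsto_natCast_atTop_atTop (R := ℝ)).eventually_ge_atTop ρ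
    filter_upwards [e1, e2] with j hj hj2 x hx
    exact (hg j x (hx.trans hj2)).trans hj.le
  exact ⟨u₀, w₀, φ, l1, l2, h1, huc _ h2, huc _ h3⟩

end AC

end Part7

section Part8
open scoped Topology RealInnerProductSpace
set_option linter.unusedSectionVars false
namespace AC
variable {V : Type*} [NormedAddCommGroup V] [InnerProductSpace ℝ V] [FiniteDimensional ℝ V]
  [MeasurableSpace V] [BorelSpace V]

/-! ### Inner variations -/

theorem perturb {ψ : V → V} (hψ : LipschitzWith (1 / 2) ψ) :
    ∃ Ψ : V → V, LipschitzWith 2 Ψ ∧ (∀ x, Ψ (x + ψ x) = x) ∧ ∀ y, Ψ y + ψ (Ψ y) = y := by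
  have hex : ∀ y, ∃ x, x + ψ x = y := by
    intro y
    have hc : ContractingWith (1 / 2) (fun x => y - ψ x) := by
      refine ⟨by rw [← NNReal.coe_lt_coe]; norm_num, LipschitzWith.of_dist_le_mul fun a b => ?_⟩
      rw [dist_sub_left]; exact hψ.dist_le_mul a b
    have := hc.fixedPoint_isFixedPt
    refine ⟨ContractingWith.fixedPoint _ hc, ?_⟩
    have h2 : y - ψ (ContractingWith.fixedPoint _ hc) = ContractingWith.fixedPoint _ hc := this
    nth_rewrite 1 [← h2]
    abel
  have hanti : ∀ x y : V, dist x y ≤ 2 * dist (x + ψ x) (y + ψ y) := by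
    intro x y
    have h1 := hψ.dist_le_mul x y
    have h2 : dist x y ≤ dist (x + ψ x) (y + ψ y) + dist (ψ x) (ψ y) := by
      rw [dist_eq_norm, dist_eq_norm, dist_eq_norm]
      have e : x - y = (x + ψ x - (y + ψ y)) - (ψ x - ψ y) := by abel
      nth_rewrite 1 [e]
      exact norm_sub_le _ _
    have h3 : ((1 / 2 : ℝ≥0) : ℝ) = 1 / 2 := by norm_num
    rw [h3] at h1
    linarith
  choose Ψ hΨ using hex
  refine ⟨Ψ, LipschitzWith.of_dist_le_mul fun x y => ?_, fun x => ?_, hΨ⟩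
  · have := hanti (Ψ x) (Ψ y)
    rwa [hΨ, hΨ] at this
  · have := hanti (Ψ (x + ψ x)) x
    rw [hΨ, dist_self, mul_zero] at this
    exact dist_le_zero.1 this

theorem inner_step {L : ℝ≥0} {u : V → ℝ} (hu : Mn L univ u) {η : V → ℝ} (hη : ContDiff ℝ 1 η)
    (hc : HasCompactSupport η) {M : ℝ≥0} (hM : LipschitzWith M η) (a : V) (ha : M * ‖a‖ ≤ 1 / 2) :
    0 ≤ (∫ x, (dens u x * ⟪a, gradient η x⟫ - 2 * ⟪gradient u x, a⟫ * ⟪gradient u x, gradient η x⟫))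
      + 2 * (L * ‖a‖ * M) ^ 2 * (volume : Measure V).real (tsupport η) := by
  set K := tsupport η with hK
  have cK : IsCompact K := hc
  have mK : MeasurableSet K := cK.isClosed.measurableSet
  have hη0 : ∀ x ∉ K, η x = 0 := fun x hx => image_eq_zero_of_notMem_tsupport hx
  have hψ : LipschitzWith (1 / 2) (fun x => η x • a) := by
    refine LipschitzWith.of_dist_le_mul fun x y => ?_
    rw [dist_eq_norm, ← sub_smul, norm_smul, Real.norm_eq_abs]
    have h1 := mul_le_mul_of_nonneg_right (lw_abs hM x y) (norm_nonneg a)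
    have h2 := mul_le_mul_of_nonneg_right ha (dist_nonneg (x := x) (y := y))
    have h3 : ((1 / 2 : ℝ≥0) : ℝ) = 1 / 2 := by norm_num
    rw [h3]
    linarith
  obtain ⟨Ψ, lΨ, hΨ1, hΨ2⟩ := perturb hψ
  set Φ : V → V := fun x => x + η x • a with hΦ
  have injΦ : Function.Injective Φ := Function.LeftInverse.injective (g := Ψ) hΨ1
  have cΦ : Continuous Φ := by
    have := hη.continuous; fun_prop
  set Φ' : V → V →L[ℝ] V := fun x => ContinuousLinearMap.id ℝ V + (fderiv ℝ η x).smulRight a with hΦ'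
  have dΦ : ∀ x, HasFDerivAt Φ (Φ' x) x := by
    intro x
    have h1 : HasFDerivAt η (fderiv ℝ η x) x := (hη.differentiable (by simp)).differentiableAt.hasFDerivAt
    exact (hasFDerivAt_id x).add (h1.smul_const a)
  have hdet : ∀ x, (Φ' x).det = 1 + ⟪a, gradient η x⟫ := by
    intro x
    have : ((Φ' x : V →L[ℝ] V) : V →ₗ[ℝ] V) = LinearMap.transvection (fderiv ℝ η x : V →ₗ[ℝ] ℝ) a := by
      ext y; simp [hΦ', LinearMap.transvection]
    rw [ContinuousLinearMap.det, this, LinearMap.transvection.det, real_inner_comm, inner_gradient_left]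
    rfl
  have hτ : ∀ x, |⟪a, gradient η x⟫| ≤ 1 / 2 := by
    intro x
    refine (abs_real_inner_le_norm _ _).trans ?_
    have := mul_le_mul_of_nonneg_left (grad_le hM x) (norm_nonneg a)
    linarith
  have hdetp : ∀ x, 1 / 2 ≤ 1 + ⟪a, gradient η x⟫ := fun x => by
    have := (abs_le.1 (hτ x)).1; linarith
  have habs : ∀ x, |(Φ' x).det| = 1 + ⟪a, gradient η x⟫ := fun x => by
    rw [hdet, abs_of_pos]; linarith [hdetp x]
  have Φoff : ∀ x ∉ K, Φ x = x := fun x hx => by simp [hΦ, hη0 x hx]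
  have Ψoff : ∀ x ∉ K, Ψ x = x := fun x hx => by
    have := hΨ1 x
    rwa [hη0 x hx, zero_smul, add_zero] at this
  have imK : Φ '' K = K := by
    apply Subset.antisymm
    · rintro _ ⟨x, hx, rfl⟩
      by_contra hcon
      have h1 := Ψoff _ hcon
      rw [show Ψ (Φ x) = x from hΨ1 x] at h1
      exact hcon (h1 ▸ hx)
    · intro y hy
      refine ⟨Ψ y, ?_, hΨ2 y⟩
      by_contra hcon
      have h1 := Φoff _ hcon
      rw [show Φ (Ψ y) = y from hΨ2 y] at h1
      exact hcon (h1 ▸ hy)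
  set v : V → ℝ := fun x => u (Ψ x) with hv
  have lv : LipschitzWith (L * 2) v := hu.lip.comp lΨ
  have hvu : ∀ x ∉ K, v x = u x := fun x hx => by rw [hv]; simp only; rw [Ψoff x hx]
  have hm := hu.mini v (fun x => hu.nn _) ⟨_, lv⟩ K cK (subset_univ _) hvu
  have iv := integrableOn_dens lv (s := K) cK.isBounded
  have iu := integrableOn_dens hu.lip (s := K) cK.isBounded
  rw [← setIntegral_eq_integral_of_forall_compl_eq_zero (s := K) (fun x hx => by
    rw [dens_congr_of_compl cK.isClosed hvu hx, sub_self]), integral_sub iv iu, sub_nonneg] at hm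
  have hchange : ∫ x in K, dens v x = ∫ x in K, (1 + ⟪a, gradient η x⟫) * dens v (Φ x) := by
    have := integral_image_eq_integral_abs_det_fderiv_smul (volume : Measure V) mK
      (fun x _ => (dΦ x).hasFDerivWithinAt) injΦ.injOn (dens v)
    rw [imK] at this
    rw [this]
    simp only [habs, smul_eq_mul]
  have aediff : ∀ᵐ x : V, DifferentiableAt ℝ v (Φ x) := by
    set N := {y : V | DifferentiableAt ℝ v y}ᶜ with hN
    have mN : MeasurableSet N := (measurableSet_of_differentiableAt ℝ v).compl
    have zN : volume N = 0 := lv.ae_differentiableAt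
    have mS : MeasurableSet (Φ ⁻¹' N) := cΦ.measurable mN
    have h1 := lintegral_abs_det_fderiv_eq_addHaar_image (volume : Measure V) mS
      (fun x _ => (dΦ x).hasFDerivWithinAt) injΦ.injOn
    have h2 : volume (Φ '' (Φ ⁻¹' N)) = 0 := measure_mono_null (image_preimage_subset _ _) zN
    rw [h2] at h1
    have h3 : ∫⁻ _ in Φ ⁻¹' N, ENNReal.ofReal (1 / 2) ≤ 0 := by
      rw [← h1]
      refine lintegral_mono fun x => ENNReal.ofReal_le_ofReal ?_
      rw [habs]; exact hdetp x
    rw [setLIntegral_const, nonpos_iff_eq_zero, mul_eq_zero] at h3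
    have h4 : volume (Φ ⁻¹' N) = 0 := by
      rcases h3 with h | h
      · simp at h
      · exact h
    exact h4
  have hpt : ∀ᵐ x : V, (1 + ⟪a, gradient η x⟫) * dens v (Φ x) ≤ dens u x +
      (dens u x * ⟪a, gradient η x⟫ - 2 * ⟪gradient u x, a⟫ * ⟪gradient u x, gradient η x⟫)
      + 2 * (L * ‖a‖ * M) ^ 2 := by
    filter_upwards [aediff] with x hx
    have hvΦ : ∀ y, v (Φ y) = u y := fun y => by rw [hv]; simp only; rw [hΨ1 y]
    have hcomp : HasFDerivAt u ((fderiv ℝ v (Φ x)).comp (Φ' x)) x := by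
      have := hx.hasFDerivAt.comp x (dΦ x)
      refine this.congr_of_eventuallyEq (Eventually.of_forall fun y => ?_)
      exact (hvΦ y).symm
    set P := gradient v (Φ x) with hP
    set p := gradient u x with hp
    set q := gradient η x with hq
    have hpP : p = P + ⟪P, a⟫ • q := by
      apply ext_inner_right ℝ
      intro y
      rw [hp, inner_gradient_left, hcomp.fderiv]
      simp only [hΦ', ContinuousLinearMap.comp_apply, ContinuousLinearMap.add_apply,
        ContinuousLinearMap.id_apply, ContinuousLinearMap.smulRight_apply, map_add, map_smul,
        smul_eq_mul]
      rw [← inner_gradient_left, ← inner_gradient_left, ← inner_gradient_left, inner_add_left, inner_smul_left]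
      simp only [RCLike.conj_to_real]
      rw [← hP, ← hq]
      ring
    have hpa : ⟪p, a⟫ = ⟪P, a⟫ * (1 + ⟪a, q⟫) := by
      rw [hpP, inner_add_left, inner_smul_left, real_inner_comm q a]
      simp only [RCLike.conj_to_real]; ring
    have hPP : P = p - ⟪P, a⟫ • q := by rw [eq_sub_iff_add_eq]; exact hpP.symm
    set b := ⟪P, a⟫ with hb
    have hPsq : ‖P‖ ^ 2 = ‖p‖ ^ 2 - 2 * b * ⟪p, q⟫ + b ^ 2 * ‖q‖ ^ 2 := by
      rw [hPP, norm_sub_sq_real, inner_smul_right, norm_smul, mul_pow, Real.norm_eq_abs, sq_abs]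
      ring
    have hdv : dens v (Φ x) = ‖P‖ ^ 2 + pos1 (u x) := by unfold dens; rw [hvΦ]
    rw [hdv, hPsq]
    have hdu : dens u x = ‖p‖ ^ 2 + pos1 (u x) := rfl
    rw [hdu, hpa]
    have hd := hdetp x
    rw [← hq] at hd
    have hbb : (1 + ⟪a, q⟫) * (b ^ 2 * ‖q‖ ^ 2) ≤ 2 * (L * ‖a‖ * M) ^ 2 := by
      have h1 : |⟪p, a⟫| ≤ L * ‖a‖ := (abs_real_inner_le_norm _ _).trans
        (mul_le_mul_of_nonneg_right (grad_le hu.lip x) (norm_nonneg _))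
      have h2 : (⟪p, a⟫) ^ 2 ≤ (L * ‖a‖) ^ 2 := sq_le_sq' (by linarith [(abs_le.1 h1).1]) (abs_le.1 h1).2
      have h3 : ‖q‖ ^ 2 ≤ (M : ℝ) ^ 2 := pow_le_pow_left₀ (norm_nonneg _) (grad_le hM x) 2
      have h4 : (1 + ⟪a, q⟫) * b ^ 2 ≤ 2 * (⟪p, a⟫) ^ 2 := by
        rw [hpa]
        nlinarith [sq_nonneg b, mul_nonneg (sq_nonneg b) (mul_nonneg (sub_nonneg.2 hd) (by linarith : (0:ℝ) ≤ 1 + ⟪a, q⟫))]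
      calc (1 + ⟪a, q⟫) * (b ^ 2 * ‖q‖ ^ 2) = ((1 + ⟪a, q⟫) * b ^ 2) * ‖q‖ ^ 2 := by ring
        _ ≤ (2 * (L * ‖a‖) ^ 2) * M ^ 2 := mul_le_mul (by linarith) h3 (by positivity) (by positivity)
        _ = 2 * (L * ‖a‖ * M) ^ 2 := by ring
    linarith
  have mI : Measurable (fun x => dens u x * ⟪a, gradient η x⟫ - 2 * ⟪gradient u x, a⟫ * ⟪gradient u x, gradient η x⟫) := by
    have h1 : Measurable (fun x => ⟪a, gradient η x⟫) := measurable_const.inner (meas_grad η)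
    have h2 : Measurable (fun x => ⟪gradient u x, a⟫) := (meas_grad u).inner measurable_const
    exact ((meas_dens hu.lip.continuous).mul h1).sub ((h2.const_mul 2).mul (inner_meas (meas_grad u) (meas_grad η)))
  have bI : ∀ x, ‖dens u x * ⟪a, gradient η x⟫ - 2 * ⟪gradient u x, a⟫ * ⟪gradient u x, gradient η x⟫‖
      ≤ (L ^ 2 + 1) * (1 / 2) + 2 * (L * ‖a‖) * (L * M) := by
    intro x
    refine (norm_sub_le _ _).trans (add_le_add ?_ ?_)
    · rw [norm_mul, Real.norm_of_nonneg (dens_nonneg u x)]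
      exact mul_le_mul (dens_le hu.lip x) (hτ x) (norm_nonneg _) (by positivity)
    · rw [norm_mul, norm_mul, Real.norm_of_nonneg (by norm_num : (0:ℝ) ≤ 2)]
      refine mul_le_mul (mul_le_mul_of_nonneg_left ?_ (by norm_num)) (inner_grad_le hu.lip hM x)
        (norm_nonneg _) (by positivity)
      exact (norm_inner_le_norm _ _).trans (mul_le_mul_of_nonneg_right (grad_le hu.lip x) (norm_nonneg _))
  have iI : IntegrableOn (fun x => dens u x * ⟪a, gradient η x⟫ - 2 * ⟪gradient u x, a⟫ * ⟪gradient u x, gradient η x⟫) K :=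
    integrableOn_of_bdd cK.isBounded mI.aestronglyMeasurable _ bI
  have iC : IntegrableOn (fun _ : V => 2 * (L * ‖a‖ * M : ℝ) ^ 2) K := integrableOn_const cK.measure_lt_top.ne
  have iL : IntegrableOn (fun x => (1 + ⟪a, gradient η x⟫) * dens v (Φ x)) K := by
    have h1 : Measurable (fun x => ⟪a, gradient η x⟫) := measurable_const.inner (meas_grad η)
    refine integrableOn_of_bdd cK.isBounded
      ((measurable_const.add h1).mul ((meas_dens lv.continuous).comp cΦ.measurable)).aestronglyMeasurable
      ((1 + 1 / 2) * (((L * 2 : ℝ≥0) : ℝ) ^ 2 + 1)) fun x => ?_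
    rw [norm_mul, Real.norm_of_nonneg (dens_nonneg v _), Real.norm_of_nonneg (by linarith [hdetp x])]
    exact mul_le_mul (by linarith [(abs_le.1 (hτ x)).2]) (dens_le lv _) (dens_nonneg _ _) (by norm_num)
  have iuI : IntegrableOn (fun x => dens u x + (dens u x * ⟪a, gradient η x⟫ - 2 * ⟪gradient u x, a⟫ * ⟪gradient u x, gradient η x⟫)) K :=
    iu.add iI
  have hfin := integral_mono_ae iL (iuI.add iC) (ae_restrict_of_ae hpt)
  simp only [Pi.add_apply] at hfin
  have hset : ∫ x in K, (dens u x * ⟪a, gradient η x⟫ - 2 * ⟪gradient u x, a⟫ * ⟪gradient u x, gradient η x⟫)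
      = ∫ x, (dens u x * ⟪a, gradient η x⟫ - 2 * ⟪gradient u x, a⟫ * ⟪gradient u x, gradient η x⟫) :=
    setIntegral_eq_integral_of_forall_compl_eq_zero (fun x hx => by
      rw [grad_zero_of_compl cK.isClosed hη0 hx]; simp)
  rw [integral_add iuI iC, integral_add iu iI, ← hchange, setIntegral_const, hset, smul_eq_mul] at hfin
  linarith

theorem Mn.inner_var {L : ℝ≥0} {u : V → ℝ} (hu : Mn L univ u) {η : V → ℝ} (hη : ContDiff ℝ 1 η)
    (hc : HasCompactSupport η) (e : V) :
    ∫ x, (dens u x * ⟪e, gradient η x⟫ - 2 * ⟪gradient u x, e⟫ * ⟪gradient u x, gradient η x⟫) = 0 := by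
  obtain ⟨M, hM⟩ : ∃ M, LipschitzWith M η := ContDiff.lipschitzWith_of_hasCompactSupport hc hη (by simp)
  have key : ∀ e : V, 0 ≤ ∫ x, (dens u x * ⟪e, gradient η x⟫ - 2 * ⟪gradient u x, e⟫ * ⟪gradient u x, gradient η x⟫) := by
    intro e
    refine lin_quad (Q := 2 * (L * ‖e‖ * M) ^ 2 * (volume : Measure V).real (tsupport η))
      (t0 := 1 / (2 * (M * ‖e‖ + 1))) (by positivity) fun t ht ht' => ?_
    have h1 : M * ‖t • e‖ ≤ 1 / 2 := by
      rw [norm_smul, Real.norm_of_nonneg ht.le]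
      rw [lt_div_iff₀ (by positivity)] at ht'
      nlinarith [mul_nonneg M.2 (norm_nonneg e)]
    have h2 := inner_step hu hη hc hM (t • e) h1
    have h3 : ∀ x, dens u x * ⟪t • e, gradient η x⟫ - 2 * ⟪gradient u x, t • e⟫ * ⟪gradient u x, gradient η x⟫
        = t * (dens u x * ⟪e, gradient η x⟫ - 2 * ⟪gradient u x, e⟫ * ⟪gradient u x, gradient η x⟫) := by
      intro x; rw [inner_smul_left, inner_smul_right]; simp only [RCLike.conj_to_real]; ring
    simp only [h3, integral_const_mul, norm_smul, Real.norm_of_nonneg ht.le] at h2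
    convert h2 using 2
    ring
  have h1 := key e
  have h2 := key (-e)
  have h3 : ∀ x, dens u x * ⟪-e, gradient η x⟫ - 2 * ⟪gradient u x, -e⟫ * ⟪gradient u x, gradient η x⟫
      = -(dens u x * ⟪e, gradient η x⟫ - 2 * ⟪gradient u x, e⟫ * ⟪gradient u x, gradient η x⟫) := by
    intro x; rw [inner_neg_left, inner_neg_right]; ring
  simp only [h3, integral_neg] at h2
  linarith

end AC

end Part8

section Part9
open scoped Topology RealInnerProductSpace
set_option linter.unusedSectionVars false
namespace AC
variable {V : Type*} [NormedAddCommGroup V] [InnerProductSpace ℝ V] [FiniteDimensional ℝ V]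
  [MeasurableSpace V] [BorelSpace V]

/-! ### The exit lemma -/

theorem integrable_iv {L : ℝ≥0} {u : V → ℝ} (hu : LipschitzWith L u) {η : V → ℝ} {M : ℝ≥0}
    (hM : LipschitzWith M η) (hc : HasCompactSupport η) (e : V) :
    Integrable (fun x => dens u x * ⟪e, gradient η x⟫
      - 2 * ⟪gradient u x, e⟫ * ⟪gradient u x, gradient η x⟫) := by
  have hη0 : ∀ x ∉ tsupport η, η x = 0 := fun x hx => image_eq_zero_of_notMem_tsupport hx
  have cK : IsCompact (tsupport η) := hc
  have h1 : Measurable (fun x => ⟪e, gradient η x⟫) := measurable_const.inner (meas_grad η)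
  have h2 : Measurable (fun x => ⟪gradient u x, e⟫) := (meas_grad u).inner measurable_const
  have mI := ((meas_dens hu.continuous).mul h1).sub ((h2.const_mul 2).mul (inner_meas (meas_grad u) (meas_grad η)))
  refine integrable_of_bdd cK mI.aestronglyMeasurable
    ((L ^ 2 + 1) * (‖e‖ * M) + 2 * (L * ‖e‖) * (L * M)) (fun x => ?_) (fun x hx => ?_)
  · refine (norm_sub_le _ _).trans (add_le_add ?_ ?_)
    · rw [norm_mul, Real.norm_of_nonneg (dens_nonneg u x)]
      refine mul_le_mul (dens_le hu x) ?_ (norm_nonneg _) (by positivity)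
      exact (norm_inner_le_norm _ _).trans (mul_le_mul_of_nonneg_left (grad_le hM x) (norm_nonneg _))
    · rw [norm_mul, norm_mul, Real.norm_of_nonneg (by norm_num : (0:ℝ) ≤ 2)]
      refine mul_le_mul (mul_le_mul_of_nonneg_left ?_ (by norm_num)) (inner_grad_le hu hM x)
        (norm_nonneg _) (by positivity)
      exact (norm_inner_le_norm _ _).trans (mul_le_mul_of_nonneg_right (grad_le hu x) (norm_nonneg _))
  · rw [grad_zero_of_compl cK.isClosed hη0 hx]; simp

theorem scaled_div0 {L L' : ℝ≥0} {u : V → ℝ} {Λ : ℝ} (hΛ : 1 < Λ) (hu : Mn L univ u)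
    (hw : Mn L' univ (fun x => Λ * u x)) {η : V → ℝ} (hη : ContDiff ℝ 1 η)
    (hc : HasCompactSupport η) (e : V) : ∫ x, pos1 (u x) * ⟪e, gradient η x⟫ = 0 := by
  obtain ⟨M, hM⟩ : ∃ M, LipschitzWith M η := ContDiff.lipschitzWith_of_hasCompactSupport hc hη (by simp)
  have h1 := hu.inner_var hη hc e
  have h2 := hw.inner_var hη hc e
  have i1 := integrable_iv hu.lip hM hc e
  have i2 := integrable_iv hw.lip hM hc e
  have e1 : ∀ᵐ x : V, (Λ ^ 2 - 1) * (pos1 (u x) * ⟪e, gradient η x⟫) =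
      Λ ^ 2 * (dens u x * ⟪e, gradient η x⟫ - 2 * ⟪gradient u x, e⟫ * ⟪gradient u x, gradient η x⟫)
      - (dens (fun x => Λ * u x) x * ⟪e, gradient η x⟫ - 2 * ⟪gradient (fun x => Λ * u x) x, e⟫
        * ⟪gradient (fun x => Λ * u x) x, gradient η x⟫) := by
    filter_upwards [hu.Lip.ae_diff] with x hx
    unfold dens
    rw [grad_const_mul Λ hx]
    have hp : pos1 (Λ * u x) = pos1 (u x) := pos1_congr (mul_pos_iff_of_pos_left (by linarith))
    rw [hp, norm_smul, mul_pow, Real.norm_eq_abs, sq_abs, inner_smul_left, inner_smul_left]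
    simp only [RCLike.conj_to_real]
    ring
  have h3 := integral_congr_ae e1
  rw [integral_const_mul, integral_sub (i1.const_mul _) i2, integral_const_mul, h1, h2] at h3
  have h4 : (Λ ^ 2 - 1) ≠ 0 := by nlinarith
  have h5 : (Λ ^ 2 - 1) * ∫ x, pos1 (u x) * ⟪e, gradient η x⟫ = 0 := by rw [h3]; ring
  exact (mul_eq_zero.1 h5).resolve_left h4

theorem full_of_div0 {u : V → ℝ} (cu : Continuous u)
    (h : ∀ η : V → ℝ, ContDiff ℝ 1 η → HasCompactSupport η → ∀ e : V,
      ∫ x, pos1 (u x) * ⟪e, gradient η x⟫ = 0) {A : V} {s : ℝ} (hs : 0 < s)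
    (hA : ∀ x ∈ ball A s, 0 < u x) (x₀ : V) : ∀ᵐ x : V, x ∈ ball x₀ s → 0 < u x := by
  let b : ContDiffBump (0 : V) := ⟨s / 2, s, by positivity, by linarith⟩
  set g : V → ℝ := fun x => b x with hg
  have cg : ContDiff ℝ 1 g := b.contDiff
  have kg : HasCompactSupport g := b.hasCompactSupport
  have gn : ∀ x, 0 ≤ g x := fun x => b.nonneg
  have gs : ∀ x, 0 < g x ↔ ‖x‖ < s := by
    intro x
    have h1 : x ∈ Function.support g ↔ x ∈ ball (0 : V) s := by
      have h2 := b.support_eq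
      exact Set.ext_iff.1 h2 x
    rw [Function.mem_support, mem_ball_zero_iff] at h1
    rw [← h1]
    exact ⟨fun h => h.ne', fun h => lt_of_le_of_ne (gn x) (Ne.symm h)⟩
  set p : V → ℝ := fun x => pos1 (u x) with hp
  have mp : Measurable p := meas_pos1.comp cu.measurable
  have lp : LocallyIntegrable p := by
    refine (locallyIntegrable_const (1 : ℝ)).mono mp.aestronglyMeasurable (Eventually.of_forall fun x => ?_)
    rw [Real.norm_of_nonneg (pos1_nonneg _), norm_one]; exact pos1_le_one _
  set F : V → ℝ := convolution p g (ContinuousLinearMap.mul ℝ ℝ) volume with hF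
  have hD : ∀ c, HasFDerivAt F (convolution p (fderiv ℝ g) ((ContinuousLinearMap.mul ℝ ℝ).precompR V) volume c) c :=
    fun c => kg.hasFDerivAt_convolution_right (ContinuousLinearMap.mul ℝ ℝ) lp cg c
  have hF0 : ∀ c, fderiv ℝ F c = 0 := by
    intro c
    rw [(hD c).fderiv]
    ext e
    rw [convolution_precompR_apply _ lp (kg.fderiv ℝ) (cg.continuous_fderiv (by simp))]
    rw [convolution_def]
    have hη : ContDiff ℝ 1 (fun x => g (c - x)) := cg.comp (contDiff_const.sub contDiff_id)
    have kη : HasCompactSupport (fun x => g (c - x)) := kg.comp_homeomorph (Homeomorph.subLeft c)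
    have := h _ hη kη e
    have hgr : ∀ t, ⟪e, gradient (fun x => g (c - x)) t⟫ = - fderiv ℝ g (c - t) e := by
      intro t
      rw [real_inner_comm, inner_gradient_left]
      have h1 : HasFDerivAt g (fderiv ℝ g (c - t)) (c - t) :=
        (cg.differentiable (by simp)).differentiableAt.hasFDerivAt
      have h2 : HasFDerivAt (fun x : V => c - x) (-ContinuousLinearMap.id ℝ V) t := (hasFDerivAt_id t).const_sub c
      have h3 := HasFDerivAt.comp t h1 h2
      have h4 : fderiv ℝ (fun x => g (c - x)) t = (fderiv ℝ g (c - t)).comp (-ContinuousLinearMap.id ℝ V) := h3.fderiv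
      rw [h4]; simp
    simp only [hgr, mul_neg, integral_neg, neg_eq_zero] at this
    simpa using this
  have hconst := is_const_of_fderiv_eq_zero (fun c => (hD c).differentiableAt) hF0 A x₀
  have hFc : ∀ c, F c = ∫ t, p t * g (c - t) := fun c => by rw [hF, convolution_def]; simp
  have hFA : F A = ∫ t, g (A - t) := by
    rw [hFc]
    congr 1; ext t
    by_cases ht : t ∈ ball A s
    · rw [hp]; simp only; rw [pos1_of_pos (hA t ht), one_mul]
    · have h1 : ¬ 0 < g (A - t) := by
        rw [gs, ← dist_eq_norm, dist_comm]; exact ht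
      have h2 : g (A - t) = 0 := le_antisymm (not_lt.1 h1) (gn _)
      rw [h2, mul_zero]
  have hint : ∀ c, Integrable (fun t => g (c - t)) := fun c =>
    (cg.continuous.integrable_of_hasCompactSupport kg).comp_sub_left c
  have hi2 : Integrable (fun t => p t * g (x₀ - t)) := by
    refine (hint x₀).bdd_mul mp.aestronglyMeasurable (c := 1) (Eventually.of_forall fun x => ?_)
    rw [Real.norm_of_nonneg (pos1_nonneg _)]; exact pos1_le_one _
  have hz : ∫ t, (g (x₀ - t) - p t * g (x₀ - t)) = 0 := by
    rw [integral_sub (hint x₀) hi2, ← hFc, ← hconst, hFA, integral_sub_left_eq_self g, integral_sub_left_eq_self g,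
      sub_self]
  have i3 : Integrable (fun t => g (x₀ - t) - p t * g (x₀ - t)) := (hint x₀).sub hi2
  rw [integral_eq_zero_iff_of_nonneg (fun t => ?_) i3] at hz
  · filter_upwards [hz] with x hx hxb
    simp only [Pi.zero_apply] at hx
    have h1 : 0 < g (x₀ - x) := by rw [gs, ← dist_eq_norm, dist_comm]; exact hxb
    by_contra hcon
    have h2 : p x = 0 := pos1_of_nonpos (not_lt.1 hcon)
    rw [h2] at hx
    linarith
  · have := mul_le_mul_of_nonneg_right (pos1_le_one (u t)) (gn (x₀ - t))
    simp only [Pi.zero_apply]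
    linarith

theorem Mn.not_zero {L : ℝ≥0} {u : V → ℝ} (hu : Mn L univ u) {s : ℝ} (hs : 0 < s)
    (hp : ∀ᵐ x : V, x ∈ ball (0 : V) s → 0 < u x) : u 0 ≠ 0 := by
  intro hu0
  have hkey : ∀ r, 0 < r → r < s → 0 ≤ ∫ x, ⟪gradient u x, gradient (eta (0 : V) r) x⟫ := by
    intro r hr hrs
    set ζ := eta (0 : V) r with hζd
    have hζ : AC.Lip ζ := eta_lip _ hr.le
    have hK : IsCompact (closedBall (0 : V) r) := isCompact_closedBall _ _
    have h0 : ∀ x ∉ closedBall (0 : V) r, ζ x = 0 := fun x hx => eta_zero hr.le (fun h => hx (ball_subset_closedBall h))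
    have h2 : 0 ≤ 2 * ∫ x, ⟪gradient u x, gradient ζ x⟫ := by
      refine lin_quad (Q := ∫ x, ‖gradient ζ x‖ ^ 2) (t0 := 1) (by positivity) fun t ht ht' => ?_
      have := hu.mini (fun x => u x + t * ζ x)
        (fun x => add_nonneg (hu.nn x) (mul_nonneg ht.le (eta_nonneg _ _ _))) (hu.Lip.add (hζ.const_mul t)) _ hK (subset_univ _)
        (fun x hx => by simp [h0 x hx])
      have e : ∀ᵐ x : V, dens (fun x => u x + t * ζ x) x - dens u x
          = t * (2 * ⟪gradient u x, gradient ζ x⟫) + t ^ 2 * ‖gradient ζ x‖ ^ 2 := by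
        filter_upwards [hu.Lip.ae_diff, hζ.ae_diff, hp] with x hx hx' hxp
        unfold dens
        rw [dens_add_smul hx hx']
        have : pos1 (u x + t * ζ x) = pos1 (u x) := by
          by_cases hx : x ∈ closedBall (0 : V) r
          · have h3 := hxp (closedBall_subset_ball hrs hx)
            rw [pos1_of_pos h3, pos1_of_pos]
            have := mul_nonneg ht.le (eta_nonneg (0 : V) r x)
            rw [hζd]; linarith
          · simp [h0 x hx]
        rw [this]; ring
      rw [integral_congr_ae e, integral_add
        (((integrable_inner_grad hu.Lip hζ hK h0).const_mul 2).const_mul t)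
        ((integrable_grad_sq hζ hK h0).const_mul _), integral_const_mul, integral_const_mul,
        integral_const_mul] at this
      exact this
    linarith
  have hmv := AC.mv_le hu.Lip.neg (0 : V) hs (fun r hr hrs => by
    have h1 := hkey r hr hrs
    rw [integral_inner_eta _ hr] at h1
    simp only [grad_neg, inner_neg_left, integral_neg]
    exact h1)
  rw [hu0, neg_zero, zero_mul, integral_neg] at hmv
  have hz := zero_of_integral_le hu.Lip.cont (x₀ := (0 : V)) (r := s) (fun x _ => hu.nn x) (by linarith)
  have hnull : volume (ball (0 : V) s) = 0 := by
    refine measure_mono_null (fun x hx => ?_) hp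
    simp only [mem_compl_iff, mem_ofPred_eq, Classical.not_imp]
    exact ⟨hx, by rw [hz x hx]; simp⟩
  exact (measure_ball_pos volume (0 : V) hs).ne' hnull

theorem exit {L : ℝ≥0} {u w : V → ℝ} {Λ : ℝ} (hΛ : 1 < Λ) (hu : Mn L univ u) (hw : Mn L univ w)
    (hu0 : u 0 = 0) (hle : ∀ x, Λ * u x ≤ w x) {A : V} (hA : 0 < u A) (hwA : w A = Λ * u A) : False := by
  have cu := hu.Lip.cont
  have cw := hw.Lip.cont
  set G : Set V := {x | 0 < u x ∧ w x = Λ * u x} with hG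
  have hwpos : ∀ x, 0 < u x → 0 < w x := fun x hx =>
    lt_of_lt_of_le (mul_pos (by linarith) hx) (hle x)
  have whu : WH {x | 0 < u x} u := hu.wh.mono (fun x hx => ⟨hx, mem_univ _⟩)
  have whw : WH {x | 0 < u x} w := hw.wh.mono (fun x hx => ⟨hwpos x hx, mem_univ _⟩)
  have whd := whw.sub_mul whu hw.Lip hu.Lip Λ
  have oP : IsOpen {x | 0 < u x} := isOpen_lt continuous_const cu
  have ball_G : ∀ x ∈ G, ∃ r > 0, ball x r ⊆ G := by
    intro x hx
    obtain ⟨r, hr, hrb⟩ := Metric.isOpen_iff.1 oP x hx.1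
    refine ⟨r, hr, fun y hy => ⟨hrb hy, ?_⟩⟩
    have := whd.strong_mp (hw.Lip.sub (hu.Lip.const_mul Λ)) hr hrb (fun z _ => by linarith [hle z])
      (by rw [hx.2]; ring) y hy
    linarith
  have oG : IsOpen G := Metric.isOpen_iff.2 ball_G
  have clG : ∀ x ∈ closure G, w x = Λ * u x := by
    intro x hx
    have hcl : IsClosed {x | w x = Λ * u x} := isClosed_eq cw (continuous_const.mul cu)
    exact closure_minimal (fun y hy => hy.2) hcl hx
  have hfu : ∀ x ∈ frontier G, u x = 0 := by
    intro x hx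
    rw [frontier, oG.interior_eq] at hx
    by_contra hne
    exact hx.2 ⟨lt_of_le_of_ne (hu.nn x) (Ne.symm hne), clG x hx.1⟩
  have hfw : ∀ x ∈ frontier G, w x = 0 := by
    intro x hx
    have h1 := hfu x hx
    rw [clG x hx.1, h1, mul_zero]
  have m1 := hu.component hfu
  have m2 := hw.component hfw
  have e2 : G.indicator w = fun x => Λ * G.indicator u x := by
    ext x
    by_cases hx : x ∈ G
    · rw [indicator_of_mem hx, indicator_of_mem hx, hx.2]
    · rw [indicator_of_notMem hx, indicator_of_notMem hx, mul_zero]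
  rw [e2] at m2
  obtain ⟨s, hs, hsb⟩ := ball_G A ⟨hA, hwA⟩
  have hfull := full_of_div0 m1.Lip.cont (fun η hη hc e => scaled_div0 hΛ m1 m2 hη hc e) hs
    (fun x hx => by rw [indicator_of_mem (hsb hx)]; exact (hsb hx).1) (0 : V)
  refine m1.not_zero hs hfull ?_
  by_cases h0 : (0 : V) ∈ G
  · rw [indicator_of_mem h0, hu0]
  · rw [indicator_of_notMem h0]

end AC

end Part9

section Part10
open scoped Topology RealInnerProductSpace
set_option linter.unusedSectionVars false
namespace AC
variable {V : Type*} [NormedAddCommGroup V] [InnerProductSpace ℝ V] [FiniteDimensional ℝ V]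
  [MeasurableSpace V] [BorelSpace V]

/-! ### The core lemma: ordered minimizers cannot touch at a free boundary point -/

structure Pr (L : ℝ≥0) (Λ R : ℝ) (u w : V → ℝ) : Prop where
  mu : Mn L (ball (0 : V) R) u
  mw : Mn L (ball (0 : V) R) w
  u0 : u 0 = 0
  w0 : w 0 = 0
  cl : (0 : V) ∈ closure {x | 0 < u x}
  le : ∀ x ∈ ball (0 : V) R, Λ * u x ≤ w x

def gset (V : Type*) [NormedAddCommGroup V] [InnerProductSpace ℝ V] [FiniteDimensional ℝ V]
    [MeasurableSpace V] [BorelSpace V] (L : ℝ≥0) : Set ℝ :=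
  {Λ | ∃ R > 0, ∃ u w : V → ℝ, Pr L Λ R u w}

/-- uniform nondegeneracy at a free boundary point -/
theorem nd_origin (V : Type*) [NormedAddCommGroup V] [InnerProductSpace ℝ V] [FiniteDimensional ℝ V]
    [MeasurableSpace V] [BorelSpace V] {L : ℝ≥0} (hL : 0 < L) :
    ∃ c : ℝ, 0 < c ∧ ∀ (R : ℝ) (u : V → ℝ), 0 < R → Mn L (ball (0 : V) R) u →
      (0 : V) ∈ closure {x | 0 < u x} → ∃ y ∈ ball (0 : V) R, c * R < u y := by
  obtain ⟨c, hc, h⟩ := nd2 V hL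
  refine ⟨c / 2, by positivity, fun R u hR hu hcl => ?_⟩
  obtain ⟨x, hx, hx'⟩ := Metric.mem_closure_iff.1 hcl (R / 2) (by positivity)
  rw [dist_comm] at hx'
  have hsub : ball x (R / 2) ⊆ ball (0 : V) R := ball_subset_ball' (by linarith)
  obtain ⟨y, hy, hy'⟩ := h _ u hu x (R / 2) (by positivity) hsub hx
  exact ⟨y, hsub hy, by linarith⟩

theorem gset_bdd {L : ℝ≥0} (hL : 0 < L) : BddAbove (gset V L) := by
  obtain ⟨c, hc, h⟩ := nd_origin V hL
  refine ⟨L / c, ?_⟩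
  rintro Λ ⟨R, hR, u, w, hp⟩
  obtain ⟨y, hy, hy'⟩ := h R u hR hp.mu hp.cl
  rw [le_div_iff₀ hc]
  by_contra hcon
  push Not at hcon
  have hL' : (0 : ℝ) < L := hL
  have hΛ : 0 < Λ := by
    by_contra hn
    nlinarith
  have h1 := hp.le y hy
  have h2 := lw_abs hp.mw.lip y 0
  rw [hp.w0, sub_zero, abs_of_nonneg (hp.mw.nn y)] at h2
  rw [mem_ball] at hy
  have h3 : Λ * (c * R) < Λ * u y := mul_lt_mul_of_pos_left hy' hΛ
  have h4 : L * dist y 0 < L * R := mul_lt_mul_of_pos_left hy hL'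
  nlinarith

theorem improve {L : ℝ≥0} (hL : 0 < L) {Λ R : ℝ} (hΛ : 0 ≤ Λ) (hR : 0 < R) {u w : V → ℝ}
    (hp : Pr L Λ R u w) (hlt : ∀ x ∈ ball (0 : V) R, 0 < u x → Λ * u x < w x) :
    ∃ c > 0, Λ + c ∈ gset V L := by
  have whu := hp.mu.wh
  have whw : WH ({x | 0 < u x} ∩ ball (0 : V) R) w := hp.mw.wh.mono (fun x hx =>
    ⟨lt_of_le_of_lt (mul_nonneg hΛ (hp.mu.nn x)) (hlt x hx.2 hx.1), hx.2⟩)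
  obtain ⟨r, c, hr, hrR, hc, h⟩ := bh hL hR hp.mu hp.u0 (hp.mw.Lip.sub (hp.mu.Lip.const_mul Λ))
    (fun x hx => by linarith [hp.le x hx]) (whw.sub_mul whu hp.mw.Lip hp.mu.Lip Λ)
    (fun x hx hx' => by linarith [hlt x hx hx'])
  refine ⟨c, hc, r, hr, u, w, hp.mu.mono (ball_subset_ball hrR), hp.mw.mono (ball_subset_ball hrR),
    hp.u0, hp.w0, hp.cl, fun x hx => ?_⟩
  linarith [h x hx]

theorem UC.tendsto {u : ℕ → V → ℝ} {u₀ : V → ℝ} (h : UC fun k x => u k x - u₀ x) (x : V) :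
    Tendsto (fun k => u k x) atTop (𝓝 (u₀ x)) := by
  rw [Metric.tendsto_nhds]
  intro ε hε
  filter_upwards [h ‖x‖ (ε / 2) (by positivity)] with k hk
  rw [Real.dist_eq]
  exact lt_of_le_of_lt (hk x le_rfl) (by linarith)

theorem limit_pair {L : ℝ≥0} (hL : 0 < L) {Λ : ℕ → ℝ} {Λ₀ : ℝ} (hΛ : ∀ k, Λ k ∈ gset V L)
    (ht : Tendsto Λ atTop (𝓝 Λ₀)) : ∃ u w : V → ℝ, Mn L univ u ∧ Mn L univ w ∧ u 0 = 0 ∧ w 0 = 0 ∧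
      (0 : V) ∈ closure {x | 0 < u x} ∧ ∀ x, Λ₀ * u x ≤ w x := by
  choose R hR u w hp using hΛ
  have hk1 : ∀ k : ℕ, (0 : ℝ) < k + 1 := fun k => by positivity
  set t : ℕ → ℝ := fun k => R k / (k + 1) with htd
  have htp : ∀ k, 0 < t k := fun k => div_pos (hR k) (hk1 k)
  set u' : ℕ → V → ℝ := fun k => resc 0 (t k) (u k) with hu'
  set w' : ℕ → V → ℝ := fun k => resc 0 (t k) (w k) with hw'
  have hin : ∀ k : ℕ, ∀ x ∈ ball (0 : V) (k + 1), (0 : V) + t k • x ∈ ball (0 : V) (R k) := by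
    intro k x hx
    rw [mem_ball_zero_iff] at hx
    rw [zero_add, mem_ball_zero_iff, norm_smul, Real.norm_of_nonneg (htp k).le]
    calc t k * ‖x‖ < t k * (k + 1) := mul_lt_mul_of_pos_left hx (htp k)
      _ = R k := div_mul_cancel₀ _ (hk1 k).ne'
  have mu : ∀ k : ℕ, Mn L (ball (0 : V) (k + 1)) (u' k) := fun k =>
    ((hp k).mu.resc 0 (htp k)).mono (fun x hx => hin k x hx)
  have mw : ∀ k : ℕ, Mn L (ball (0 : V) (k + 1)) (w' k) := fun k =>
    ((hp k).mw.resc 0 (htp k)).mono (fun x hx => hin k x hx)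
  have u0 : ∀ k, u' k 0 = 0 := fun k => by simp [hu', resc, (hp k).u0]
  have w0 : ∀ k, w' k 0 = 0 := fun k => by simp [hw', resc, (hp k).w0]
  have hle : ∀ k : ℕ, ∀ x ∈ ball (0 : V) (k + 1), Λ k * u' k x ≤ w' k x := by
    intro k x hx
    have h1 := mul_le_mul_of_nonneg_left ((hp k).le _ (hin k x hx)) (inv_nonneg.2 (htp k).le)
    simp only [hu', hw', resc]
    linarith
  have hcl : ∀ k, (0 : V) ∈ closure {x | 0 < u' k x} := by
    intro k
    rw [Metric.mem_closure_iff]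
    intro ε hε
    obtain ⟨y, hy, hy'⟩ := Metric.mem_closure_iff.1 (hp k).cl (t k * ε) (mul_pos (htp k) hε)
    refine ⟨(t k)⁻¹ • y, ?_, ?_⟩
    · simp only [hu', resc, mem_ofPred_eq, zero_add]
      rw [smul_inv_smul₀ (htp k).ne']
      exact mul_pos (inv_pos.2 (htp k)) hy
    · rw [dist_zero_left] at hy' ⊢
      rw [norm_smul, norm_inv, Real.norm_of_nonneg (htp k).le, inv_mul_lt_iff₀ (htp k)]
      exact hy'
  obtain ⟨u₀, w₀, φ, lu, lw, hφ, cu, cw⟩ := ascoli (fun k => (mu k).lip) u0 (fun k => (mw k).lip) w0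
  have hφt : Tendsto φ atTop atTop := tendsto_atTop_mono hφ tendsto_id
  have hRt : Tendsto (fun j => ((φ j : ℕ) : ℝ) + 1) atTop atTop :=
    tendsto_atTop_add_const_right _ _ (tendsto_natCast_atTop_atTop.comp hφt)
  have tu := UC.tendsto cu
  have tw := UC.tendsto cw
  have nu : ∀ x, 0 ≤ u₀ x := fun x => ge_of_tendsto' (tu x) fun j => (mu _).nn x
  have nw : ∀ x, 0 ≤ w₀ x := fun x => ge_of_tendsto' (tw x) fun j => (mw _).nn x
  refine ⟨u₀, w₀, Mn.limit hRt (fun j => mu (φ j)) lu nu cu, Mn.limit hRt (fun j => mw (φ j)) lw nw cw,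
    ?_, ?_, ?_, fun x => ?_⟩
  · exact tendsto_nhds_unique (tu 0) (by simp only [u0]; exact tendsto_const_nhds)
  · exact tendsto_nhds_unique (tw 0) (by simp only [w0]; exact tendsto_const_nhds)
  · rw [Metric.mem_closure_iff]
    intro ε hε
    obtain ⟨c, hc, hnd⟩ := nd_origin V hL
    obtain ⟨j, hj1, hj2⟩ := ((cu ε (c * ε / 2) (by positivity)).and (hRt.eventually_ge_atTop ε)).exists
    obtain ⟨y, hy, hy'⟩ := hnd ε (u' (φ j)) hε ((mu (φ j)).mono (ball_subset_ball hj2)) (hcl _)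
    rw [mem_ball_zero_iff] at hy
    refine ⟨y, ?_, by rwa [dist_zero_left]⟩
    have h1 := (abs_le.1 (hj1 y hy.le)).2
    have h2 : 0 < c * ε := by positivity
    rw [mem_ofPred_eq]
    linarith
  · refine le_of_tendsto_of_tendsto ((ht.comp hφt).mul (tu x)) (tw x) ?_
    filter_upwards [hRt.eventually_gt_atTop ‖x‖] with j hj
    exact hle (φ j) x (mem_ball_zero_iff.2 hj)

theorem core {L : ℝ≥0} (hL : 0 < L) {R : ℝ} (hR : 0 < R) {u w : V → ℝ}
    (mu : Mn L (ball (0 : V) R) u) (mw : Mn L (ball (0 : V) R) w) (u0 : u 0 = 0) (w0 : w 0 = 0)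
    (cl : (0 : V) ∈ closure {x | 0 < u x}) (hle : ∀ x ∈ ball (0 : V) R, u x ≤ w x)
    (hlt : ∀ x ∈ ball (0 : V) R, 0 < u x → u x < w x) : False := by
  have hp : Pr L 1 R u w := ⟨mu, mw, u0, w0, cl, fun x hx => by rw [one_mul]; exact hle x hx⟩
  obtain ⟨m, hm, hmem⟩ := improve hL zero_le_one hR hp (fun x hx hx' => by rw [one_mul]; exact hlt x hx hx')
  have bdd := gset_bdd (V := V) hL
  have h1 : 1 + m ≤ sSup (gset V L) := le_csSup bdd hmem
  obtain ⟨Λ, -, ht, hΛ⟩ := exists_seq_tendsto_sSup ⟨_, hmem⟩ bdd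
  obtain ⟨u', w', mu', mw', u0', w0', cl', le'⟩ := limit_pair hL hΛ ht
  have hΛ1 : 1 < sSup (gset V L) := by linarith
  by_cases hex : ∃ x, 0 < u' x ∧ w' x = sSup (gset V L) * u' x
  · obtain ⟨x, hx, hx'⟩ := hex
    exact exit hΛ1 mu' mw' u0' le' hx hx'
  · push Not at hex
    have hp' : Pr L (sSup (gset V L)) 1 u' w' :=
      ⟨mu'.mono (subset_univ _), mw'.mono (subset_univ _), u0', w0', cl', fun x _ => le' x⟩
    obtain ⟨c, hc, hmem'⟩ := improve hL (by linarith) one_pos hp'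
      (fun x _ hx => lt_of_le_of_ne (le' x) (Ne.symm (hex x hx)))
    have := le_csSup bdd hmem'
    linarith

end AC

end Part10

section Part11
open scoped Topology RealInnerProductSpace
set_option linter.unusedSectionVars false
namespace AC
/-! ### Assembly -/

section Assembly
variable {n : ℕ}

theorem JE_eq {D O : Set (EuclideanSpace ℝ (Fin n))} (hD : MeasurableSet D)
    (bD : Bornology.IsBounded D) (hO : IsOpen O) (hDO : D ⊆ O) {u f : EuclideanSpace ℝ (Fin n) → ℝ}
    (hf : Lip f) (he : ∀ x ∈ O, u x = f x) : JE D u = ENNReal.ofReal (∫ x in D, dens f x) := by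
  obtain ⟨K, hK⟩ := hf
  rw [ofReal_integral_eq_lintegral_ofReal (integrableOn_dens hK bD)
    (Eventually.of_forall fun x => dens_nonneg f x)]
  unfold JE
  refine setLIntegral_congr_fun hD fun x hx => ?_
  have hev : u =ᶠ[𝓝 x] f := by
    filter_upwards [hO.mem_nhds (hDO hx)] with y hy using he y hy
  unfold dens
  rw [ENNReal.ofReal_add (by positivity) (pos1_nonneg _), grad_eq_of_eventuallyEq hev, he x (hDO hx)]
  congr 1
  · rw [ENNReal.ofReal_pow (norm_nonneg _), ofReal_norm_eq_enorm]; rfl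
  · unfold pos1; split_ifs <;> simp

theorem min_int {Ω : Set (EuclideanSpace ℝ (Fin n))} (hΩ : MeasurableSet Ω)
    {u f v : EuclideanSpace ℝ (Fin n) → ℝ} (hu : IsMinimizer Ω u) (lf : Lip f)
    (he : ∀ x ∈ ball (0 : EuclideanSpace ℝ (Fin n)) 2, u x = f x)
    (hv : ∀ x, 0 ≤ v x) (lv : Lip v)
    (hvf : ∀ x, v x ≠ f x → x ∈ Ω ∩ ball (0 : EuclideanSpace ℝ (Fin n)) 2) :
    0 ≤ ∫ x in Ω ∩ ball (0 : EuclideanSpace ℝ (Fin n)) 2, (dens v x - dens f x) := by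
  obtain ⟨hnn, hlip, hmin⟩ := hu
  set D := Ω ∩ ball (0 : EuclideanSpace ℝ (Fin n)) 2 with hD
  have bD : Bornology.IsBounded D := isBounded_ball.subset inter_subset_right
  have mD : MeasurableSet D := hΩ.inter measurableSet_ball
  set v' : EuclideanSpace ℝ (Fin n) → ℝ := fun x => u x + (v x - f x) with hv'
  have hev : ∀ x ∈ ball (0 : EuclideanSpace ℝ (Fin n)) 2, v' x = v x := fun x hx => by
    rw [hv']; simp only; rw [he x hx]; ring
  have hsub : {x | v' x ≠ u x} ⊆ D := by
    intro x hx
    apply hvf x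
    intro h
    apply hx
    rw [hv']; simp only; rw [h]; ring
  have hnn' : ∀ x, 0 ≤ v' x := by
    intro x
    by_cases hx : v' x = u x
    · rw [hx]; exact hnn x
    · rw [hev x (hsub hx).2]; exact hv x
  have hl' : LocallyLipschitz v' := by
    obtain ⟨K, hK⟩ := lv.sub lf
    exact hlip.add hK.locallyLipschitz
  have h := hmin v' hnn' hl' (bD.subset hsub) (hsub.trans inter_subset_left) 0 2 (hsub.trans inter_subset_right)
  rw [← hD, JE_eq mD bD isOpen_ball inter_subset_right lf he,
    JE_eq mD bD isOpen_ball inter_subset_right lv hev,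
    ENNReal.ofReal_le_ofReal_iff (integral_nonneg fun x => dens_nonneg _ _)] at h
  obtain ⟨K, hK⟩ := lf
  obtain ⟨K', hK'⟩ := lv
  rw [integral_sub (integrableOn_dens hK' bD) (integrableOn_dens hK bD)]
  linarith

theorem mn_of_min {Ω : Set (EuclideanSpace ℝ (Fin n))} (hΩ : MeasurableSet Ω)
    {u f : EuclideanSpace ℝ (Fin n) → ℝ} (hu : IsMinimizer Ω u) {L : ℝ≥0} (lf : LipschitzWith L f)
    (hf : ∀ x, 0 ≤ f x) (he : ∀ x ∈ ball (0 : EuclideanSpace ℝ (Fin n)) 2, u x = f x) :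
    Mn L (Ω ∩ ball (0 : EuclideanSpace ℝ (Fin n)) 2) f := by
  refine ⟨hf, lf, fun v hv lv K hK hKΩ hvf => ?_⟩
  have h := min_int hΩ hu ⟨L, lf⟩ he hv lv (fun x hx => hKΩ (by
    by_contra hc; exact hx (hvf x hc)))
  rwa [setIntegral_eq_integral_of_forall_compl_eq_zero] at h
  intro x hx
  rw [dens_congr_of_compl hK.isClosed hvf (fun h => hx (hKΩ h)), sub_self]

theorem exists_ext {u : EuclideanSpace ℝ (Fin n) → ℝ} (hu : LocallyLipschitz u) (hn : ∀ x, 0 ≤ u x) :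
    ∃ f : EuclideanSpace ℝ (Fin n) → ℝ, Lip f ∧ (∀ x, 0 ≤ f x) ∧
      ∀ x ∈ closedBall (0 : EuclideanSpace ℝ (Fin n)) 2, u x = f x := by
  obtain ⟨K, hK⟩ := LocallyLipschitzOn.exists_lipschitzOnWith_of_compact
    (isCompact_closedBall (0 : EuclideanSpace ℝ (Fin n)) 2) hu.locallyLipschitzOn
  obtain ⟨g, hg, he⟩ := hK.extend_real
  refine ⟨fun x => max (g x) 0, Lip.maxL ⟨K, hg⟩ (lip_const 0), fun x => le_max_right _ _, fun x hx => ?_⟩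
  have := he hx
  show u x = max (g x) 0
  rw [← this, max_eq_left (hn x)]

theorem exists_pair {U w : EuclideanSpace ℝ (Fin n) → ℝ} (hU : LocallyLipschitz U) (hUn : ∀ x, 0 ≤ U x)
    (hw : LocallyLipschitz w) (hwn : ∀ x, 0 ≤ w x)
    (hbd : ∀ x ∉ ball (0 : EuclideanSpace ℝ (Fin n)) 1, U x ≤ w x) :
    ∃ (f g : EuclideanSpace ℝ (Fin n) → ℝ) (L : ℝ≥0), 0 < L ∧ LipschitzWith L f ∧ LipschitzWith L g ∧
      (∀ x, 0 ≤ f x) ∧ (∀ x, 0 ≤ g x) ∧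
      (∀ x ∈ ball (0 : EuclideanSpace ℝ (Fin n)) 2, U x = f x) ∧
      (∀ x ∈ ball (0 : EuclideanSpace ℝ (Fin n)) 2, w x = g x) ∧
      ∀ x ∉ ball (0 : EuclideanSpace ℝ (Fin n)) 1, f x ≤ g x := by
  obtain ⟨f, lf, fn, hf⟩ := exists_ext hU hUn
  obtain ⟨g, lg, gn, hg⟩ := exists_ext hw hwn
  obtain ⟨N, hN, hfN⟩ := cpt_bdd lf.cont (isCompact_closedBall (0 : EuclideanSpace ℝ (Fin n)) 1)
  set c : EuclideanSpace ℝ (Fin n) → ℝ := fun x => max (2 - ‖x‖) 0 with hc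
  have lc : Lip c := ((lip_const 2).sub ⟨1, lipschitzWith_one_norm⟩).maxL (lip_const 0)
  set g' : EuclideanSpace ℝ (Fin n) → ℝ := fun x => max (g x) (f x - N * c x) with hg'
  have lg' : Lip g' := lg.maxL (lf.sub (lc.const_mul N))
  have c0 : ∀ x, 0 ≤ c x := fun x => le_max_right _ _
  obtain ⟨K, hK⟩ := lf
  obtain ⟨K', hK'⟩ := lg'
  refine ⟨f, g', K ⊔ K' ⊔ 1, lt_of_lt_of_le one_pos le_sup_right,
    hK.weaken (le_sup_left.trans le_sup_left), hK'.weaken (le_sup_right.trans le_sup_left), fn,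
    fun x => (gn x).trans (le_max_left _ _), fun x hx => hf x (ball_subset_closedBall hx),
    fun x hx => ?_, fun x hx => ?_⟩
  · have h1 := hg x (ball_subset_closedBall hx)
    rw [h1, hg']
    simp only
    rw [max_eq_left]
    by_cases hx1 : x ∈ ball (0 : EuclideanSpace ℝ (Fin n)) 1
    · have h2 := (abs_le.1 (hfN x (ball_subset_closedBall hx1))).2
      rw [mem_ball_zero_iff] at hx1
      have h3 : 1 ≤ c x := le_trans (by linarith) (le_max_left _ _)
      nlinarith [gn x]
    · have h2 := hbd x hx1
      rw [h1, hf x (ball_subset_closedBall hx)] at h2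
      nlinarith [mul_nonneg hN.le (c0 x)]
  · by_cases hx2 : x ∈ closedBall (0 : EuclideanSpace ℝ (Fin n)) 2
    · have h2 := hbd x hx
      rw [hg x hx2, hf x hx2] at h2
      exact h2.trans (le_max_left _ _)
    · rw [mem_closedBall_zero_iff, not_le] at hx2
      have : c x = 0 := max_eq_right (by linarith)
      rw [hg']
      simp only
      rw [this, mul_zero, sub_zero]
      exact le_max_right _ _

/-- The minimum of the two functions is again a minimizer. -/
theorem mn_min {f g w : EuclideanSpace ℝ (Fin n) → ℝ} {L : ℝ≥0}
    (hw : IsMinimizer (ball (0 : EuclideanSpace ℝ (Fin n)) 1) w)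
    (mf : Mn L (ball (0 : EuclideanSpace ℝ (Fin n)) 2) f) (lg : LipschitzWith L g) (gn : ∀ x, 0 ≤ g x)
    (he : ∀ x ∈ ball (0 : EuclideanSpace ℝ (Fin n)) 2, w x = g x)
    (hbd : ∀ x ∉ ball (0 : EuclideanSpace ℝ (Fin n)) 1, f x ≤ g x) :
    Mn L (ball (0 : EuclideanSpace ℝ (Fin n)) 2) (fun x => min (f x) (g x)) := by
  have lg' : Lip g := ⟨L, lg⟩
  have lm : LipschitzWith L (fun x => min (f x) (g x)) := by
    have := mf.lip.min lg
    rwa [max_self] at this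
  set B := closedBall (0 : EuclideanSpace ℝ (Fin n)) 1 with hB
  have cB : IsCompact B := isCompact_closedBall _ _
  have hBb : ∀ x ∉ B, f x ≤ g x := fun x hx => hbd x (fun h => hx (ball_subset_closedBall h))
  have hMoff : ∀ x ∉ B, max (f x) (g x) = g x := fun x hx => max_eq_right (hBb x hx)
  have hmoff : ∀ x ∉ B, min (f x) (g x) = f x := fun x hx => min_eq_left (hBb x hx)
  refine ⟨fun x => le_min (mf.nn x) (gn x), lm, fun v hv lv K hK hKΩ hvm => ?_⟩
  have h1 : 0 ≤ ∫ x, (dens (fun x => max (f x) (g x)) x - dens g x) := by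
    have h := min_int measurableSet_ball hw lg' he (v := fun x => max (f x) (g x))
      (fun x => (gn x).trans (le_max_right _ _)) (mf.Lip.maxL lg') (fun x hx => by
        have hx1 : x ∈ ball (0 : EuclideanSpace ℝ (Fin n)) 1 := by
          by_contra hc
          exact hx (max_eq_right (hbd x hc))
        exact ⟨hx1, ball_subset_ball (by norm_num) hx1⟩)
    rw [inter_eq_left.2 (ball_subset_ball (by norm_num))] at h
    have hae : (ball (0 : EuclideanSpace ℝ (Fin n)) 1 : Set _) =ᵐ[volume] B := by
      rw [hB, ← ball_union_sphere]
      exact (union_ae_eq_left_of_ae_eq_empty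
        (ae_eq_empty.2 (Measure.addHaar_sphere_of_ne_zero volume 0 one_ne_zero))).symm
    rw [setIntegral_congr_set hae, setIntegral_eq_integral_of_forall_compl_eq_zero] at h
    · exact h
    · intro x hx
      rw [dens_congr_of_compl cB.isClosed hMoff hx, sub_self]
  have h2 : 0 ≤ ∫ x, (dens f x - dens (fun x => min (f x) (g x)) x) := by
    have : ∫ x, (dens f x - dens (fun x => min (f x) (g x)) x)
        = ∫ x, (dens (fun x => max (f x) (g x)) x - dens g x) := by
      refine integral_congr_ae ?_
      filter_upwards [ae_dens_max_min mf.Lip lg'] with x hx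
      linarith
    rw [this]; exact h1
  have hvf : ∀ x ∉ K ∪ B, v x = f x := by
    intro x hx
    rw [mem_union, not_or] at hx
    rw [hvm x hx.1, hmoff x hx.2]
  have h3 := mf.mini v hv lv (K ∪ B) (hK.union cB)
    (union_subset hKΩ (closedBall_subset_ball (by norm_num))) hvf
  have i3 := integrable_dens_sub mf.Lip lv (hK.union cB) hvf
  have i2 := integrable_dens_sub (u := fun x => min (f x) (g x)) ⟨L, lm⟩ mf.Lip cB (fun x hx => (hmoff x hx).symm)
  have : ∫ x, (dens v x - dens (fun x => min (f x) (g x)) x)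
      = (∫ x, (dens v x - dens f x)) + ∫ x, (dens f x - dens (fun x => min (f x) (g x)) x) := by
    rw [← integral_add i3 i2]
    congr 1; ext x; ring
  rw [this]
  exact add_nonneg h3 h2

/-- touching points of ordered minimizers in the positivity set form an open set -/
theorem touch {V : Type*} [NormedAddCommGroup V] [InnerProductSpace ℝ V] [FiniteDimensional ℝ V]
    [MeasurableSpace V] [BorelSpace V] {Ω : Set V} (hΩ : IsOpen Ω) {L : ℝ≥0} {u w : V → ℝ}
    (hu : Mn L Ω u) (hw : Mn L Ω w) (hle : ∀ x ∈ Ω, u x ≤ w x) {x : V} (hx : x ∈ Ω) (hp : 0 < u x)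
    (he : w x = u x) : ∃ r > 0, ball x r ⊆ Ω ∧ (∀ y ∈ ball x r, 0 < u y) ∧ ∀ y ∈ ball x r, w y = u y := by
  have oP : IsOpen ({x | 0 < u x} ∩ Ω) := (isOpen_lt continuous_const hu.Lip.cont).inter hΩ
  obtain ⟨r, hr, hrb⟩ := Metric.isOpen_iff.1 oP x ⟨hp, hx⟩
  have whw : WH ({x | 0 < u x} ∩ Ω) w := hw.wh.mono (fun y hy => ⟨lt_of_lt_of_le hy.1 (hle y hy.2), hy.2⟩)
  have whd := whw.sub_mul hu.wh hw.Lip hu.Lip 1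
  refine ⟨r, hr, fun y hy => (hrb hy).2, fun y hy => (hrb hy).1, fun y hy => ?_⟩
  have := whd.strong_mp (hw.Lip.sub (hu.Lip.const_mul 1)) hr hrb
    (fun z hz => by linarith [hle z (hrb hz).2]) (by rw [he]; ring) y hy
  linarith

theorem preconn {V : Type*} [NormedAddCommGroup V] [NormedSpace ℝ V] {U : V → ℝ}
    (hom : ∀ t : ℝ, 0 < t → ∀ x, U (t • x) = t * U x) (h : IsPreconnected {x | 0 < U x}) :
    IsPreconnected ({x | 0 < U x} ∩ ball (0 : V) 1) := by
  have hp : ∀ x : V, 0 < 1 + ‖x‖ := fun x => by positivity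
  have e : {x | 0 < U x} ∩ ball (0 : V) 1 = (fun x : V => (1 + ‖x‖)⁻¹ • x) '' {x | 0 < U x} := by
    ext y
    constructor
    · rintro ⟨hy, hy1⟩
      rw [mem_ball_zero_iff] at hy1
      have h1 : 0 < 1 - ‖y‖ := by linarith
      refine ⟨(1 - ‖y‖)⁻¹ • y, ?_, ?_⟩
      · rw [mem_ofPred_eq, hom _ (inv_pos.2 h1)]
        exact mul_pos (inv_pos.2 h1) hy
      · simp only
        rw [norm_smul, norm_inv, Real.norm_of_nonneg h1.le, smul_smul]
        have : (1 + (1 - ‖y‖)⁻¹ * ‖y‖)⁻¹ * (1 - ‖y‖)⁻¹ = 1 := by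
          have h2 : 1 + (1 - ‖y‖)⁻¹ * ‖y‖ = (1 - ‖y‖)⁻¹ := by field_simp; ring
          rw [h2, inv_inv]; exact mul_inv_cancel₀ h1.ne'
        rw [this, one_smul]
    · rintro ⟨x, hx, rfl⟩
      refine ⟨?_, ?_⟩
      · rw [mem_ofPred_eq, hom _ (inv_pos.2 (hp x))]
        exact mul_pos (inv_pos.2 (hp x)) hx
      · rw [mem_ball_zero_iff, norm_smul, norm_inv, Real.norm_of_nonneg (hp x).le, inv_mul_lt_iff₀ (hp x)]
        linarith
  rw [e]
  refine h.image _ (Continuous.continuousOn ?_)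
  exact ((continuous_const.add continuous_norm).inv₀ fun x => (hp x).ne').smul continuous_id

theorem main (U₀ : EuclideanSpace ℝ (Fin n) → ℝ)
    (hU₀min : IsMinimizer (Set.univ : Set (EuclideanSpace ℝ (Fin n))) U₀)
    (hU₀hom : ∀ t : ℝ, 0 < t → ∀ x, U₀ (t • x) = t * U₀ x)
    (hconn : IsConnected {x | 0 < U₀ x})
    (w : EuclideanSpace ℝ (Fin n) → ℝ)
    (hw : IsMinimizer (Metric.ball (0 : EuclideanSpace ℝ (Fin n)) 1) w)
    (hbd : ∀ x ∉ Metric.ball (0 : EuclideanSpace ℝ (Fin n)) 1, U₀ x ≤ w x) :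
    (∀ x ∈ Metric.ball (0 : EuclideanSpace ℝ (Fin n)) 1, U₀ x ≤ w x) ∧
    ((∀ x ∈ Metric.ball (0 : EuclideanSpace ℝ (Fin n)) 1 ∩ closure {x | 0 < U₀ x}, w x = U₀ x) ∨
     (∀ x ∈ Metric.ball (0 : EuclideanSpace ℝ (Fin n)) 1 ∩ closure {x | 0 < U₀ x}, U₀ x < w x)) := by
  obtain ⟨f, g, L, hL, lf, lg, fn, gn, hf, hg, hfg⟩ :=
    exists_pair hU₀min.2.1 hU₀min.1 hw.2.1 hw.1 hbd
  have cU : Continuous U₀ := hU₀min.2.1.continuous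
  have cw : Continuous w := hw.2.1.continuous
  have mf : Mn L (ball (0 : EuclideanSpace ℝ (Fin n)) 2) f :=
    (mn_of_min MeasurableSet.univ hU₀min lf fn hf).mono (fun x hx => ⟨mem_univ _, hx⟩)
  have b12 : ball (0 : EuclideanSpace ℝ (Fin n)) 1 ⊆ ball (0 : EuclideanSpace ℝ (Fin n)) 2 :=
    ball_subset_ball (by norm_num)
  have mg : Mn L (ball (0 : EuclideanSpace ℝ (Fin n)) 1) g :=
    (mn_of_min measurableSet_ball hw lg gn hg).mono (fun x hx => ⟨hx, b12 hx⟩)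
  have mm := mn_min hw mf lg gn hg hfg
  have oP : IsOpen {x | 0 < U₀ x} := isOpen_lt continuous_const cU
  -- part 1
  have hPle : {x | 0 < U₀ x} ⊆ {x | 0 < U₀ x ∧ U₀ x ≤ w x} := by
    refine IsPreconnected.subset_left_of_subset_union (v := {x | w x < U₀ x}) ?_ (isOpen_lt cw cU) ?_ ?_ ?_
      hconn.isPreconnected
    · rw [Metric.isOpen_iff]
      rintro x ⟨hx, hxw⟩
      by_cases hx1 : x ∈ closedBall (0 : EuclideanSpace ℝ (Fin n)) 1
      · have hx2 : x ∈ ball (0 : EuclideanSpace ℝ (Fin n)) 2 := closedBall_subset_ball (by norm_num) hx1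
        have e1 : min (f x) (g x) = f x := min_eq_left (by rw [← hf x hx2, ← hg x hx2]; exact hxw)
        obtain ⟨r, hr, hb, hpos, heq⟩ := touch isOpen_ball mm mf (fun y _ => min_le_left _ _) hx2
          (by rw [e1, ← hf x hx2]; exact hx) e1.symm
        refine ⟨r, hr, fun y hy => ⟨?_, ?_⟩⟩
        · rw [hf y (hb hy)]; exact lt_of_lt_of_le (hpos y hy) (min_le_left _ _)
        · rw [hf y (hb hy), hg y (hb hy), heq y hy]; exact min_le_right _ _
      · have ho : IsOpen ({x | 0 < U₀ x} ∩ (closedBall (0 : EuclideanSpace ℝ (Fin n)) 1)ᶜ) :=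
          oP.inter isClosed_closedBall.isOpen_compl
        obtain ⟨r, hr, hb⟩ := Metric.isOpen_iff.1 ho x ⟨hx, hx1⟩
        exact ⟨r, hr, fun y hy => ⟨(hb hy).1, hbd y fun h => (hb hy).2 (ball_subset_closedBall h)⟩⟩
    · rw [Set.disjoint_left]
      rintro x ⟨-, h1⟩ h2
      exact absurd h2 (not_lt.2 h1)
    · intro x hx
      rcases le_or_gt (U₀ x) (w x) with h | h
      · exact Or.inl ⟨hx, h⟩
      · exact Or.inr h
    · obtain ⟨x, hx⟩ := hconn.nonempty
      have hx0 : x ≠ 0 := by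
        rintro rfl
        have h1 := hU₀hom 2 (by norm_num) 0
        rw [smul_zero] at h1
        have h2 : 0 < U₀ 0 := hx
        linarith
      have hn : 0 < ‖x‖⁻¹ := inv_pos.2 (norm_pos_iff.2 hx0)
      have hx' : 0 < U₀ (‖x‖⁻¹ • x) := by rw [hU₀hom _ hn]; exact mul_pos hn hx
      refine ⟨‖x‖⁻¹ • x, hx', hx', hbd _ ?_⟩
      rw [mem_ball_zero_iff, norm_smul, norm_inv, norm_norm, inv_mul_cancel₀ (norm_pos_iff.2 hx0).ne']
      exact lt_irrefl _
  have hle : ∀ x, U₀ x ≤ w x := by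
    intro x
    by_cases hx : 0 < U₀ x
    · exact (hPle hx).2
    · exact (not_lt.1 hx).trans (hw.1 x)
  have hle1 : ∀ x ∈ ball (0 : EuclideanSpace ℝ (Fin n)) 1, f x ≤ g x := fun x hx => by
    rw [← hf x (b12 hx), ← hg x (b12 hx)]; exact hle x
  refine ⟨fun x _ => hle x, ?_⟩
  by_cases hex : ∃ x ∈ {x | 0 < U₀ x} ∩ ball (0 : EuclideanSpace ℝ (Fin n)) 1, w x = U₀ x
  · left
    obtain ⟨a, ha, hae⟩ := hex
    have hsub : {x | 0 < U₀ x} ∩ ball (0 : EuclideanSpace ℝ (Fin n)) 1 ⊆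
        {x | (0 < U₀ x ∧ x ∈ ball (0 : EuclideanSpace ℝ (Fin n)) 1) ∧ w x = U₀ x} := by
      refine IsPreconnected.subset_left_of_subset_union (v := {x | U₀ x < w x}) ?_ (isOpen_lt cU cw) ?_ ?_
        ⟨a, ha, ha, hae⟩ (preconn hU₀hom hconn.isPreconnected)
      · rw [Metric.isOpen_iff]
        rintro x ⟨⟨hx, hx1⟩, hxw⟩
        obtain ⟨r, hr, hb, hpos, heq⟩ := touch isOpen_ball (mf.mono b12) mg hle1 hx1
          (by rw [← hf x (b12 hx1)]; exact hx) (by rw [← hf x (b12 hx1), ← hg x (b12 hx1)]; exact hxw)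
        refine ⟨r, hr, fun y hy => ⟨⟨?_, hb hy⟩, ?_⟩⟩
        · rw [hf y (b12 (hb hy))]; exact hpos y hy
        · rw [hf y (b12 (hb hy)), hg y (b12 (hb hy))]; exact heq y hy
      · rw [Set.disjoint_left]
        rintro x ⟨-, h1⟩ h2
        exact absurd h1 (ne_of_gt h2)
      · intro x hx
        rcases eq_or_lt_of_le (hle x) with h | h
        · exact Or.inl ⟨hx, h.symm⟩
        · exact Or.inr h
    intro z hz
    have h1 := isOpen_ball.inter_closure hz
    refine closure_minimal (fun x hx => ?_) (isClosed_eq cw cU) h1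
    exact (hsub ⟨hx.2, hx.1⟩).2
  · right
    push Not at hex
    rintro z ⟨hz1, hzc⟩
    by_cases hUz : 0 < U₀ z
    · exact lt_of_le_of_ne (hle z) (Ne.symm (hex z ⟨hUz, hz1⟩))
    by_contra hcon
    have hU0 : U₀ z = 0 := le_antisymm (not_lt.1 hUz) (hU₀min.1 z)
    have hw0 : w z = 0 := le_antisymm (by rw [← hU0]; exact not_lt.1 hcon) (hw.1 z)
    rw [mem_ball_zero_iff] at hz1
    have hR : 0 < 1 - ‖z‖ := by linarith
    have hin : ∀ x ∈ ball (0 : EuclideanSpace ℝ (Fin n)) (1 - ‖z‖),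
        z + (1 : ℝ) • x ∈ ball (0 : EuclideanSpace ℝ (Fin n)) 1 := by
      intro x hx
      rw [mem_ball_zero_iff] at hx ⊢
      rw [one_smul]
      exact lt_of_le_of_lt (norm_add_le _ _) (by linarith)
    have hz2 : z ∈ ball (0 : EuclideanSpace ℝ (Fin n)) 2 := b12 (mem_ball_zero_iff.2 hz1)
    have ef : ∀ x, resc z 1 f x = f (z + (1 : ℝ) • x) := fun x => by unfold resc; rw [inv_one, one_mul]
    have eg : ∀ x, resc z 1 g x = g (z + (1 : ℝ) • x) := fun x => by unfold resc; rw [inv_one, one_mul]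
    refine core hL hR (((mf.mono b12).resc z one_pos).mono (fun x hx => hin x hx))
      ((mg.resc z one_pos).mono (fun x hx => hin x hx)) ?_ ?_ ?_ ?_ ?_
    · rw [ef, smul_zero, add_zero, ← hf z hz2, hU0]
    · rw [eg, smul_zero, add_zero, ← hg z hz2, hw0]
    · rw [Metric.mem_closure_iff]
      intro ε hε
      obtain ⟨y, hy, hyd⟩ := Metric.mem_closure_iff.1 hzc (min ε (1 - ‖z‖)) (lt_min hε hR)
      rw [dist_comm, dist_eq_norm] at hyd
      refine ⟨y - z, ?_, by rw [dist_zero_left]; exact lt_of_lt_of_le hyd (min_le_left _ _)⟩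
      have h1 := hin (y - z) (mem_ball_zero_iff.2 (lt_of_lt_of_le hyd (min_le_right _ _)))
      rw [mem_ofPred_eq, ef, ← hf _ (b12 h1), one_smul, add_sub_cancel]
      exact hy
    · intro x hx
      rw [ef, eg]; exact hle1 _ (hin x hx)
    · intro x hx hxp
      have h1 := hin x hx
      rw [ef, ← hf _ (b12 h1)] at hxp
      rw [ef, eg, ← hf _ (b12 h1), ← hg _ (b12 h1)]
      exact lt_of_le_of_ne (hle _) (Ne.symm (hex _ ⟨hxp, h1⟩))

end Assembly
end AC

end Part11

/-- strict separation. -/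
theorem stmt4 {n : ℕ} (hn : 2 ≤ n) (U₀ : EuclideanSpace ℝ (Fin n) → ℝ)
    (hU₀min : IsMinimizer (Set.univ : Set (EuclideanSpace ℝ (Fin n))) U₀)
    (hU₀ne : U₀ ≠ 0)
    (hU₀hom : ∀ t : ℝ, 0 < t → ∀ x, U₀ (t • x) = t * U₀ x)
    (hconn : IsConnected {x | 0 < U₀ x})
    (w : EuclideanSpace ℝ (Fin n) → ℝ)
    (hw : IsMinimizer (Metric.ball (0 : EuclideanSpace ℝ (Fin n)) 1) w)
    (hbd : ∀ x ∉ Metric.ball (0 : EuclideanSpace ℝ (Fin n)) 1, U₀ x ≤ w x) :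
    (∀ x ∈ Metric.ball (0 : EuclideanSpace ℝ (Fin n)) 1, U₀ x ≤ w x) ∧
    ((∀ x ∈ Metric.ball (0 : EuclideanSpace ℝ (Fin n)) 1 ∩ closure {x | 0 < U₀ x}, w x = U₀ x) ∨
     (∀ x ∈ Metric.ball (0 : EuclideanSpace ℝ (Fin n)) 1 ∩ closure {x | 0 < U₀ x}, U₀ x < w x)) := by
  exact AC.main U₀ hU₀min hU₀hom hconn w hw hbd
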